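/- There is an absolute constant c > 0 such that the following holds for every prime p. Let P be a finite set of points in F_p^2 with |P| ≤ p^{15/13}, let C be a finite set of irreducible cubic curves in F_p^2, let k ≥ 11 be an integer, and let S ⊆ P be a set of seven points. Then |C_{k,S}| ≤ c·( |P|^{11/4}/k^{15/4} + |P|/k ). -/

import Mathlib

open scoped Classical

noncomputable section

def zeroSet {p : ℕ} (f : MvPolynomial (Fin 2) (ZMod p)) : Set (Fin 2 → ZMod p) :=
  {x | MvPolynomial.eval x f = 0}

def IsIrredCubic {p : ℕ} (γ : Set (Fin 2 → ZMod p)) : Prop :=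
  ∃ f : MvPolynomial (Fin 2) (ZMod p), Irreducible f ∧ f.totalDegree = 3 ∧ γ = zeroSet f

/-- `C_k`: the set of `k`-rich curves of `C`. -/
def richCurves {p : ℕ} (P : Finset (Fin 2 → ZMod p)) (C : Finset (Set (Fin 2 → ZMod p)))
    (k : ℕ) : Finset (Set (Fin 2 → ZMod p)) :=
  C.filter fun γ => k ≤ (P.filter fun q => q ∈ γ).card ∧ (P.filter fun q => q ∈ γ).card < 2 * k

/-- `C_{k,S}`: the set of `k`-rich curves of `C` passing through every point of `S`. -/
def richCurvesThrough {p : ℕ} (P : Finset (Fin 2 → ZMod p)) (C : Finset (Set (Fin 2 → ZMod p)))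
    (k : ℕ) (S : Finset (Fin 2 → ZMod p)) : Finset (Set (Fin 2 → ZMod p)) :=
  (richCurves P C k).filter fun γ => ∀ q ∈ S, q ∈ γ

/-!
The cubics through a set `S` of seven points of an irreducible cubic form a space `W` of dimension
three. Evaluation at a point of the plane is a functional on `W`, that is, a point of the projective
plane of the dual of `W`; a cubic through `S` is a line of that plane, and incidences are preserved.
By Bezout, two different cubics, one of them irreducible, share at most two points outside `S`, so
that at most two points outside `S` of an irreducible cubic give the same projective point. Hence a
`k`-rich cubic becomes a line with at least `(k - 6) / 2` points, and it suffices to bound the rich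
lines over `F_p`: if `n` points with `n ^ 13 ≤ p ^ 15` have `m` lines which are `k`-rich, then
`m k ≪ n` or `m ^ 4 k ^ 15 ≪ n ^ 11`. This is the incidence bound of Stevens and de Zeeuw.

For the rich lines, points of very high degree are removed by induction. Then there are two points
joined by lines of the family to many of the points. A projective transformation moves these two
centres to infinity, which places the joined points in a Cartesian product `A × B` with small sides.
By Cauchy-Schwarz, the incidences of the product with lines `v = m u + c` lead to coincidences
`m₁ a₂ + c₁ = m₂ a₁ + c₂`. Attaching to `(m, a, c)` the line `s ↦ (s, a - m s, c + m a - m² s)` of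
three-space, such a coincidence says that two attached lines meet.

The meetings of two families of `n ^ 2` such lines, `n ≤ p`, are at most of order `n ^ 3`, up to
the contribution of lines with many common transversals; this is a form of Rudnev's theorem.
Boundedly many surfaces of degree `≈ n` contain all lines of the first family. A line not contained
in such a surface meets it in few points, so it remains to count the meetings on an irreducible
surface of degree `δ`. All directions `(1, -m, -m²)` lie on one conic. Therefore, at a common point
of two lines of the surface, the second fundamental form is proportional to the quadratic form of
this conic. If this umbilicity fails somewhere on the surface, the meetings lie on a curve, and
Bezout leaves only `O(δ²)` exceptional lines, which are handled by induction. Otherwise, as for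
umbilic surfaces in Euclidean space, the osculating quadric is constant along lines with many
meetings. So, unless meetings are rare, the surface is part of a quadric, where meetings are
counted directly. The characteristic has to be large compared with the degrees, for the sake of
derivatives and Wronskians.
-/

open MvPolynomial

/-! ### Polynomials of bounded degree and Bezout's inequality -/

theorem finrank_restrictTotalDegree (σ R : Type*) [Fintype σ] [CommRing R] [Nontrivial R] (D : ℕ) :
    Module.finrank R (restrictTotalDegree σ R D) =
      (D + Fintype.card σ).choose (Fintype.card σ) := by
  have hsupp : {m : σ →₀ ℕ | (m.sum fun _ e => e) ≤ D} =
      ((Finset.range (D + 1)).biUnion fun d => Finset.finsuppAntidiag Finset.univ d :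
        Finset (σ →₀ ℕ)) := by
    ext m
    simp [Finsupp.sum_fintype]
  have hdisj : ((Finset.range (D + 1) : Finset ℕ) : Set ℕ).PairwiseDisjoint
      fun d => Finset.finsuppAntidiag (Finset.univ : Finset σ) d := by
    intro d _ d' _ hdd'
    refine Finset.disjoint_left.2 fun m hm hm' => hdd' ?_
    rw [Finset.mem_finsuppAntidiag] at hm hm'
    exact hm.1.symm.trans hm'.1
  calc Module.finrank R (restrictTotalDegree σ R D)
      = Nat.card {m : σ →₀ ℕ | (m.sum fun _ e => e) ≤ D} :=
        Module.finrank_eq_nat_card_basis (basisRestrictSupport R _)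
    _ = ∑ d ∈ Finset.range (D + 1), (Fintype.card σ).multichoose d := by
        rw [hsupp, Nat.card_eq_card_toFinset, Finset.toFinset_coe, Finset.card_biUnion hdisj]
        simp [Finset.card_finsuppAntidiag_nat_eq_multichoose]
    _ = (D + Fintype.card σ).choose (Fintype.card σ) := Nat.sum_range_multichoose _ _

theorem two_mul_choose_add_two (n : ℕ) : 2 * (n + 2).choose 2 = (n + 2) * (n + 1) := by
  simpa [Nat.ascFactorial_succ, mul_comm] using (Nat.ascFactorial_eq_factorial_mul_choose n 2).symm

theorem six_mul_choose_add_three (n : ℕ) :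
    6 * (n + 3).choose 3 = (n + 3) * (n + 2) * (n + 1) := by
  simpa [Nat.ascFactorial_succ, Nat.factorial, mul_assoc] using
    (Nat.ascFactorial_eq_factorial_mul_choose n 3).symm

section Bezout

variable {σ K A : Type*} [Field K] {f g : MvPolynomial σ K}

theorem map_mulLeft_inf_map_mulLeft_le (hfg : IsRelPrime f g) (hg : g ≠ 0) (n : ℕ)
    (V : Submodule K (MvPolynomial σ K)) :
    (restrictTotalDegree σ K (n + g.totalDegree)).map (LinearMap.mulLeft K f) ⊓
        V.map (LinearMap.mulLeft K g) ≤
      (restrictTotalDegree σ K n).map (LinearMap.mulLeft K (f * g)) := by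
  rintro _ ⟨⟨a, ha, rfl⟩, b, -, hb⟩
  obtain ⟨c, rfl⟩ : g ∣ a := hfg.symm.dvd_of_dvd_mul_left ⟨b, hb.symm⟩
  refine ⟨c, ?_, by simp⟩
  rw [SetLike.mem_coe, mem_restrictTotalDegree] at ha ⊢
  by_cases hc : c = 0
  · simp [hc]
  · rw [totalDegree_mul_of_isDomain hg hc] at ha
    omega

theorem finrank_map_mulLeft (hf : f ≠ 0) (V : Submodule K (MvPolynomial σ K)) :
    Module.finrank K (V.map (LinearMap.mulLeft K f)) = Module.finrank K V :=
  (V.equivMapOfInjective _ (mul_right_injective₀ hf)).finrank_eq.symm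

theorem map_mulLeft_restrictTotalDegree_le (f : MvPolynomial σ K) (n : ℕ) :
    (restrictTotalDegree σ K n).map (LinearMap.mulLeft K f) ≤
      restrictTotalDegree σ K (f.totalDegree + n) := by
  rintro _ ⟨a, ha, rfl⟩
  rw [SetLike.mem_coe, mem_restrictTotalDegree] at *
  exact (totalDegree_mul _ _).trans (Nat.add_le_add_left ha _)

/-- The dimension count behind Bezout: the multiples of `f` and of `g` overlap only in the multiples
of `f * g`, which bounds the codimension of the ideal `(f, g)` in degrees at most `D`. -/
theorem finrank_add_finrank_add_card_le [Finite σ] (hfg : IsRelPrime f g) (hf : f ≠ 0)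
    (hg : g ≠ 0) {n D : ℕ} (hD : D = n + f.totalDegree + g.totalDegree)
    {ι N : Type*} [Fintype ι] [AddCommGroup N] [Module K N] {Ψ : MvPolynomial σ K →ₗ[K] N}
    (hΨf : ∀ a, Ψ (f * a) = 0) (hΨg : ∀ a, Ψ (g * a) = 0) {b : ι → MvPolynomial σ K}
    (hbD : ∀ i, (b i).totalDegree ≤ D) (hb : LinearIndependent K (Ψ ∘ b)) :
    Module.finrank K (restrictTotalDegree σ K (n + g.totalDegree)) +
        Module.finrank K (restrictTotalDegree σ K (n + f.totalDegree)) + Fintype.card ι ≤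
      Module.finrank K (restrictTotalDegree σ K D) +
        Module.finrank K (restrictTotalDegree σ K n) := by
  set F := (restrictTotalDegree σ K (n + g.totalDegree)).map (LinearMap.mulLeft K f)
  set G := (restrictTotalDegree σ K (n + f.totalDegree)).map (LinearMap.mulLeft K g)
  set B := Submodule.span K (Set.range b)
  have : FiniteDimensional K B := FiniteDimensional.span_of_finite K (Set.finite_range b)
  have hFG : F ⊔ G ≤ LinearMap.ker Ψ := sup_le
    (Submodule.map_le_iff_le_comap.2 fun a _ => hΨf a)
    (Submodule.map_le_iff_le_comap.2 fun a _ => hΨg a)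
  have hdisj : (F ⊔ G) ⊓ B = ⊥ :=
    ((Submodule.range_ker_disjoint hb).symm.mono_left hFG).eq_bot
  have hle : (F ⊔ G) ⊔ B ≤ restrictTotalDegree σ K D := by
    refine sup_le (sup_le ?_ ?_) (Submodule.span_le.2 ?_)
    · exact (map_mulLeft_restrictTotalDegree_le f _).trans_eq (by congr 1; omega)
    · exact (map_mulLeft_restrictTotalDegree_le g _).trans_eq (by congr 1; omega)
    · rintro _ ⟨i, rfl⟩
      exact (mem_restrictTotalDegree _ _ _).2 (hbD i)
  have hF : Module.finrank K F = _ := finrank_map_mulLeft hf _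
  have hG : Module.finrank K G = _ := finrank_map_mulLeft hg _
  have hB : Module.finrank K B = Fintype.card ι :=
    finrank_span_eq_card (LinearIndependent.of_comp Ψ hb)
  have hinf : Module.finrank K ↥(F ⊓ G) ≤ Module.finrank K (restrictTotalDegree σ K n) :=
    (Submodule.finrank_mono (map_mulLeft_inf_map_mulLeft_le hfg hg n _)).trans_eq
      (finrank_map_mulLeft (mul_ne_zero hf hg) _)
  have hsum := Submodule.finrank_sup_add_finrank_inf_eq F G
  have hsumB := Submodule.finrank_sup_add_finrank_inf_eq (F ⊔ G) B
  rw [hdisj, finrank_bot] at hsumB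
  have := Submodule.finrank_mono hle
  omega

theorem exists_separating_family [CommRing A] [IsDomain A] [Algebra K A]
    {ι : Type*} [Fintype ι] (φ : ι → MvPolynomial σ K →ₐ[K] A)
    (hφ : Pairwise fun s t => ∃ L : MvPolynomial σ K,
      L.totalDegree ≤ 1 ∧ φ s L = 0 ∧ φ t L ≠ 0) :
    ∃ B : ι → MvPolynomial σ K, (∀ t, (B t).totalDegree ≤ Fintype.card ι - 1) ∧
      (∀ t, φ t (B t) ≠ 0) ∧ Pairwise fun s t => φ s (B t) = 0 := by
  have hφ' : ∀ s t, ∃ L : MvPolynomial σ K,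
      L.totalDegree ≤ 1 ∧ (s ≠ t → φ s L = 0 ∧ φ t L ≠ 0) := by
    intro s t
    by_cases hst : s = t
    · exact ⟨0, by simp, fun h => (h hst).elim⟩
    · exact (hφ hst).imp fun L hL => ⟨hL.1, fun _ => hL.2⟩
  choose L hLdeg hL using hφ'
  refine ⟨fun t => ∏ s ∈ Finset.univ.erase t, L s t, fun t => ?_, fun t => ?_, fun s t hst => ?_⟩
  · calc (∏ s ∈ Finset.univ.erase t, L s t).totalDegree
        ≤ ∑ s ∈ Finset.univ.erase t, (L s t).totalDegree := totalDegree_finsetProd _ _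
      _ ≤ (Finset.univ.erase t).card • 1 := Finset.sum_le_card_nsmul _ _ 1 fun s _ => hLdeg s t
      _ = Fintype.card ι - 1 := by simp
  · rw [map_prod, Finset.prod_ne_zero_iff]
    exact fun s hs => (hL s t (Finset.ne_of_mem_erase hs)).2
  · dsimp only
    rw [map_prod]
    exact Finset.prod_eq_zero (i := s) (by simp [hst]) (hL s t hst).1

theorem linearIndependent_pi_comp {ι M N : Type*} {κ : ι → Type*} [AddCommGroup M] [Module K M]
    [AddCommGroup N] [Module K N] {φ : ι → M →ₗ[K] N} {b : (Σ t, κ t) → M}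
    (hoff : ∀ s t k, s ≠ t → φ s (b ⟨t, k⟩) = 0)
    (hdiag : ∀ t, LinearIndependent K fun k => φ t (b ⟨t, k⟩)) :
    LinearIndependent K (LinearMap.pi φ ∘ b) := by
  have hsingle : LinearMap.pi φ ∘ b = fun i : Σ t, κ t => Pi.single i.1 (φ i.1 (b i)) := by
    funext ⟨t, k⟩ s
    by_cases hst : s = t
    · subst hst; simp
    · simp [hst, hoff s t k hst]
  rw [hsingle]
  exact Pi.linearIndependent_single (Ms := fun _ => N) (fun t k => φ t (b ⟨t, k⟩)) hdiag

theorem card_common_zeros_le {f g : MvPolynomial (Fin 2) K}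
    (hfg : IsRelPrime f g) (hf : f ≠ 0) (hg : g ≠ 0) {T : Finset (Fin 2 → K)}
    (hTf : ∀ t ∈ T, eval t f = 0) (hTg : ∀ t ∈ T, eval t g = 0) :
    T.card ≤ f.totalDegree * g.totalDegree := by
  obtain ⟨B, hBdeg, hBself, hBother⟩ := exists_separating_family
    (fun t : T => (aeval t.1 : MvPolynomial (Fin 2) K →ₐ[K] K)) fun s t hst => by
      obtain ⟨i, hi⟩ := Function.ne_iff.1 (Subtype.coe_injective.ne hst)
      refine ⟨X i - C (s.1 i), (totalDegree_sub_C_le _ _).trans (totalDegree_X _).le, ?_, ?_⟩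
      · simp
      · simpa [sub_eq_zero] using hi.symm
  set δ := f.totalDegree
  set e := g.totalDegree
  set N := T.card
  have hcount := finrank_add_finrank_add_card_le (n := N) hfg hf hg rfl
    (Ψ := LinearMap.pi fun t : T => (aeval (R := K) t.1).toLinearMap)
    (b := fun i : Σ _ : T, Unit => B i.1)
    (fun a => by funext t; simp [aeval_eq_eval, hTf t t.2])
    (fun a => by funext t; simp [aeval_eq_eval, hTg t t.2])
    (fun i => (hBdeg i.1).trans (by simp; omega))
    (linearIndependent_pi_comp (fun s t _ hst => hBother hst)
      fun t => LinearIndependent.of_subsingleton () (hBself t))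
  simp only [finrank_restrictTotalDegree, Fintype.card_fin, Fintype.card_sigma, Fintype.card_unit,
    Finset.sum_const, Finset.card_univ, Fintype.card_coe, smul_eq_mul, mul_one] at hcount
  have h₁ := two_mul_choose_add_two (N + e)
  have h₂ := two_mul_choose_add_two (N + δ)
  have h₃ := two_mul_choose_add_two (N + δ + e)
  have h₄ := two_mul_choose_add_two N
  nlinarith

end Bezout

/-! ### Derivatives of polynomials in large characteristic -/

section Derivatives

theorem pderiv_comm {σ R : Type*} [CommRing R] (i j : σ) (f : MvPolynomial σ R) :
    pderiv i (pderiv j f) = pderiv j (pderiv i f) := by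
  have hbracket : ⁅pderiv (R := R) i, pderiv j⁆ = 0 := derivation_ext fun k => by
    rw [Derivation.commutator_apply, pderiv_X, pderiv_X, Pi.single_apply, Pi.single_apply]
    split_ifs <;> simp
  have := DFunLike.congr_fun hbracket f
  rwa [Derivation.commutator_apply, Derivation.zero_apply, sub_eq_zero] at this

theorem totalDegree_pderiv_le {σ R : Type*} [CommSemiring R] (i : σ) (f : MvPolynomial σ R) :
    (pderiv i f).totalDegree ≤ f.totalDegree - 1 := by
  refine Finset.sup_le fun m hm => ?_
  rw [mem_support_iff, coeff_pderiv] at hm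
  have hle := le_totalDegree (mem_support_iff.2 (left_ne_zero_of_mul hm))
  rw [Finsupp.sum_add_index' (by simp) (by simp), Finsupp.sum_single_index rfl] at hle
  omega

variable {p : ℕ}

theorem exists_pderiv_ne_zero {σ R : Type*} [CommRing R] [IsDomain R] [CharP R p]
    {f : MvPolynomial σ R} (hf : f.totalDegree ≠ 0) (hfp : f.totalDegree < p) :
    ∃ i, pderiv i f ≠ 0 := by
  have hf0 : f.support.Nonempty := by
    rw [support_nonempty]
    rintro rfl
    simp at hf
  obtain ⟨m, hm, hmdeg⟩ := Finset.exists_mem_eq_sup f.support hf0 fun s => s.sum fun _ e => e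
  change f.totalDegree = _ at hmdeg
  obtain ⟨i, hi⟩ : m.support.Nonempty := by
    rw [Finsupp.support_nonempty_iff]
    rintro rfl
    exact hf (by simp [hmdeg])
  have hi0 : m i ≠ 0 := Finsupp.mem_support_iff.1 hi
  have himp : m i < p :=
    (Finset.single_le_sum (f := fun i => m i) (by simp) hi).trans_lt
      (hmdeg.symm.trans_lt hfp)
  refine ⟨i, fun h => ?_⟩
  have hcoeff := congrArg (coeff (m - Finsupp.single i 1)) h
  rw [coeff_pderiv, tsub_add_cancel_of_le (by simpa using Nat.one_le_iff_ne_zero.2 hi0),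
    coeff_zero, mul_eq_zero] at hcoeff
  obtain ⟨e, he⟩ := Nat.exists_eq_succ_of_ne_zero hi0
  have hcast : ((m i : ℕ) : R) = 0 := by
    simpa [he] using hcoeff.resolve_left (mem_support_iff.1 hm)
  exact Nat.not_dvd_of_pos_of_lt (Nat.pos_of_ne_zero hi0) himp
    ((CharP.cast_eq_zero_iff R p _).1 hcast)

theorem natDegree_eq_zero_of_derivative_eq_zero_of_lt {R : Type*} [CommRing R] [IsDomain R]
    [CharP R p] {A : Polynomial R} (hA : A.natDegree < p) (h : Polynomial.derivative A = 0) :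
    A.natDegree = 0 := by
  by_contra h0
  obtain ⟨n, hn⟩ := Nat.exists_eq_succ_of_ne_zero h0
  have hcoeff := congrArg (Polynomial.coeff · n) h
  rw [Polynomial.coeff_derivative, Polynomial.coeff_zero, ← Nat.succ_eq_add_one, ← hn, mul_eq_zero,
    Polynomial.coeff_natDegree, Polynomial.leadingCoeff_eq_zero] at hcoeff
  rcases hcoeff with rfl | hcast
  · simp at h0
  · have : ((A.natDegree : ℕ) : R) = 0 := by rw [hn]; exact_mod_cast hcast
    exact Nat.not_dvd_of_pos_of_lt (Nat.pos_of_ne_zero h0) hA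
      ((CharP.cast_eq_zero_iff R p _).1 this)

theorem exists_eq_C_mul_of_wronskian_eq_zero {K : Type*} [Field K] [CharP K p]
    {A B : Polynomial K} (hA : A.natDegree < p) (hB : B.natDegree < p) (hB0 : B ≠ 0)
    (h : Polynomial.wronskian A B = 0) : ∃ c : K, A = Polynomial.C c * B := by
  by_cases hA0 : A = 0
  · exact ⟨0, by simp [hA0]⟩
  obtain ⟨a, b, hab, hga, hgb⟩ : ∃ a b, IsCoprime a b ∧ A = gcd A B * a ∧ B = gcd A B * b :=
    ⟨A / gcd A B, B / gcd A B, isCoprime_div_gcd_div_gcd hB0,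
      (EuclideanDomain.mul_div_cancel' (gcd_ne_zero_of_left hA0) (gcd_dvd_left A B)).symm,
      (EuclideanDomain.mul_div_cancel' (gcd_ne_zero_of_left hA0) (gcd_dvd_right A B)).symm⟩
  set G := gcd A B
  have hwronskian : Polynomial.wronskian A B = G ^ 2 * Polynomial.wronskian a b := by
    rw [hga, hgb]
    simp only [Polynomial.wronskian, Polynomial.derivative_mul]
    ring
  have hG : G ≠ 0 := left_ne_zero_of_mul (hgb ▸ hB0)
  rw [h, eq_comm, mul_eq_zero, or_iff_right (pow_ne_zero 2 hG), hab.wronskian_eq_zero_iff]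
    at hwronskian
  have hconst : ∀ {P Q : Polynomial K}, Q ≠ 0 → Q.natDegree < p → Q = G * P →
      Polynomial.derivative P = 0 → ∃ u, P = Polynomial.C u := by
    intro P Q hQ0 hQ hQP hP
    refine ⟨_, Polynomial.eq_C_of_natDegree_eq_zero
      (natDegree_eq_zero_of_derivative_eq_zero_of_lt ?_ hP)⟩
    exact (Polynomial.natDegree_le_of_dvd ⟨G, hQP.trans (mul_comm _ _)⟩ hQ0).trans_lt hQ
  obtain ⟨u, rfl⟩ := hconst hA0 hA hga hwronskian.1
  obtain ⟨v, rfl⟩ := hconst hB0 hB hgb hwronskian.2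
  have hv : v ≠ 0 := by rintro rfl; simp [hB0] at hgb
  refine ⟨u / v, ?_⟩
  rw [hga, hgb, mul_left_comm, ← Polynomial.C_mul, div_mul_cancel₀ _ hv]

end Derivatives

/-! ### Lines whose directions lie on a conic -/

theorem linearIndependent_X_pow_mul {K : Type*} [Field K] {q : Polynomial K} (hq : q ≠ 0) (n : ℕ) :
    LinearIndependent K fun k : Fin n => Polynomial.X ^ (k : ℕ) * q := by
  have hX : LinearIndependent K fun k : Fin n => (Polynomial.X ^ (k : ℕ) : Polynomial K) := by
    simpa only [Function.comp_def, Polynomial.coe_basisMonomials, ← Polynomial.X_pow_eq_monomial]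
      using (Polynomial.basisMonomials K).linearIndependent.comp _ (Fin.val_injective (n := n))
  exact hX.map' (LinearMap.mulRight K q)
    (LinearMap.ker_eq_bot.2 fun _ _ h => mul_right_cancel₀ hq h)

/-- A line of three-space with a direction `(1, -m, -m²)`, null for the quadratic form
`v₀ v₂ + v₁²`. It is encoded by the line `b = m x + c` of the plane together with an abscissa `a`,
in such a way that coincidences `m₁ a₂ + c₁ = m₂ a₁ + c₂` become meetings; see `NullLine.Meets` and
`NullLine.meets_iff`. -/
@[ext]
structure NullLine (K : Type*) where
  m : K
  a : K
  c : K

namespace NullLine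

variable {K : Type*} [Field K]

/-- The point with parameter `s` on a null line. -/
def point (x : NullLine K) (s : K) : Fin 3 → K :=
  ![s, x.a - x.m * s, x.c + x.m * x.a - x.m ^ 2 * s]

/-- The restriction of a polynomial to a null line, as a polynomial in the parameter. -/
def restrict (x : NullLine K) : MvPolynomial (Fin 3) K →ₐ[K] Polynomial K :=
  aeval ![Polynomial.X, Polynomial.C x.a - Polynomial.C x.m * Polynomial.X,
    Polynomial.C (x.c + x.m * x.a) - Polynomial.C (x.m ^ 2) * Polynomial.X]

variable (x : NullLine K)

theorem eval_restrict (f : MvPolynomial (Fin 3) K) (s : K) :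
    (x.restrict f).eval s = eval (x.point s) f := by
  induction f using MvPolynomial.induction_on with
  | C a => simp [restrict, algHom_C]
  | add f g hf hg => simp [hf, hg]
  | mul_X f i hf =>
    rw [map_mul, Polynomial.eval_mul, hf, map_mul, eval_X]
    congr 1
    fin_cases i <;> simp [restrict, point]

theorem natDegree_restrict_le (f : MvPolynomial (Fin 3) K) :
    (x.restrict f).natDegree ≤ f.totalDegree := by
  refine (aeval_natDegree_le (n := 1) f le_rfl _ fun i => ?_).trans_eq (mul_one _)
  fin_cases i
  · simp
  · simp only [Fin.mk_one, Matrix.cons_val_one, Matrix.cons_val_zero]; compute_degree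
  · simp only [Fin.reduceFinMk, Matrix.cons_val]; compute_degree

variable {x} {y : NullLine K}

theorem exists_linear_separator (h : x ≠ y) :
    ∃ L : MvPolynomial (Fin 3) K, L.totalDegree ≤ 1 ∧ x.restrict L = 0 ∧ y.restrict L ≠ 0 := by
  have hdeg (i : Fin 3) (u v : K) :
      (X i - C u + C v * X 0 : MvPolynomial (Fin 3) K).totalDegree ≤ 1 :=
    (totalDegree_add _ _).trans (max_le
      ((totalDegree_sub_C_le _ _).trans (totalDegree_X _).le)
      ((totalDegree_mul _ _).trans (by simp)))
  by_cases hma : x.m = y.m ∧ x.a = y.a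
  · refine ⟨X 2 - C (x.c + x.m * x.a) + C (x.m ^ 2) * X 0, hdeg _ _ _, ?_, fun h0 => h ?_⟩
    · simp [restrict, algHom_C]
    · have h0 := congrArg (Polynomial.eval 0) h0
      have hc : y.c = x.c := by simpa [restrict, algHom_C, hma.1, hma.2, sub_eq_zero] using h0
      exact NullLine.ext hma.1 hma.2 hc.symm
  · refine ⟨X 1 - C x.a + C x.m * X 0, hdeg _ _ _, ?_, fun h0 => hma ?_⟩
    · simp [restrict, algHom_C]
    · have h1 := congrArg (Polynomial.eval 1) h0
      have h0 := congrArg (Polynomial.eval 0) h0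
      have ha : y.a = x.a := by simpa [restrict, algHom_C, sub_eq_zero] using h0
      have hm : y.a - y.m - x.a + x.m = 0 := by simpa [restrict, algHom_C] using h1
      exact ⟨by linear_combination hm - ha, ha.symm⟩

theorem card_common_lines_le {f g : MvPolynomial (Fin 3) K} (hfg : IsRelPrime f g) (hf : f ≠ 0)
    (hg : g ≠ 0) {T : Finset (NullLine K)} (hTf : ∀ t ∈ T, t.restrict f = 0)
    (hTg : ∀ t ∈ T, t.restrict g = 0) : T.card ≤ f.totalDegree * g.totalDegree := by
  obtain ⟨B, hBdeg, hBself, hBother⟩ := exists_separating_family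
    (fun t : T => restrict t.1) fun s t hst =>
      exists_linear_separator (Subtype.coe_injective.ne hst)
  set δ := f.totalDegree
  set e := g.totalDegree
  set N := T.card
  by_contra! hlt
  have hN : 1 ≤ N := by omega
  have hdiag (t : T) : LinearIndependent K fun k : Fin (N * N + δ + e + 1) =>
      (restrict t.1).toLinearMap (X 0 ^ (k : ℕ) * B t) := by
    have hX : restrict t.1 (X 0) = Polynomial.X := by simp [restrict]
    simpa [hX] using linearIndependent_X_pow_mul (hBself t) _
  -- Each line contributes `N * N + δ + e + 1` independent conditions.
  have hcount := finrank_add_finrank_add_card_le (n := N * N + N - 1) hfg hf hg rfl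
    (Ψ := LinearMap.pi fun t : T => (restrict t.1).toLinearMap)
    (b := fun i : Σ _ : T, Fin (N * N + δ + e + 1) => X 0 ^ (i.2 : ℕ) * B i.1)
    (fun a => by funext t; simp [hTf t t.2])
    (fun a => by funext t; simp [hTg t t.2])
    (fun i => (totalDegree_mul _ _).trans <| by
      have := hBdeg i.1
      have := i.2.2
      rw [totalDegree_X_pow]
      rw [Fintype.card_coe] at *
      omega)
    (linearIndependent_pi_comp (fun s t _ hst => by simp [hBother hst]) hdiag)
  simp only [finrank_restrictTotalDegree, Fintype.card_fin, Fintype.card_sigma,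
    Finset.sum_const, Finset.card_univ, Fintype.card_coe, smul_eq_mul] at hcount
  obtain ⟨n, hn⟩ : ∃ n, N * N + N - 1 = n := ⟨_, rfl⟩
  have hn' : n + 1 = N * N + N := by omega
  rw [hn] at hcount
  have h₁ := six_mul_choose_add_three (n + e)
  have h₂ := six_mul_choose_add_three (n + δ)
  have h₃ := six_mul_choose_add_three (n + δ + e)
  have h₄ := six_mul_choose_add_three n
  have h₅ : 2 * (N * (N * N + δ + e + 1)) ≤ δ * e * (2 * n + δ + e + 4) := by
    nlinarith [h₁, h₂, h₃, h₄]
  have h₆ : (δ * e + 1) * (N * N + δ + e + 1) ≤ N * (N * N + δ + e + 1) :=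
    Nat.mul_le_mul_right _ hlt
  have h₇ : δ * e * N ≤ N * N := Nat.mul_le_mul_right _ hlt.le
  nlinarith [h₅, h₆, h₇]

theorem exists_vanishing (T : Finset (NullLine K)) (d : ℕ) (h : T.card * 6 < (d + 1) ^ 2) :
    ∃ f : MvPolynomial (Fin 3) K, f ≠ 0 ∧ f.totalDegree ≤ d ∧ ∀ t ∈ T, t.restrict f = 0 := by
  let coeffs : MvPolynomial (Fin 3) K →ₗ[K] (T × Fin (d + 1) → K) :=
    LinearMap.pi fun i => (Polynomial.lcoeff K (i.2 : ℕ)).comp (restrict i.1.1).toLinearMap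
  have hker : LinearMap.ker (coeffs.comp (restrictTotalDegree (Fin 3) K d).subtype) ≠ ⊥ := by
    apply LinearMap.ker_ne_bot_of_finrank_lt
    rw [finrank_restrictTotalDegree, Module.finrank_fintype_fun_eq_card, Fintype.card_prod,
      Fintype.card_coe, Fintype.card_fin, Fintype.card_fin]
    have := six_mul_choose_add_three d
    nlinarith
  obtain ⟨⟨f, hf⟩, hfker, hf0⟩ := (Submodule.ne_bot_iff _).1 hker
  rw [mem_restrictTotalDegree] at hf
  refine ⟨f, fun h => hf0 (Subtype.ext h), hf, fun t ht => Polynomial.ext fun k => ?_⟩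
  by_cases hk : k < d + 1
  · exact congrFun (LinearMap.mem_ker.1 hfker) (⟨t, ht⟩, ⟨k, hk⟩)
  · have := t.natDegree_restrict_le f
    exact Polynomial.coeff_eq_zero_of_natDegree_lt (by omega)

end NullLine

/-! ### Null lines on a surface and osculating quadrics -/

section NullDeriv

variable {K : Type*} [Field K]

/-- The derivative along the direction `(1, -m, -m²)` of a null line. -/
def nullDeriv (m : K) : Derivation K (MvPolynomial (Fin 3) K) (MvPolynomial (Fin 3) K) :=
  pderiv 0 - m • pderiv 1 - m ^ 2 • pderiv 2

theorem nullDeriv_apply (m : K) (f : MvPolynomial (Fin 3) K) :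
    nullDeriv m f = pderiv 0 f - m • pderiv 1 f - m ^ 2 • pderiv 2 f := rfl

theorem nullDeriv_ofNat (m : K) (n : ℕ) [n.AtLeastTwo] :
    nullDeriv m (ofNat(n) : MvPolynomial (Fin 3) K) = 0 :=
  (nullDeriv m).map_natCast n

theorem nullDeriv_X (m : K) (i : Fin 3) : nullDeriv m (X i) = C (![1, -m, -m ^ 2] i) := by
  fin_cases i <;> simp [nullDeriv_apply, pderiv_X, smul_eq_C_mul, -map_pow]

namespace NullLine

variable {x : NullLine K} {f : MvPolynomial (Fin 3) K}

theorem derivative_restrict (x : NullLine K) (f : MvPolynomial (Fin 3) K) :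
    Polynomial.derivative (x.restrict f) = x.restrict (nullDeriv x.m f) := by
  induction f using MvPolynomial.induction_on with
  | C a => simp [restrict, algHom_C]
  | add f g hf hg => simp [hf, hg]
  | mul_X f i hf =>
    rw [map_mul, Polynomial.derivative_mul, hf, Derivation.leibniz, map_add, smul_eq_mul,
      smul_eq_mul, map_mul, map_mul, mul_comm (x.restrict (X i)), add_comm]
    congr 2
    fin_cases i <;>
      simp [restrict, nullDeriv_apply, pderiv_X, Polynomial.smul_eq_C_mul, -map_pow]

theorem eval_point_of_restrict_eq_zero (h : x.restrict f = 0) (s : K) :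
    eval (x.point s) f = 0 := by
  rw [← eval_restrict, h, Polynomial.eval_zero]

theorem restrict_nullDeriv_of_restrict_eq_zero (h : x.restrict f = 0) :
    x.restrict (nullDeriv x.m f) = 0 := by
  rw [← derivative_restrict, h, Polynomial.derivative_zero]

theorem eval_nullDeriv_of_restrict_eq_zero (h : x.restrict f = 0) (s : K) :
    eval (x.point s) (nullDeriv x.m f) = 0 :=
  eval_point_of_restrict_eq_zero (restrict_nullDeriv_of_restrict_eq_zero h) s

theorem restrict_eq_zero_of_dvd {g : MvPolynomial (Fin 3) K} (hfg : f ∣ g)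
    (h : x.restrict f = 0) : x.restrict g = 0 :=
  zero_dvd_iff.1 (h ▸ map_dvd x.restrict hfg)

end NullLine

end NullDeriv

section Umbilic

variable {K : Type*} [Field K] (f : MvPolynomial (Fin 3) K)

/-- The Hessian of `f` on the tangent vectors `∂₂f • eᵢ - ∂ᵢf • e₂` and `∂₂f • eⱼ - ∂ⱼf • e₂` of the
surface `f = 0`. -/
def tangentHessian (i j : Fin 3) : MvPolynomial (Fin 3) K :=
  pderiv 2 f ^ 2 * pderiv i (pderiv j f) - pderiv i f * pderiv 2 f * pderiv j (pderiv 2 f)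
    - pderiv j f * pderiv 2 f * pderiv i (pderiv 2 f) + pderiv i f * pderiv j f *
      pderiv 2 (pderiv 2 f)

/-- The obstructions to the surface `f = 0` being umbilic, that is, to the Hessian of `f` being
proportional on tangent planes to the quadratic form `v₀ v₂ + v₁²`. -/
def umbilicDefect : Fin 2 → MvPolynomial (Fin 3) K :=
  ![pderiv 2 f * tangentHessian f 0 0 + pderiv 0 f * tangentHessian f 1 1,
    2 * (pderiv 2 f * tangentHessian f 0 1) + pderiv 1 f * tangentHessian f 1 1]

/-- The quadric `σ₀ (q₀ q₂ + q₁²) + σ₁ q₀ + σ₂ q₁ + σ₃ q₂ + σ₄ = 0`, which plays the role of a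
sphere for the quadratic form `v₀ v₂ + v₁²`. -/
def quadric (σ : Fin 5 → K) : MvPolynomial (Fin 3) K :=
  C (σ 0) * (X 0 * X 2 + X 1 ^ 2) + C (σ 1) * X 0 + C (σ 2) * X 1 + C (σ 3) * X 2 + C (σ 4)

/-- The coefficients, in the sense of `quadric`, of the quadric which osculates the surface `f = 0`
at a variable point, where the surface is umbilic. -/
def osculatingQuadric : Fin 5 → MvPolynomial (Fin 3) K :=
  ![tangentHessian f 1 1,
    2 * (pderiv 2 f ^ 2 * pderiv 0 f) - tangentHessian f 1 1 * X 2,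
    2 * (pderiv 2 f ^ 2 * pderiv 1 f) - 2 * (tangentHessian f 1 1 * X 1),
    2 * (pderiv 2 f ^ 2 * pderiv 2 f) - tangentHessian f 1 1 * X 0,
    tangentHessian f 1 1 * (X 0 * X 2 + X 1 ^ 2) - 2 * (pderiv 2 f ^ 2 *
      (pderiv 0 f * X 0 + pderiv 1 f * X 1 + pderiv 2 f * X 2))]

/-- The covector `n` vanishing on `(1, -m, -m²)` and `(1, -μ, -μ²)`, normalised by `n₂ = 1`. -/
def nullConormal (m μ : K) : Fin 3 → K := ![-(m * μ), -(m + μ), 1]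

/-- The Gram matrix of the quadratic form `2 (v₀ v₂ + v₁²)`. -/
def nullForm : Matrix (Fin 3) (Fin 3) K := !![0, 0, 1; 0, 2, 0; 1, 0, 0]

/-- The shape of the 2-jet of `f` at a point `q` of a surface `f = 0` containing two null lines
through `q`: with `n` the conormal of the two lines, the Hessian is `L • nullForm + n ⊗ w + w ⊗ n`,
hence proportional to `nullForm` on the tangent plane. -/
structure NullJet (q : Fin 3 → K) (m μ L : K) (w : Fin 3 → K) : Prop where
  ne : m ≠ μ
  grad (i : Fin 3) : eval q (pderiv i f) = eval q (pderiv 2 f) * nullConormal m μ i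
  hess (i j : Fin 3) : eval q (pderiv i (pderiv j f)) =
    L * nullForm i j + nullConormal m μ i * w j + w i * nullConormal m μ j

variable {f}

theorem eq_mul_nullConormal {m μ : K} (hne : m ≠ μ) {v : Fin 3 → K}
    (hm : v 0 - m * v 1 - m ^ 2 * v 2 = 0) (hμ : v 0 - μ * v 1 - μ ^ 2 * v 2 = 0) (i : Fin 3) :
    v i = v 2 * nullConormal m μ i := by
  have h1 : v 1 = v 2 * -(m + μ) :=
    mul_left_cancel₀ (sub_ne_zero.2 hne) (by linear_combination hμ - hm)
  fin_cases i
  · simp only [nullConormal, Fin.zero_eta, Matrix.cons_val]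
    linear_combination hm + m * h1
  · exact h1
  · simp [nullConormal]

theorem exists_eq_nullForm_add {m μ : K} (hne : m ≠ μ) (h2 : (2 : K) ≠ 0)
    {H : Matrix (Fin 3) (Fin 3) K} (hH : H.IsSymm)
    (hm : H 0 0 - 2 * m * H 0 1 - 2 * m ^ 2 * H 0 2 + m ^ 2 * H 1 1 + 2 * m ^ 3 * H 1 2
      + m ^ 4 * H 2 2 = 0)
    (hμ : H 0 0 - 2 * μ * H 0 1 - 2 * μ ^ 2 * H 0 2 + μ ^ 2 * H 1 1 + 2 * μ ^ 3 * H 1 2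
      + μ ^ 4 * H 2 2 = 0) :
    ∃ (L : K) (w : Fin 3 → K), ∀ i j,
      H i j = L * nullForm i j + nullConormal m μ i * w j + w i * nullConormal m μ j := by
  obtain ⟨w₂, hw₂⟩ : ∃ w₂, 2 * w₂ = H 2 2 := ⟨H 2 2 / 2, mul_div_cancel₀ _ h2⟩
  obtain ⟨w₁, hw₁⟩ : ∃ w₁, w₁ = H 1 2 + (m + μ) * w₂ := ⟨_, rfl⟩
  obtain ⟨L, hL⟩ : ∃ L, 2 * L = H 1 1 + 2 * (m + μ) * w₁ := ⟨_ / 2, mul_div_cancel₀ _ h2⟩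
  obtain ⟨w₀, hw₀⟩ : ∃ w₀, w₀ = H 0 2 - L + m * μ * w₂ := ⟨_, rfl⟩
  have h01 : H 0 1 = -(m * μ) * w₁ - (m + μ) * w₀ := by
    apply mul_left_cancel₀ (mul_ne_zero h2 (sub_ne_zero.2 hne))
    subst hw₀ hw₁
    linear_combination hμ - hm - (m ^ 2 - μ ^ 2) * hL - (m ^ 4 - μ ^ 4) * hw₂
  have h00 : H 0 0 = -2 * (m * μ) * w₀ := by
    subst hw₀ hw₁
    linear_combination hm + 2 * m * h01 + m ^ 2 * hL + m ^ 4 * hw₂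
  refine ⟨L, ![w₀, w₁, w₂], fun i j => ?_⟩
  have h10 := hH.apply 0 1
  have h20 := hH.apply 0 2
  have h21 := hH.apply 1 2
  fin_cases i <;> fin_cases j <;>
    simp only [nullForm, nullConormal, Fin.zero_eta, Fin.mk_one, Fin.reduceFinMk, Matrix.of_apply,
      Matrix.cons_val] <;>
    grind

namespace NullJet

variable {q : Fin 3 → K} {m μ L : K} {w : Fin 3 → K}

theorem symm (h : NullJet f q m μ L w) : NullJet f q μ m L w where
  ne := h.ne.symm
  grad i := by rw [h.grad, nullConormal, nullConormal, mul_comm m, add_comm m]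
  hess i j := by rw [h.hess, nullConormal, nullConormal, mul_comm m, add_comm m]

theorem eval_tangentHessian (h : NullJet f q m μ L w) (i j : Fin 3) :
    eval q (tangentHessian f i j) = eval q (pderiv 2 f) ^ 2 * L *
      (nullForm i j - nullConormal m μ i * nullForm j 2 - nullConormal m μ j * nullForm i 2) := by
  simp only [tangentHessian, map_add, map_sub, map_mul, map_pow, h.hess]
  rw [h.grad i, h.grad j]
  simp only [nullForm, nullConormal, Matrix.of_apply, Matrix.cons_val]
  ring

theorem eval_umbilicDefect (h : NullJet f q m μ L w) (i : Fin 2) :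
    eval q (umbilicDefect f i) = 0 := by
  fin_cases i <;>
  · simp only [umbilicDefect, Fin.zero_eta, Fin.mk_one, Matrix.cons_val, map_add, map_mul,
      map_ofNat, h.eval_tangentHessian, h.grad 0, h.grad 1]
    simp only [nullForm, nullConormal, Matrix.of_apply, Matrix.cons_val]
    ring

/-- The third derivatives along two null directions are determined by the 2-jet if the umbilic
defects vanish to first order along the second direction. -/
theorem eval_nullDeriv_nullDeriv_nullDeriv (h : NullJet f q m μ L w)
    (hν : eval q (pderiv 2 f) ≠ 0)
    (hdefect : ∀ i, eval q (nullDeriv μ (umbilicDefect f i)) = 0) :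
    eval q (pderiv 2 f) * eval q (nullDeriv μ (nullDeriv m (nullDeriv m f))) =
      -2 * (m - μ) ^ 2 * L * (w 0 - m * w 1 - m ^ 2 * w 2) := by
  have h₀ := hdefect 0
  have h₁ := hdefect 1
  have g0 := h.grad 0
  have g1 := h.grad 1
  simp only [umbilicDefect, tangentHessian, Matrix.cons_val, map_sub, map_add,
    Derivation.leibniz, Derivation.leibniz_pow, smul_eq_mul, nullDeriv_ofNat] at h₀ h₁
  simp only [nullDeriv_apply, map_sub, map_add, map_mul, map_pow, smul_eval, Derivation.map_smul,
    pderiv_comm (1 : Fin 3) 0, pderiv_comm (2 : Fin 3) 0, pderiv_comm (2 : Fin 3) 1, h.hess,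
    nullForm, nullConormal,
    Matrix.of_apply, Matrix.cons_val, map_zero, nsmul_eq_mul, Nat.cast_ofNat, map_ofNat]
    at g0 g1 h₀ h₁ ⊢
  simp only [g0, g1] at h₀ h₁
  apply mul_left_cancel₀ (pow_ne_zero 2 hν)
  linear_combination h₀ - m * h₁

theorem eval_nullDeriv_tangentHessian (h : NullJet f q m μ L w)
    (hν : eval q (pderiv 2 f) ≠ 0)
    (hf : eval q (nullDeriv m (nullDeriv m (nullDeriv m f))) = 0)
    (hm : ∀ i, eval q (nullDeriv m (umbilicDefect f i)) = 0)
    (hμ : ∀ i, eval q (nullDeriv μ (umbilicDefect f i)) = 0) :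
    eval q (nullDeriv m (tangentHessian f 1 1)) =
      eval q (pderiv 2 f) * (4 * L ^ 2 + 6 * L * (w 0 - m * w 1 - m ^ 2 * w 2)) := by
  have hμmm := h.eval_nullDeriv_nullDeriv_nullDeriv hν hμ
  have hmμμ := h.symm.eval_nullDeriv_nullDeriv_nullDeriv hν hm
  have g1 := h.grad 1
  simp only [tangentHessian, map_sub, map_add, Derivation.leibniz, Derivation.leibniz_pow,
    smul_eq_mul]
  simp only [nullDeriv_apply, map_sub, map_add, map_mul, map_pow, smul_eval, Derivation.map_smul,
    pderiv_comm (1 : Fin 3) 0, pderiv_comm (2 : Fin 3) 0, pderiv_comm (2 : Fin 3) 1, h.hess,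
    nullForm, nullConormal, Matrix.of_apply, Matrix.cons_val, nsmul_eq_mul, Nat.cast_ofNat,
    map_ofNat] at g1 hf hmμμ hμmm ⊢
  simp only [g1]
  apply mul_left_cancel₀ (pow_ne_zero 2 (sub_ne_zero.2 h.ne))
  linear_combination
    eval q (pderiv 2 f) * (-2 * hμmm + hmμμ) + eval q (pderiv 2 f) ^ 2 * hf

theorem eval_nullDeriv_pderiv (h : NullJet f q m μ L w) (i : Fin 3) :
    eval q (nullDeriv m (pderiv i f)) = L * ![-m ^ 2, -2 * m, 1] i +
      (w 0 - m * w 1 - m ^ 2 * w 2) * nullConormal m μ i := by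
  simp only [nullDeriv_apply, map_sub, smul_eval, h.hess]
  fin_cases i <;>
  · simp only [nullForm, nullConormal, Fin.zero_eta, Fin.mk_one, Fin.reduceFinMk, Matrix.of_apply,
      Matrix.cons_val]
    ring

theorem eval_nullDeriv_osculatingQuadric (h : NullJet f q m μ L w)
    (hν : eval q (pderiv 2 f) ≠ 0)
    (hf : eval q (nullDeriv m (nullDeriv m (nullDeriv m f))) = 0)
    (hm : ∀ i, eval q (nullDeriv m (umbilicDefect f i)) = 0)
    (hμ : ∀ i, eval q (nullDeriv μ (umbilicDefect f i)) = 0) (j : Fin 5) :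
    eval q (pderiv 2 f) * eval q (nullDeriv m (osculatingQuadric f j)) =
      (2 * L + 3 * (w 0 - m * w 1 - m ^ 2 * w 2)) * eval q (osculatingQuadric f j) := by
  have hh := h.eval_tangentHessian 1 1
  have g0 := h.grad 0
  have g1 := h.grad 1
  fin_cases j <;>
  · simp only [osculatingQuadric, Fin.zero_eta, Fin.mk_one, Fin.reduceFinMk, Matrix.cons_val,
      map_sub, map_add, Derivation.leibniz, Derivation.leibniz_pow, smul_eq_mul, nullDeriv_ofNat,
      map_mul, map_pow, h.eval_nullDeriv_tangentHessian hν hf hm hμ, h.eval_nullDeriv_pderiv,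
      nullDeriv_X, eval_X, eval_C, nsmul_eq_mul, Nat.cast_ofNat, map_ofNat, map_zero, hh, g0, g1,
      nullForm, nullConormal, Matrix.of_apply]
    ring

end NullJet

/-- The null lines `x` and `y` lie on the surface `f = 0` and cross at the point `x.point s`. -/
structure Crossing (f : MvPolynomial (Fin 3) K) (x y : NullLine K) (s : K) : Prop where
  ne : x.m ≠ y.m
  left : x.restrict f = 0
  right : y.restrict f = 0
  point_eq : x.point s = y.point s

namespace Crossing

variable {x y : NullLine K} {s : K}

theorem exists_nullJet (h2 : (2 : K) ≠ 0) (h : Crossing f x y s) :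
    ∃ L w, NullJet f (x.point s) x.m y.m L w := by
  have hx := NullLine.eval_nullDeriv_of_restrict_eq_zero h.left s
  have hy := NullLine.eval_nullDeriv_of_restrict_eq_zero h.right s
  have hxx := NullLine.eval_nullDeriv_of_restrict_eq_zero
    (NullLine.restrict_nullDeriv_of_restrict_eq_zero h.left) s
  have hyy := NullLine.eval_nullDeriv_of_restrict_eq_zero
    (NullLine.restrict_nullDeriv_of_restrict_eq_zero h.right) s
  simp only [← h.point_eq, nullDeriv_apply, map_sub, smul_eval,
    Derivation.map_smul, pderiv_comm (1 : Fin 3) 0, pderiv_comm (2 : Fin 3) 0,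
    pderiv_comm (2 : Fin 3) 1] at hx hy hxx hyy
  obtain ⟨L, w, hess⟩ := exists_eq_nullForm_add h.ne h2
    (H := Matrix.of fun i j => eval (x.point s) (pderiv i (pderiv j f)))
    (Matrix.IsSymm.ext fun i j => by simp only [Matrix.of_apply, pderiv_comm i j])
    (by simp only [Matrix.of_apply]; linear_combination hxx)
    (by simp only [Matrix.of_apply]; linear_combination hyy)
  exact ⟨L, w, h.ne, eq_mul_nullConormal (v := fun i => eval (x.point s) (pderiv i f)) h.ne hx hy,
    hess⟩

theorem eval_umbilicDefect (h2 : (2 : K) ≠ 0) (h : Crossing f x y s) (i : Fin 2) :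
    eval (x.point s) (umbilicDefect f i) = 0 := by
  obtain ⟨L, w, hjet⟩ := h.exists_nullJet h2
  exact hjet.eval_umbilicDefect i

theorem eval_pderiv_two_ne_zero (h2 : (2 : K) ≠ 0) (h : Crossing f x y s) {j : Fin 3}
    (hj : eval (x.point s) (pderiv j f) ≠ 0) : eval (x.point s) (pderiv 2 f) ≠ 0 := by
  obtain ⟨L, w, hjet⟩ := h.exists_nullJet h2
  exact left_ne_zero_of_mul (hjet.grad j ▸ hj)

/-- Along a line of an umbilic surface, the osculating quadric is stationary at each point where
another line crosses. This is the computation behind the theorem that umbilic surfaces are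
spheres. -/
theorem eval_osculatingQuadric_mul_comm (h2 : (2 : K) ≠ 0) (h : Crossing f x y s)
    (hν : eval (x.point s) (pderiv 2 f) ≠ 0)
    (hx : ∀ i, x.restrict (umbilicDefect f i) = 0) (hy : ∀ i, y.restrict (umbilicDefect f i) = 0)
    (i j : Fin 5) :
    eval (x.point s) (osculatingQuadric f i) *
        eval (x.point s) (nullDeriv x.m (osculatingQuadric f j)) =
      eval (x.point s) (osculatingQuadric f j) *
        eval (x.point s) (nullDeriv x.m (osculatingQuadric f i)) := by
  obtain ⟨L, w, hjet⟩ := h.exists_nullJet h2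
  have hosc := hjet.eval_nullDeriv_osculatingQuadric hν
    (NullLine.eval_nullDeriv_of_restrict_eq_zero
      (NullLine.restrict_nullDeriv_of_restrict_eq_zero
        (NullLine.restrict_nullDeriv_of_restrict_eq_zero h.left)) s)
    (fun i => NullLine.eval_nullDeriv_of_restrict_eq_zero (hx i) s)
    (fun i => h.point_eq ▸ NullLine.eval_nullDeriv_of_restrict_eq_zero (hy i) s)
  apply mul_left_cancel₀ hν
  linear_combination eval (x.point s) (osculatingQuadric f i) * hosc j -
    eval (x.point s) (osculatingQuadric f j) * hosc i

end Crossing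

theorem exists_eval_osculatingQuadric_ne_zero {q : Fin 3 → K} (h2 : (2 : K) ≠ 0)
    (hν : eval q (pderiv 2 f) ≠ 0) : ∃ i, eval q (osculatingQuadric f i) ≠ 0 := by
  by_contra! h
  have h₀ := h 0
  have h₃ := h 3
  simp only [osculatingQuadric, Matrix.cons_val] at h₀ h₃
  simp [h₀, h2, hν] at h₃

theorem osculatingQuadric_incidence (f : MvPolynomial (Fin 3) K) :
    osculatingQuadric f 0 * (X 0 * X 2 + X 1 ^ 2) + osculatingQuadric f 1 * X 0 +
      osculatingQuadric f 2 * X 1 + osculatingQuadric f 3 * X 2 + osculatingQuadric f 4 = 0 := by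
  simp only [osculatingQuadric, Matrix.cons_val]
  ring

end Umbilic

/-! ### Meetings of two families of null lines -/

section Interedges

variable {α β : Type*} (r : α → β → Prop) {X X' : Finset α} {Y Y' : Finset β} {d : ℕ}

theorem card_interedges_eq_sum_left (X : Finset α) (Y : Finset β) :
    (Rel.interedges r X Y).card = ∑ x ∈ X, (Y.filter (r x)).card := by
  rw [Rel.interedges, Finset.card_filter, Finset.sum_product]
  simp only [Finset.card_filter]

theorem card_interedges_eq_sum_right (X : Finset α) (Y : Finset β) :
    (Rel.interedges r X Y).card = ∑ y ∈ Y, (X.filter (r · y)).card := by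
  rw [Rel.interedges, Finset.card_filter, Finset.sum_product_right]
  simp only [Finset.card_filter]

variable {r}

theorem card_interedges_le_left (h : ∀ x ∈ X, (Y.filter (r x)).card ≤ d) :
    (Rel.interedges r X Y).card ≤ d * X.card := by
  rw [card_interedges_eq_sum_left, mul_comm]
  exact Finset.sum_le_card_nsmul _ _ _ h

theorem card_interedges_le_right (h : ∀ y ∈ Y, (X.filter (r · y)).card ≤ d) :
    (Rel.interedges r X Y).card ≤ d * Y.card := by
  rw [card_interedges_eq_sum_right, mul_comm]
  exact Finset.sum_le_card_nsmul _ _ _ h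

theorem card_interedges_le_of_degree_le (hX : ∀ x ∈ X, x ∉ X' → (Y.filter (r x)).card ≤ d)
    (hY : ∀ y ∈ Y, y ∉ Y' → (X.filter (r · y)).card ≤ d) :
    (Rel.interedges r X Y).card ≤ d * (X.card + Y.card) + (Rel.interedges r X' Y').card := by
  have hcover : Rel.interedges r X Y ⊆ Rel.interedges r (X \ X') Y ∪ Rel.interedges r X (Y \ Y') ∪
      Rel.interedges r X' Y' := fun z => by
    simp only [Finset.mem_union, Rel.mem_interedges_iff, Finset.mem_sdiff]
    tauto
  have hleft : (Rel.interedges r (X \ X') Y).card ≤ d * (X \ X').card :=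
    card_interedges_le_left fun x hx => hX x (Finset.mem_sdiff.1 hx).1 (Finset.mem_sdiff.1 hx).2
  have hright : (Rel.interedges r X (Y \ Y')).card ≤ d * (Y \ Y').card :=
    card_interedges_le_right fun y hy => hY y (Finset.mem_sdiff.1 hy).1 (Finset.mem_sdiff.1 hy).2
  calc (Rel.interedges r X Y).card
      ≤ d * (X \ X').card + d * (Y \ Y').card + (Rel.interedges r X' Y').card :=
        (Finset.card_le_card hcover).trans <| (Finset.card_union_le _ _).trans <|
          Nat.add_le_add_right ((Finset.card_union_le _ _).trans (add_le_add hleft hright)) _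
    _ ≤ d * (X.card + Y.card) + (Rel.interedges r X' Y').card := by
        rw [mul_add]
        gcongr <;> exact Finset.sdiff_subset

end Interedges

namespace NullLine

variable {K : Type*} [Field K] {x y : NullLine K}

/-- The lines `x` and `y` have a common point. The parameter of a point is its first coordinate,
so that it is the same on both lines. -/
def Meets (x y : NullLine K) : Prop := ∃ s, x.point s = y.point s

/-- The lines `x` and `y` have a common point in the set `S`. -/
def MeetsIn (S : Set (Fin 3 → K)) (x y : NullLine K) : Prop :=
  ∃ s, x.point s = y.point s ∧ x.point s ∈ S

/-- The number of pairs of a line of `X` and a line of `Y` which meet. -/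
def meetings (X Y : Finset (NullLine K)) : ℕ := (Rel.interedges Meets X Y).card

theorem meets_comm : x.Meets y ↔ y.Meets x := exists_congr fun _ => eq_comm

theorem meetsIn_comm {S : Set (Fin 3 → K)} : x.MeetsIn S y ↔ y.MeetsIn S x :=
  exists_congr fun _ => ⟨fun h => ⟨h.1.symm, h.1 ▸ h.2⟩, fun h => ⟨h.1.symm, h.1 ▸ h.2⟩⟩

theorem MeetsIn.meets {S : Set (Fin 3 → K)} (h : x.MeetsIn S y) : x.Meets y :=
  h.imp fun _ => And.left

/-- The mutual moment of two null lines, which up to the factor `x.m - y.m` is the pairing of their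
Plücker coordinates. -/
def pairing (x y : NullLine K) : K := x.m * y.a - y.m * x.a + x.c - y.c

theorem Meets.pairing_eq_zero (h : x.Meets y) : pairing x y = 0 := by
  obtain ⟨s, hs⟩ := h
  have h₁ := congrFun hs 1
  have h₂ := congrFun hs 2
  simp only [point, Matrix.cons_val] at h₁ h₂
  rw [pairing]
  linear_combination h₂ - (x.m + y.m) * h₁

theorem meets_iff (h : x.m ≠ y.m) : x.Meets y ↔ pairing x y = 0 := by
  refine ⟨Meets.pairing_eq_zero, fun hω => ?_⟩
  have hs : (x.m - y.m) * ((x.a - y.a) / (x.m - y.m)) = x.a - y.a :=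
    mul_div_cancel₀ _ (sub_ne_zero.2 h)
  refine ⟨(x.a - y.a) / (x.m - y.m), funext fun i => ?_⟩
  rw [pairing] at hω
  fin_cases i <;> simp only [point, Fin.zero_eta, Fin.mk_one, Fin.reduceFinMk, Matrix.cons_val]
  · linear_combination -hs
  · linear_combination hω - (x.m + y.m) * hs

theorem card_filter_meetsIn_le {Y : Finset (NullLine K)} {g : MvPolynomial (Fin 3) K}
    (hY : (Y : Set (NullLine K)).Pairwise fun y y' => ¬ y.Meets y') (hg : x.restrict g ≠ 0) :
    (Y.filter (x.MeetsIn {q | eval q g = 0})).card ≤ g.totalDegree := by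
  choose! s hs hgs using fun y (hy : y ∈ Y.filter (x.MeetsIn {q | eval q g = 0})) =>
    (Finset.mem_filter.1 hy).2
  calc (Y.filter (x.MeetsIn {q | eval q g = 0})).card
      ≤ (x.restrict g).roots.toFinset.card := by
        refine Finset.card_le_card_of_injOn s (fun y hy => ?_) fun y hy y' hy' hyy => ?_
        · rw [Finset.mem_coe, Multiset.mem_toFinset, Polynomial.mem_roots hg, Polynomial.IsRoot,
            eval_restrict]
          exact hgs y hy
        · refine hY.eq (Finset.mem_filter.1 hy).1 (Finset.mem_filter.1 hy').1 (not_not.2 ⟨s y, ?_⟩)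
          rw [← hs y hy, hyy, hs y' hy']
    _ ≤ g.totalDegree := (Multiset.toFinset_card_le _).trans
        ((Polynomial.card_roots' _).trans (natDegree_restrict_le _ _))

/-- Two families of pairwise disjoint null lines, with lines of different families of different
slopes, such that any two lines of `X` have at most `κ` common transversals in `Y`. -/
structure TransverseFamilies (κ : ℕ) (X Y : Finset (NullLine K)) : Prop where
  disjoint_left : (X : Set (NullLine K)).Pairwise fun x x' => ¬ x.Meets x'
  disjoint_right : (Y : Set (NullLine K)).Pairwise fun y y' => ¬ y.Meets y'
  slope_ne : ∀ x ∈ X, ∀ y ∈ Y, x.m ≠ y.m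
  card_transversals_le : ∀ x ∈ X, ∀ x' ∈ X, x ≠ x' →
    (Y.filter fun y => x.Meets y ∧ x'.Meets y).card ≤ κ

theorem TransverseFamilies.mono {κ : ℕ} {X Y X' Y' : Finset (NullLine K)}
    (h : TransverseFamilies κ X Y) (hX : X' ⊆ X) (hY : Y' ⊆ Y) : TransverseFamilies κ X' Y' where
  disjoint_left := h.disjoint_left.mono (Finset.coe_subset.2 hX)
  disjoint_right := h.disjoint_right.mono (Finset.coe_subset.2 hY)
  slope_ne x hx y hy := h.slope_ne x (hX hx) y (hY hy)
  card_transversals_le x hx x' hx' hne :=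
    (Finset.card_le_card (Finset.filter_subset_filter _ hY)).trans
      (h.card_transversals_le x (hX hx) x' (hX hx') hne)

end NullLine

/-! ### Null lines on a quadric -/

namespace NullLine

variable {K : Type*} [Field K] {σ : Fin 5 → K} {x x' y : NullLine K}

theorem eqns_of_restrict_quadric_eq_zero (h : x.restrict (quadric σ) = 0) :
    σ 0 * (x.c - x.m * x.a) + σ 1 - x.m * σ 2 - x.m ^ 2 * σ 3 = 0 ∧
      σ 0 * x.a ^ 2 + σ 2 * x.a + σ 3 * (x.c + x.m * x.a) + σ 4 = 0 := by
  have h₀ := eval_point_of_restrict_eq_zero h 0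
  have h₁ := eval_point_of_restrict_eq_zero h 1
  simp only [quadric, point, map_add, map_mul, map_pow, eval_C, eval_X, Matrix.cons_val] at h₀ h₁
  constructor
  · linear_combination h₁ - h₀
  · linear_combination h₀

theorem meets_of_restrict_quadric_eq_zero (hσ : σ ≠ 0) (h0 : σ 0 = 0)
    (hx : x.restrict (quadric σ) = 0) (hx' : x'.restrict (quadric σ) = 0)
    (hy : y.restrict (quadric σ) = 0) (hxy : x.m ≠ y.m) (hxy' : x'.m ≠ y.m) : x'.Meets y := by
  obtain ⟨i₁, j₁⟩ := eqns_of_restrict_quadric_eq_zero hx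
  obtain ⟨i₂, j₂⟩ := eqns_of_restrict_quadric_eq_zero hx'
  obtain ⟨i₃, j₃⟩ := eqns_of_restrict_quadric_eq_zero hy
  rw [h0] at i₁ i₂ i₃ j₁ j₂ j₃
  have e₂ : σ 2 = -(x.m + y.m) * σ 3 :=
    mul_left_cancel₀ (sub_ne_zero.2 hxy) (by linear_combination i₃ - i₁)
  have e₁ : σ 1 = -(x.m * y.m) * σ 3 := by linear_combination i₁ + x.m * e₂
  have e₃ : σ 3 ≠ 0 := by
    intro e₃
    rw [e₃, mul_zero] at e₁ e₂
    have e₄ : σ 4 = 0 := by linear_combination j₁ - x.a * e₂ - (x.c + x.m * x.a) * e₃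
    apply hσ
    funext i
    fin_cases i <;> simp [h0, e₁, e₂, e₃, e₄]
  have hm : x'.m = x.m := by
    apply sub_eq_zero.1
    apply mul_left_cancel₀ (mul_ne_zero e₃ (sub_ne_zero.2 hxy'))
    linear_combination -i₂ + e₁ - x'.m * e₂
  rw [meets_iff hxy', pairing]
  apply mul_left_cancel₀ e₃
  linear_combination j₂ - j₃ - (x'.a - y.a) * e₂ - σ 3 * (x'.a - y.a) * hm

/-- A linear form in the line `x` which takes opposite values on the two rulings of the quadric. -/
def quadricSlope (σ : Fin 5 → K) (x : NullLine K) : K := 2 * (σ 0 * x.a + σ 3 * x.m) + σ 2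

theorem quadricSlope_sq (hx : x.restrict (quadric σ) = 0) :
    quadricSlope σ x ^ 2 = σ 2 ^ 2 - 4 * σ 0 * σ 4 + 4 * σ 1 * σ 3 := by
  obtain ⟨i, j⟩ := eqns_of_restrict_quadric_eq_zero hx
  simp only [quadricSlope]
  linear_combination 4 * σ 0 * j - 4 * σ 3 * i

theorem meets_iff_quadricSlope_add_eq_zero (h2 : (2 : K) ≠ 0) (h0 : σ 0 ≠ 0)
    (hx : x.restrict (quadric σ) = 0) (hy : y.restrict (quadric σ) = 0) (hxy : x.m ≠ y.m) :
    x.Meets y ↔ quadricSlope σ x + quadricSlope σ y = 0 := by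
  obtain ⟨i₁, -⟩ := eqns_of_restrict_quadric_eq_zero hx
  obtain ⟨i₂, -⟩ := eqns_of_restrict_quadric_eq_zero hy
  have h : 2 * σ 0 * pairing x y =
      (x.m - y.m) * (quadricSlope σ x + quadricSlope σ y) := by
    simp only [pairing, quadricSlope]
    linear_combination 2 * i₁ - 2 * i₂
  rw [meets_iff hxy, ← mul_right_inj' (mul_ne_zero h2 h0), h, mul_zero, mul_eq_zero,
    or_iff_right (sub_ne_zero.2 hxy)]

theorem parallel_of_restrict_quadric_eq_zero (h2 : (2 : K) ≠ 0) (hσ : σ ≠ 0)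
    (hx : x.restrict (quadric σ) = 0) (hx' : x'.restrict (quadric σ) = 0)
    (hy : y.restrict (quadric σ) = 0) (hxy : x.m ≠ y.m) (hxy' : x'.m ≠ y.m)
    (hmeets : x.Meets y) (hskew : ¬ x'.Meets y) (hdisj : ¬ x.Meets x') :
    σ 0 ≠ 0 ∧ x.m = x'.m := by
  have h0 : σ 0 ≠ 0 := fun h0 =>
    hskew (meets_of_restrict_quadric_eq_zero hσ h0 hx hx' hy hxy hxy')
  refine ⟨h0, by_contra fun hne => ?_⟩
  rw [meets_iff_quadricSlope_add_eq_zero h2 h0 hx hy hxy] at hmeets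
  rw [meets_iff_quadricSlope_add_eq_zero h2 h0 hx' hy hxy'] at hskew
  rw [meets_iff_quadricSlope_add_eq_zero h2 h0 hx hx' hne] at hdisj
  rcases sq_eq_sq_iff_eq_or_eq_neg.1
    ((quadricSlope_sq hx).trans (quadricSlope_sq hx').symm) with h | h
  · exact hskew (h ▸ hmeets)
  · exact hdisj (by rw [h, neg_add_cancel])

theorem eq_of_parallel_of_restrict_quadric_eq_zero (h0 : σ 0 ≠ 0)
    (hx : x.restrict (quadric σ) = 0) (hx' : x'.restrict (quadric σ) = 0) (hxy : x.m ≠ y.m)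
    (hxx' : x.m = x'.m) (hmeets : x.Meets y) (hmeets' : x'.Meets y) : x = x' := by
  rw [meets_iff hxy, pairing] at hmeets
  rw [meets_iff (hxx' ▸ hxy), pairing] at hmeets'
  obtain ⟨i₁, -⟩ := eqns_of_restrict_quadric_eq_zero hx
  obtain ⟨i₂, -⟩ := eqns_of_restrict_quadric_eq_zero hx'
  obtain ⟨m, a, c⟩ := x
  obtain ⟨m', a', c'⟩ := x'
  dsimp only at *
  subst hxx'
  obtain rfl : a = a' := by
    apply mul_left_cancel₀ (mul_ne_zero h0 (sub_ne_zero.2 hxy))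
    linear_combination -(i₁ - i₂) + σ 0 * (hmeets - hmeets')
  obtain rfl : c = c' := by linear_combination hmeets - hmeets'
  rfl

theorem meetings_le_of_restrict_quadric_eq_zero {κ : ℕ} {X Y : Finset (NullLine K)}
    (hXY : TransverseFamilies κ X Y) (h2 : (2 : K) ≠ 0) (hσ : σ ≠ 0)
    (hX : ∀ x ∈ X, x.restrict (quadric σ) = 0) (hY : ∀ y ∈ Y, y.restrict (quadric σ) = 0) :
    meetings X Y ≤ κ * X.card + Y.card := by
  by_cases h : ∀ x ∈ X, (Y.filter x.Meets).card ≤ κ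
  · exact (card_interedges_le_left h).trans (Nat.le_add_right _ _)
  push Not at h
  obtain ⟨x₀, hx₀, hκ⟩ := h
  have hpar : ∀ x ∈ X, x ≠ x₀ → σ 0 ≠ 0 ∧ x₀.m = x.m := by
    intro x hx hne
    obtain ⟨y, hy, hyn⟩ := Finset.exists_mem_notMem_of_card_lt_card
      ((hXY.card_transversals_le x₀ hx₀ x hx hne.symm).trans_lt hκ)
    rw [Finset.mem_filter] at hy hyn
    exact parallel_of_restrict_quadric_eq_zero h2 hσ (hX x₀ hx₀) (hX x hx) (hY y hy.1)
      (hXY.slope_ne x₀ hx₀ y hy.1) (hXY.slope_ne x hx y hy.1) hy.2 (fun h => hyn ⟨hy.1, hy.2, h⟩)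
      (hXY.disjoint_left hx₀ hx hne.symm)
  have hm : ∀ x ∈ X, x₀.m = x.m := fun x hx => by
    rcases eq_or_ne x x₀ with rfl | hne
    exacts [rfl, (hpar x hx hne).2]
  have hone : meetings X Y ≤ 1 * Y.card := by
    refine card_interedges_le_right fun y hy => Finset.card_le_one.2 fun x hx x' hx' => ?_
    rw [Finset.mem_filter] at hx hx'
    by_contra hne
    have h0 : σ 0 ≠ 0 := by
      rcases eq_or_ne x x₀ with rfl | hx₀
      exacts [(hpar x' hx'.1 (Ne.symm hne)).1, (hpar x hx.1 hx₀).1]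
    exact hne (eq_of_parallel_of_restrict_quadric_eq_zero h0 (hX x hx.1) (hX x' hx'.1)
      (hXY.slope_ne x hx.1 y hy) ((hm x hx.1).symm.trans (hm x' hx'.1)) hx.2 hx'.2)
  omega

end NullLine

/-! ### Null lines on an irreducible surface -/

section TotalDegree

variable {σ R : Type*} [CommSemiring R] {a b : MvPolynomial σ R} {m n : ℕ}

theorem totalDegree_mul_le_of_le (ha : a.totalDegree ≤ m) (hb : b.totalDegree ≤ n) :
    (a * b).totalDegree ≤ m + n :=
  (totalDegree_mul _ _).trans (add_le_add ha hb)

theorem totalDegree_add_le_of_le (ha : a.totalDegree ≤ m) (hb : b.totalDegree ≤ m) :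
    (a + b).totalDegree ≤ m :=
  (totalDegree_add _ _).trans (max_le ha hb)

theorem totalDegree_sub_le_of_le {R : Type*} [CommRing R] {a b : MvPolynomial σ R}
    (ha : a.totalDegree ≤ m) (hb : b.totalDegree ≤ m) :
    (a - b).totalDegree ≤ m :=
  (totalDegree_sub _ _).trans (max_le ha hb)

theorem totalDegree_ofNat_mul_le_of_le (k : ℕ) [k.AtLeastTwo] (ha : a.totalDegree ≤ m) :
    (ofNat(k) * a).totalDegree ≤ m := by
  rw [← map_ofNat (C : R →+* MvPolynomial σ R) k]
  simpa using totalDegree_mul_le_of_le (totalDegree_C (σ := σ) (OfNat.ofNat k : R)).le ha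

theorem totalDegree_pderiv_le_of_le (i : σ) (ha : a.totalDegree ≤ m) :
    (pderiv i a).totalDegree ≤ m :=
  (totalDegree_pderiv_le i a).trans ((Nat.sub_le _ _).trans ha)

end TotalDegree

section Degree

variable {K : Type*} [Field K] (f : MvPolynomial (Fin 3) K)

theorem totalDegree_nullDeriv_le (m : K) : (nullDeriv m f).totalDegree ≤ f.totalDegree := by
  rw [nullDeriv_apply]
  exact totalDegree_sub_le_of_le (totalDegree_sub_le_of_le (totalDegree_pderiv_le_of_le 0 le_rfl)
    ((totalDegree_smul_le _ _).trans (totalDegree_pderiv_le_of_le 1 le_rfl)))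
    ((totalDegree_smul_le _ _).trans (totalDegree_pderiv_le_of_le 2 le_rfl))

theorem totalDegree_tangentHessian_le (i j : Fin 3) :
    (tangentHessian f i j).totalDegree ≤ 3 * f.totalDegree := by
  have h₁ : ∀ i, (pderiv i f).totalDegree ≤ f.totalDegree := fun i =>
    totalDegree_pderiv_le_of_le i le_rfl
  have h₂ : ∀ i j k l, (pderiv i f * pderiv j f * pderiv k (pderiv l f)).totalDegree ≤
      3 * f.totalDegree := fun i j k l =>
    (totalDegree_mul_le_of_le (totalDegree_mul_le_of_le (h₁ i) (h₁ j))
      (totalDegree_pderiv_le_of_le k (h₁ l))).trans (by omega)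
  rw [tangentHessian, sq]
  exact totalDegree_add_le_of_le (totalDegree_sub_le_of_le (totalDegree_sub_le_of_le (h₂ ..)
    (h₂ ..)) (h₂ ..)) (h₂ ..)

theorem totalDegree_umbilicDefect_le (i : Fin 2) :
    (umbilicDefect f i).totalDegree ≤ 4 * f.totalDegree := by
  have h : ∀ i j k, (pderiv i f * tangentHessian f j k).totalDegree ≤ 4 * f.totalDegree :=
    fun i j k => (totalDegree_mul_le_of_le (totalDegree_pderiv_le_of_le i le_rfl)
      (totalDegree_tangentHessian_le f j k)).trans (by omega)
  fin_cases i
  · exact totalDegree_add_le_of_le (h ..) (h ..)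
  · exact totalDegree_add_le_of_le (totalDegree_ofNat_mul_le_of_le 2 (h ..)) (h ..)

variable {f}

theorem totalDegree_osculatingQuadric_le (hf : f.totalDegree ≠ 0) (i : Fin 5) :
    (osculatingQuadric f i).totalDegree ≤ 5 * f.totalDegree := by
  have hX : ∀ i, (X i : MvPolynomial (Fin 3) K).totalDegree ≤ 1 := fun i => (totalDegree_X i).le
  have h₁ : ∀ i, (pderiv i f).totalDegree ≤ f.totalDegree := fun i =>
    totalDegree_pderiv_le_of_le i le_rfl
  have hsq : ∀ {g : MvPolynomial (Fin 3) K} {d : ℕ}, d ≤ 3 * f.totalDegree →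
      g.totalDegree ≤ d → (2 * (pderiv 2 f ^ 2 * g)).totalDegree ≤ 5 * f.totalDegree :=
    fun hd hg => totalDegree_ofNat_mul_le_of_le 2 <| by
      rw [sq]
      exact (totalDegree_mul_le_of_le (totalDegree_mul_le_of_le (h₁ 2) (h₁ 2)) hg).trans (by omega)
  have hH : ∀ {g : MvPolynomial (Fin 3) K}, g.totalDegree ≤ 2 →
      (tangentHessian f 1 1 * g).totalDegree ≤ 5 * f.totalDegree := fun hg =>
    (totalDegree_mul_le_of_le (totalDegree_tangentHessian_le f 1 1) hg).trans (by omega)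
  have hsub : ∀ {g h : MvPolynomial (Fin 3) K}, _ → _ → (g - h).totalDegree ≤ 5 * f.totalDegree :=
    totalDegree_sub_le_of_le
  have hX' := fun i => (hX i).trans one_le_two
  fin_cases i
  · exact (totalDegree_tangentHessian_le f 1 1).trans (by omega)
  · exact hsub (hsq (by omega) (h₁ 0)) (hH (hX' 2))
  · exact hsub (hsq (by omega) (h₁ 1)) (totalDegree_ofNat_mul_le_of_le 2 (hH (hX' 1)))
  · exact hsub (hsq (by omega) (h₁ 2)) (hH (hX' 0))
  · refine hsub (hH ?_) (hsq (d := f.totalDegree + 1) (by omega) ?_)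
    · rw [sq]
      exact totalDegree_add_le_of_le (totalDegree_mul_le_of_le (hX 0) (hX 2))
        (totalDegree_mul_le_of_le (hX 1) (hX 1))
    · have h := fun i => totalDegree_mul_le_of_le (h₁ i) (hX i)
      exact totalDegree_add_le_of_le (totalDegree_add_le_of_le (h 0) (h 1)) (h 2)

theorem totalDegree_quadric_le (σ : Fin 5 → K) : (quadric σ).totalDegree ≤ 2 := by
  have hX : ∀ i, (X i : MvPolynomial (Fin 3) K).totalDegree ≤ 1 := fun i => (totalDegree_X i).le
  have hC : ∀ {a : K} {g : MvPolynomial (Fin 3) K}, g.totalDegree ≤ 2 →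
      (C a * g).totalDegree ≤ 2 := fun hg =>
    (totalDegree_mul_le_of_le (totalDegree_C _).le hg).trans (by omega)
  have h : ∀ i j, (X i * X j : MvPolynomial (Fin 3) K).totalDegree ≤ 2 := fun i j =>
    totalDegree_mul_le_of_le (hX i) (hX j)
  have hX' := fun i => (hX i).trans one_le_two
  rw [quadric, sq]
  exact totalDegree_add_le_of_le (totalDegree_add_le_of_le (totalDegree_add_le_of_le
    (totalDegree_add_le_of_le (hC (totalDegree_add_le_of_le (h ..) (h ..))) (hC (hX' 0)))
    (hC (hX' 1))) (hC (hX' 2))) ((totalDegree_C _).le.trans zero_le_two)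

end Degree

section Component

namespace NullLine

variable {K : Type*} [Field K] {f G : MvPolynomial (Fin 3) K} {x y : NullLine K}
  {X Y : Finset (NullLine K)} {d κ p : ℕ}

/-- The lines of `X` contained in the surface `G = 0`. -/
def linesIn (G : MvPolynomial (Fin 3) K) (X : Finset (NullLine K)) : Finset (NullLine K) :=
  X.filter fun x => x.restrict G = 0

theorem card_linesIn_le (hf : Prime f) (hfG : ¬ f ∣ G) (hX : ∀ x ∈ X, x.restrict f = 0) :
    (linesIn G X).card ≤ f.totalDegree * G.totalDegree := by
  have hG : G ≠ 0 := fun h => hfG (h ▸ dvd_zero f)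
  exact card_common_lines_le (hf.irreducible.isRelPrime_iff_not_dvd.2 hfG) hf.ne_zero hG
    (fun x hx => hX x (Finset.mem_filter.1 hx).1) fun x hx => (Finset.mem_filter.1 hx).2

theorem card_interedges_meetsIn_le (hXY : TransverseFamilies κ X Y) :
    (Rel.interedges (MeetsIn {q | eval q G = 0}) X Y).card ≤
      G.totalDegree * (X.card + Y.card) + meetings (linesIn G X) (linesIn G Y) := by
  refine (card_interedges_le_of_degree_le (X' := linesIn G X) (Y' := linesIn G Y)
    (fun x hx hxG => ?_) fun y hy hyG => ?_).trans (Nat.add_le_add_left (Finset.card_le_card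
      (Finset.monotone_filter_right _ fun _ _ => MeetsIn.meets)) _)
  · exact card_filter_meetsIn_le hXY.disjoint_right fun h => hxG (Finset.mem_filter.2 ⟨hx, h⟩)
  · simp only [meetsIn_comm (y := y)]
    exact card_filter_meetsIn_le hXY.disjoint_left fun h => hyG (Finset.mem_filter.2 ⟨hy, h⟩)

/-- The surface `f = 0` is osculated by the same quadric along the whole line `x`. -/
def OsculatedAlong (f : MvPolynomial (Fin 3) K) (x : NullLine K) (σ : Fin 5 → K) : Prop :=
  ∃ φ ≠ 0, ∀ i, x.restrict (osculatingQuadric f i) = Polynomial.C (σ i) * φ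

theorem OsculatedAlong.restrict_quadric {σ : Fin 5 → K} (h : OsculatedAlong f x σ) :
    x.restrict (quadric σ) = 0 := by
  obtain ⟨φ, hφ0, hφ⟩ := h
  have hid := congrArg x.restrict (osculatingQuadric_incidence f)
  have hC : ∀ a : K, x.restrict (C a) = Polynomial.C a := x.restrict.commutes
  apply (mul_eq_zero.1 _).resolve_left hφ0
  simp only [quadric, map_add, map_mul, map_pow, map_zero, hC, hφ] at hid ⊢
  linear_combination hid

theorem OsculatedAlong.ne_zero {σ : Fin 5 → K} (h : OsculatedAlong f x σ) {q : Fin 3 → K} {s : K}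
    (hq : x.point s = q) (h2 : (2 : K) ≠ 0) (hν : eval q (pderiv 2 f) ≠ 0) : σ ≠ 0 := by
  obtain ⟨φ, -, hφ⟩ := h
  rintro rfl
  obtain ⟨i, hi⟩ := exists_eval_osculatingQuadric_ne_zero h2 hν
  apply hi
  rw [← hq, ← eval_restrict, hφ, Pi.zero_apply, map_zero, zero_mul, Polynomial.eval_zero]

/-- Two lines crossing at a point have the same osculating quadric there. -/
theorem OsculatedAlong.restrict_quadric_of_point_eq {σ τ : Fin 5 → K} (hx : OsculatedAlong f x σ)
    (hy : OsculatedAlong f y τ) {s : K} (hs : x.point s = y.point s) (h2 : (2 : K) ≠ 0)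
    (hν : eval (x.point s) (pderiv 2 f) ≠ 0) : y.restrict (quadric σ) = 0 := by
  obtain ⟨φ, -, hφ⟩ := id hx
  obtain ⟨ψ, -, hψ⟩ := id hy
  have hσ : ∀ i, eval (x.point s) (osculatingQuadric f i) = σ i * φ.eval s := fun i => by
    rw [← eval_restrict, hφ, Polynomial.eval_mul, Polynomial.eval_C]
  have hτ : ∀ i, eval (x.point s) (osculatingQuadric f i) = τ i * ψ.eval s := fun i => by
    rw [hs, ← eval_restrict, hψ, Polynomial.eval_mul, Polynomial.eval_C]
  obtain ⟨i, hi⟩ := exists_eval_osculatingQuadric_ne_zero h2 hν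
  have hφs : φ.eval s ≠ 0 := right_ne_zero_of_mul (hσ i ▸ hi)
  have hστ : ∀ i, σ i = ψ.eval s / φ.eval s * τ i := fun i => by
    rw [div_mul_eq_mul_div, eq_div_iff hφs, ← hσ, hτ, mul_comm]
  have h : quadric σ = C (ψ.eval s / φ.eval s) * quadric τ := by
    simp only [quadric, hστ, map_mul]
    ring
  rw [h, map_mul, hy.restrict_quadric, mul_zero]

/-- The lines of `X` meeting more than `d` lines of `Y` outside the surface `g = 0`. -/
def richLines (g : MvPolynomial (Fin 3) K) (d : ℕ) (X Y : Finset (NullLine K)) :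
    Finset (NullLine K) :=
  X.filter fun x => d < (Y.filter (x.MeetsIn {q | eval q g ≠ 0})).card

section Umbilic

variable {j : Fin 3} (h2 : (2 : K) ≠ 0) (hf : f.totalDegree ≠ 0)
  (hdisj : (Y : Set (NullLine K)).Pairwise fun y y' => ¬ y.Meets y')
  (hslope : ∀ x ∈ X, ∀ y ∈ Y, x.m ≠ y.m) (hdefect : ∀ i, f ∣ umbilicDefect f i)
  (hX : ∀ x ∈ X, x.restrict f = 0)
  (hY : ∀ y ∈ Y, y.restrict f = 0)
include h2 hf hdisj hslope hdefect hX hY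

theorem restrict_wronskian_eq_zero (hx : x ∈ richLines (pderiv j f) (10 * f.totalDegree) X Y)
    (i k : Fin 5) :
    x.restrict (osculatingQuadric f i * nullDeriv x.m (osculatingQuadric f k) -
      nullDeriv x.m (osculatingQuadric f i) * osculatingQuadric f k) = 0 := by
  obtain ⟨hxX, hrich⟩ := Finset.mem_filter.1 hx
  by_contra hW
  have hdeg := fun i => totalDegree_osculatingQuadric_le hf i
  have hdeg' := fun i => (totalDegree_nullDeriv_le _ x.m).trans (hdeg i)
  refine hrich.not_ge (((Finset.card_le_card ?_).trans
    (card_filter_meetsIn_le hdisj hW)).trans ((totalDegree_sub_le_of_le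
      (totalDegree_mul_le_of_le (hdeg i) (hdeg' k))
      (totalDegree_mul_le_of_le (hdeg' i) (hdeg k))).trans (by omega)))
  intro y hy
  rw [Finset.mem_filter] at hy ⊢
  obtain ⟨hyY, s, hs, hj⟩ := hy
  have hcross : Crossing f x y s := ⟨hslope x hxX y hyY, hX x hxX, hY y hyY, hs⟩
  refine ⟨hyY, s, hs, ?_⟩
  rw [Set.mem_ofPred_eq, map_sub, map_mul, map_mul, hcross.eval_osculatingQuadric_mul_comm h2
    (hcross.eval_pderiv_two_ne_zero h2 hj)
    (fun i => restrict_eq_zero_of_dvd (hdefect i) (hX x hxX))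
    (fun i => restrict_eq_zero_of_dvd (hdefect i) (hY y hyY)) i k, mul_comm, sub_self]

theorem exists_osculatedAlong [CharP K p] (hp : 5 * f.totalDegree < p)
    (hx : x ∈ richLines (pderiv j f) (10 * f.totalDegree) X Y) : ∃ σ, OsculatedAlong f x σ := by
  obtain ⟨hxX, hrich⟩ := Finset.mem_filter.1 hx
  obtain ⟨y, hy⟩ := Finset.card_pos.1 (Nat.zero_lt_of_lt hrich)
  obtain ⟨hyY, s, hs, hj⟩ := Finset.mem_filter.1 hy
  have hcross : Crossing f x y s := ⟨hslope x hxX y hyY, hX x hxX, hY y hyY, hs⟩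
  obtain ⟨k, hk⟩ := exists_eval_osculatingQuadric_ne_zero h2 (hcross.eval_pderiv_two_ne_zero h2 hj)
  have hk0 : x.restrict (osculatingQuadric f k) ≠ 0 := fun h =>
    hk (eval_point_of_restrict_eq_zero h s)
  have hdeg : ∀ i, (x.restrict (osculatingQuadric f i)).natDegree < p := fun i =>
    ((natDegree_restrict_le _ _).trans (totalDegree_osculatingQuadric_le hf i)).trans_lt hp
  choose σ hσ using fun i => exists_eq_C_mul_of_wronskian_eq_zero (hdeg i) (hdeg k) hk0 (by
    rw [Polynomial.wronskian, derivative_restrict, derivative_restrict, ← map_mul, ← map_mul,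
      ← map_sub]
    exact restrict_wronskian_eq_zero h2 hf hdisj hslope hdefect hX hY hx i k)
  exact ⟨σ, _, hk0, hσ⟩

end Umbilic

theorem meetings_le_of_card_filter_richLines_le {g : MvPolynomial (Fin 3) K} {e : ℕ}
    (hXY : TransverseFamilies κ X Y) (h : ∀ x ∈ richLines g d X Y,
      ((richLines g d Y X).filter (x.MeetsIn {q | eval q g ≠ 0})).card ≤ e) :
    meetings X Y ≤
      (g.totalDegree + d + e) * (X.card + Y.card) + meetings (linesIn g X) (linesIn g Y) := by
  have hsplit : Rel.interedges Meets X Y ⊆ Rel.interedges (MeetsIn {q | eval q g = 0}) X Y ∪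
      Rel.interedges (MeetsIn {q | eval q g ≠ 0}) X Y := fun z hz => by
    rw [Finset.mem_union, Rel.mem_interedges_iff, Rel.mem_interedges_iff]
    obtain ⟨hx, hy, s, hs⟩ := Rel.mem_interedges_iff.1 hz
    by_cases hg : eval (z.1.point s) g = 0
    exacts [.inl ⟨hx, hy, s, hs, hg⟩, .inr ⟨hx, hy, s, hs, hg⟩]
  have hgood := card_interedges_le_of_degree_le (r := MeetsIn {q | eval q g ≠ 0})
    (X := X) (Y := Y) (X' := richLines g d X Y) (Y' := richLines g d Y X) (d := d)
    (fun x hx hxr => not_lt.1 fun hlt => hxr (Finset.mem_filter.2 ⟨hx, hlt⟩))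
    (fun y hy hyr => by
      simp only [meetsIn_comm (y := y)]
      exact not_lt.1 fun hlt => hyr (Finset.mem_filter.2 ⟨hy, hlt⟩))
  have hrich := card_interedges_le_left h
  have hRX : e * (richLines g d X Y).card ≤ e * (X.card + Y.card) := by
    gcongr
    exact (Finset.card_filter_le _ _).trans (Nat.le_add_right _ _)
  have := (Finset.card_le_card hsplit).trans (Finset.card_union_le _ _)
  have := card_interedges_meetsIn_le (G := g) hXY
  rw [add_mul, add_mul]
  unfold meetings at *
  omega

theorem meetings_le_of_umbilic [CharP K p] (hXY : TransverseFamilies κ X Y) (hf : Prime f)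
    (h2 : (2 : K) ≠ 0) (hf0 : f.totalDegree ≠ 0) (hp : 5 * f.totalDegree < p)
    (hdefect : ∀ i, f ∣ umbilicDefect f i) (hX : ∀ x ∈ X, x.restrict f = 0)
    (hY : ∀ y ∈ Y, y.restrict f = 0) {j : Fin 3}
    (hx : x ∈ richLines (pderiv j f) (10 * f.totalDegree) X Y)
    (hmany : 2 * f.totalDegree < ((richLines (pderiv j f) (10 * f.totalDegree) Y X).filter
      (x.MeetsIn {q | eval q (pderiv j f) ≠ 0})).card) :
    meetings X Y ≤ κ * X.card + Y.card := by
  have hxX := (Finset.mem_filter.1 hx).1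
  obtain ⟨σ, hσ⟩ := exists_osculatedAlong h2 hf0 hXY.disjoint_right hXY.slope_ne hdefect hX hY hp hx
  have hν : ∀ y ∈ Y, ∀ s, x.point s = y.point s → eval (x.point s) (pderiv j f) ≠ 0 →
      eval (x.point s) (pderiv 2 f) ≠ 0 := fun y hy s hs hj =>
    Crossing.eval_pderiv_two_ne_zero h2 ⟨hXY.slope_ne x hxX y hy, hX x hxX, hY y hy, hs⟩ hj
  have hdvd : f ∣ quadric σ := by
    by_contra hndvd
    refine hmany.not_ge ((Finset.card_le_card fun y hy => ?_).trans
      ((card_linesIn_le hf hndvd hY).trans ?_))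
    · obtain ⟨hyB, s, hs, hj⟩ := Finset.mem_filter.1 hy
      have hyY := (Finset.mem_filter.1 hyB).1
      obtain ⟨τ, hτ⟩ := exists_osculatedAlong h2 hf0 hXY.disjoint_left
        (fun y hy x hx => (hXY.slope_ne x hx y hy).symm) hdefect hY hX hp hyB
      exact Finset.mem_filter.2
        ⟨hyY, hσ.restrict_quadric_of_point_eq hτ hs h2 (hν y hyY s hs hj)⟩
    · rw [mul_comm 2]
      gcongr
      exact totalDegree_quadric_le σ
  obtain ⟨y, hy⟩ := Finset.card_pos.1 (Nat.zero_lt_of_lt hmany)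
  obtain ⟨hyB, s, hs, hj⟩ := Finset.mem_filter.1 hy
  exact meetings_le_of_restrict_quadric_eq_zero hXY h2
    (hσ.ne_zero rfl h2 (hν y (Finset.mem_filter.1 hyB).1 s hs hj))
    (fun x hx => restrict_eq_zero_of_dvd hdvd (hX x hx))
    (fun y hy => restrict_eq_zero_of_dvd hdvd (hY y hy))

theorem meetings_le_of_prime [CharP K p] (hf : Prime f) (hf0 : f.totalDegree ≠ 0)
    (hp : 5 * f.totalDegree < p) (hXY : TransverseFamilies κ X Y) (hX : ∀ x ∈ X, x.restrict f = 0)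
    (hY : ∀ y ∈ Y, y.restrict f = 0) :
    (∃ G, ¬ f ∣ G ∧ G.totalDegree ≤ 4 * f.totalDegree ∧ meetings X Y ≤
      13 * f.totalDegree * (X.card + Y.card) + meetings (linesIn G X) (linesIn G Y)) ∨
    meetings X Y ≤ κ * X.card + Y.card := by
  have h2 : (2 : K) ≠ 0 := Ring.two_ne_zero (by rw [ringChar.eq K p]; omega)
  by_cases hdefect : ∀ i, f ∣ umbilicDefect f i
  swap
  · obtain ⟨i, hi⟩ := not_forall.1 hdefect
    have hG := totalDegree_umbilicDefect_le f i
    refine .inl ⟨_, hi, hG, (Finset.card_le_card fun z hz => ?_).trans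
      ((card_interedges_meetsIn_le hXY).trans (by gcongr; omega))⟩
    obtain ⟨hx, hy, s, hs⟩ := Rel.mem_interedges_iff.1 hz
    exact Rel.mem_interedges_iff.2 ⟨hx, hy, s, hs,
      Crossing.eval_umbilicDefect h2 ⟨hXY.slope_ne _ hx _ hy, hX _ hx, hY _ hy, hs⟩ i⟩
  obtain ⟨j, hj⟩ := exists_pderiv_ne_zero hf0 (p := p) (by omega)
  have hdeg := totalDegree_pderiv_le j f
  by_cases hfew : ∀ x ∈ richLines (pderiv j f) (10 * f.totalDegree) X Y,
      ((richLines (pderiv j f) (10 * f.totalDegree) Y X).filter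
        (x.MeetsIn {q | eval q (pderiv j f) ≠ 0})).card ≤ 2 * f.totalDegree
  · refine .inl ⟨pderiv j f, fun hdvd => ?_, by omega,
      (meetings_le_of_card_filter_richLines_le hXY hfew).trans (by gcongr; omega)⟩
    have := totalDegree_le_of_dvd_of_isDomain hdvd hj
    omega
  · push Not at hfew
    obtain ⟨x, hx, hmany⟩ := hfew
    exact .inr (meetings_le_of_umbilic hXY hf h2 hf0 hp hdefect hX hY hx hmany)

/-- Up to `A` of them, the meetings of the lines of `X` and `Y` come from subfamilies of at most `D`
lines, or at most `κ` of them from each other line of `X`. -/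
def HasCore (κ D A : ℕ) (X Y : Finset (NullLine K)) : Prop :=
  ∃ Xb ⊆ X, ∃ Yb ⊆ Y, Xb.card ≤ D ∧ Yb.card ≤ D ∧
    meetings X Y ≤ A + κ * (X \ Xb).card + meetings Xb Yb

theorem hasCore_of_prime [CharP K p] (hf : Prime f) (hf0 : f.totalDegree ≠ 0)
    (hp : 5 * f.totalDegree < p) (hXY : TransverseFamilies κ X Y) (hX : ∀ x ∈ X, x.restrict f = 0)
    (hY : ∀ y ∈ Y, y.restrict f = 0) :
    HasCore κ (4 * f.totalDegree ^ 2) (13 * f.totalDegree * (X.card + Y.card)) X Y := by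
  rcases meetings_le_of_prime hf hf0 hp hXY hX hY with ⟨G, hfG, hG, hle⟩ | hle
  · have hcard : ∀ {Z : Finset (NullLine K)}, (∀ z ∈ Z, z.restrict f = 0) →
        (linesIn G Z).card ≤ 4 * f.totalDegree ^ 2 := fun hZ =>
      (card_linesIn_le hf hfG hZ).trans <| by
        rw [sq, mul_left_comm]
        gcongr
    exact ⟨linesIn G X, Finset.filter_subset _ _, linesIn G Y, Finset.filter_subset _ _, hcard hX,
      hcard hY, hle.trans (by omega)⟩
  · have : Y.card ≤ 13 * f.totalDegree * (X.card + Y.card) :=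
      (Nat.le_add_left _ _).trans (Nat.le_mul_of_pos_left _ (by omega))
    refine ⟨∅, Finset.empty_subset _, ∅, Finset.empty_subset _, by simp, by simp, ?_⟩
    rw [Finset.sdiff_empty]
    omega

end NullLine

end Component

/-! ### Meetings of lines on a surface, and of arbitrary lines -/

section Surface

theorem totalDegree_ne_zero_of_irreducible {σ K : Type*} [Field K] {f : MvPolynomial σ K}
    (hf : Irreducible f) : f.totalDegree ≠ 0 := fun h => by
  rw [totalDegree_eq_zero_iff_eq_C] at h
  refine hf.not_isUnit (h ▸ (isUnit_iff_ne_zero.2 fun h0 => hf.ne_zero ?_).map C)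
  rw [h, h0, map_zero]

namespace NullLine

variable {K : Type*} [Field K] {f : MvPolynomial (Fin 3) K} {X X' Y Y' : Finset (NullLine K)}
  {d κ n p : ℕ}

theorem meetings_comm (X Y : Finset (NullLine K)) : meetings X Y = meetings Y X :=
  have : Std.Symm (Meets (K := K)) := ⟨fun _ _ => meets_comm.1⟩
  Rel.card_interedges_comm X Y

theorem meetings_union_left (h : Disjoint X X') (Y : Finset (NullLine K)) :
    meetings (X ∪ X') Y = meetings X Y + meetings X' Y := by
  simp only [meetings, card_interedges_eq_sum_left, Finset.sum_union h]

theorem meetings_union_right (h : Disjoint Y Y') (X : Finset (NullLine K)) :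
    meetings X (Y ∪ Y') = meetings X Y + meetings X Y' := by
  simp only [meetings_comm X, meetings_union_left h]

theorem meetings_le_of_restrict_ne_zero
    (hdisj : (Y : Set (NullLine K)).Pairwise fun y y' => ¬ y.Meets y')
    (hX : ∀ x ∈ X, x.restrict f ≠ 0) (hY : ∀ y ∈ Y, y.restrict f = 0) :
    meetings X Y ≤ f.totalDegree * X.card := by
  refine card_interedges_le_left fun x hx => (Finset.card_le_card fun y hy => ?_).trans
    (card_filter_meetsIn_le hdisj (hX x hx))
  obtain ⟨hyY, s, hs⟩ := Finset.mem_filter.1 hy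
  exact Finset.mem_filter.2
    ⟨hyY, s, hs, hs ▸ eval_point_of_restrict_eq_zero (hY y hyY) s⟩

theorem HasCore.mono {D D' A A' : ℕ} (h : HasCore κ D A X Y) (hD : D ≤ D') (hA : A ≤ A') :
    HasCore κ D' A' X Y := by
  obtain ⟨Xb, hXb, Yb, hYb, hXD, hYD, hle⟩ := h
  exact ⟨Xb, hXb, Yb, hYb, hXD.trans hD, hYD.trans hD, hle.trans (by gcongr)⟩

theorem HasCore.empty_left (κ : ℕ) (Y : Finset (NullLine K)) : HasCore κ 0 0 ∅ Y :=
  ⟨∅, le_rfl, ∅, Finset.empty_subset Y, le_rfl, le_rfl, by simp [meetings]⟩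

theorem HasCore.union {D D' A A' B B' : ℕ} (h : HasCore κ D A X Y) (h' : HasCore κ D' A' X' Y')
    (hX : Disjoint X X') (hY : Disjoint Y Y') (hB : meetings X Y' ≤ B) (hB' : meetings X' Y ≤ B') :
    HasCore κ (D + D') (A + A' + B + B') (X ∪ X') (Y ∪ Y') := by
  obtain ⟨Xb, hXb, Yb, hYb, hXD, hYD, hle⟩ := h
  obtain ⟨Xb', hXb', Yb', hYb', hXD', hYD', hle'⟩ := h'
  refine ⟨Xb ∪ Xb', Finset.union_subset_union hXb hXb', Yb ∪ Yb',
    Finset.union_subset_union hYb hYb', (Finset.card_union_le _ _).trans (by omega),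
    (Finset.card_union_le _ _).trans (by omega), ?_⟩
  have hsdiff : (X ∪ X') \ (Xb ∪ Xb') = X \ Xb ∪ X' \ Xb' := by
    ext x
    have hx : x ∈ X → x ∉ X' := (Finset.disjoint_left.1 hX ·)
    grind
  have hXb' := hX.mono hXb hXb'
  have hYb' := hY.mono hYb hYb'
  rw [hsdiff, Finset.card_union_of_disjoint (hX.mono Finset.sdiff_subset Finset.sdiff_subset),
    meetings_union_left hX, meetings_union_right hY, meetings_union_right hY,
    meetings_union_left hXb', meetings_union_right hYb', meetings_union_right hYb', mul_add]
  omega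

theorem hasCore_of_restrict_eq_zero [CharP K p] (hf : f ≠ 0) (hp : 5 * f.totalDegree < p)
    (hXY : TransverseFamilies κ X Y) (hX : ∀ x ∈ X, x.restrict f = 0)
    (hY : ∀ y ∈ Y, y.restrict f = 0) :
    HasCore κ (4 * f.totalDegree ^ 2) (14 * f.totalDegree * (X.card + Y.card)) X Y := by
  induction f using WfDvdMonoid.induction_on_irreducible generalizing X Y with
  | zero => exact absurd rfl hf
  | unit u hu =>
    obtain rfl : X = ∅ := Finset.eq_empty_of_forall_notMem fun x hx =>
      (hu.map x.restrict).ne_zero (hX x hx)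
    exact (HasCore.empty_left κ Y).mono (Nat.zero_le _) (Nat.zero_le _)
  | mul g π hg hπ ih =>
    have hdeg := totalDegree_mul_of_isDomain hπ.ne_zero hg
    have hπ0 := totalDegree_ne_zero_of_irreducible hπ
    rw [hdeg] at hp ⊢
    have hin : ∀ {Z : Finset (NullLine K)}, ∀ z ∈ linesIn π Z, z.restrict π = 0 := fun z hz =>
      (Finset.mem_filter.1 hz).2
    have hout : ∀ {Z : Finset (NullLine K)}, ∀ z ∈ Z \ linesIn π Z, z.restrict π ≠ 0 :=
      fun z hz h => (Finset.mem_sdiff.1 hz).2 (Finset.mem_filter.2 ⟨(Finset.mem_sdiff.1 hz).1, h⟩)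
    have hrest : ∀ {Z : Finset (NullLine K)}, (∀ z ∈ Z, z.restrict (π * g) = 0) →
        ∀ z ∈ Z \ linesIn π Z, z.restrict g = 0 := fun hZ z hz =>
      (mul_eq_zero.1 ((map_mul _ _ _).symm.trans (hZ z (Finset.mem_sdiff.1 hz).1))).resolve_left
        (hout z hz)
    have hX₁ : linesIn π X ⊆ X := Finset.filter_subset _ _
    have hY₁ : linesIn π Y ⊆ Y := Finset.filter_subset _ _
    have hX₂ : X \ linesIn π X ⊆ X := Finset.sdiff_subset
    have hY₂ : Y \ linesIn π Y ⊆ Y := Finset.sdiff_subset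
    have hcore := (hasCore_of_prime hπ.prime hπ0 (by omega) (hXY.mono hX₁ hY₁) hin hin).union
      (ih hg (by omega) (hXY.mono hX₂ hY₂) (hrest hX) (hrest hY)) Finset.disjoint_sdiff
      Finset.disjoint_sdiff
      ((meetings_comm _ _).trans_le
        (meetings_le_of_restrict_ne_zero (hXY.mono hX₁ hY₁).disjoint_left hout hin))
      (meetings_le_of_restrict_ne_zero (hXY.mono hX₁ hY₁).disjoint_right hout hin)
    rw [Finset.union_sdiff_of_subset hX₁, Finset.union_sdiff_of_subset hY₁] at hcore
    refine hcore.mono (by nlinarith) ?_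
    rw [← Finset.card_sdiff_add_card_eq_card hX₁, ← Finset.card_sdiff_add_card_eq_card hY₁]
    nlinarith

theorem hasCore_of_card_lt [CharP K p] (hp : 5 * d < p) (hXY : TransverseFamilies κ X Y)
    (hd : X.card * 6 < (d + 1) ^ 2) (hX : X.card ≤ n) (hY : Y.card ≤ n) :
    HasCore κ (4 * d ^ 2) (29 * d * n) X Y := by
  obtain ⟨f, hf0, hfd, hf⟩ := exists_vanishing X d hd
  have hY₁ : linesIn f Y ⊆ Y := Finset.filter_subset _ _
  have hout : ∀ y ∈ Y \ linesIn f Y, y.restrict f ≠ 0 := fun y hy h =>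
    (Finset.mem_sdiff.1 hy).2 (Finset.mem_filter.2 ⟨(Finset.mem_sdiff.1 hy).1, h⟩)
  have hcore := (hasCore_of_restrict_eq_zero hf0 (by omega) (hXY.mono le_rfl hY₁) hf
    fun y hy => (Finset.mem_filter.1 hy).2).union (HasCore.empty_left κ (Y \ linesIn f Y))
    (Finset.disjoint_empty_right X) Finset.disjoint_sdiff ((meetings_comm _ _).trans_le
      (meetings_le_of_restrict_ne_zero hXY.disjoint_left hout hf)) (Nat.zero_le 0)
  rw [Finset.union_empty, Finset.union_sdiff_of_subset hY₁] at hcore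
  refine hcore.mono (by rw [add_zero]; gcongr) ?_
  calc 14 * f.totalDegree * (X.card + (linesIn f Y).card) + 0
        + f.totalDegree * (Y \ linesIn f Y).card + 0
      ≤ 14 * d * (n + n) + 0 + d * n + 0 := by
        gcongr
        exacts [(Finset.card_le_card hY₁).trans hY,
          (Finset.card_le_card Finset.sdiff_subset).trans hY]
    _ = 29 * d * n := by ring

theorem meetings_le_of_forall_card_le {s A j : ℕ}
    (h : ∀ X' ⊆ X, X'.card ≤ s → meetings X' Y ≤ A + κ * X'.card) (hX : X.card ≤ j * s) :
    meetings X Y ≤ j * A + κ * X.card := by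
  induction j generalizing X with
  | zero =>
    rw [zero_mul, Nat.le_zero, Finset.card_eq_zero] at hX
    simp [hX, meetings]
  | succ j ih =>
    obtain ⟨Z, hZX, hZ⟩ := Finset.exists_subset_card_eq (min_le_left X.card s)
    have hcard := Finset.card_sdiff_add_card_eq_card hZX
    have hZA := h Z hZX (by omega)
    have hrest := ih (fun X' hX' => h X' (hX'.trans Finset.sdiff_subset)) (X := X \ Z)
      (by rw [add_one_mul] at hX; omega)
    rw [← Finset.sdiff_union_of_subset hZX, meetings_union_left Finset.sdiff_disjoint,
      Finset.sdiff_union_of_subset hZX, ← hcard, mul_add, add_one_mul]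
    omega

/-- `X` is cut into `12 * 192 ^ 2` pieces, each lying on a surface of degree `n / 192`, whose cores
are handled by recursion. It closes since `12 * 192 ^ 2 * 2 ^ 3 / 192 ^ 3 = 1 / 2` and
`12 * 192 * 29 ≤ 500000`. -/
theorem meetings_le [CharP K p] (hn : n ≤ p) (hXY : TransverseFamilies κ X Y)
    (hX : X.card ≤ n ^ 2) (hY : Y.card ≤ n ^ 2) :
    meetings X Y ≤ 1000000 * n ^ 3 + κ * X.card := by
  induction n using Nat.strong_induction_on generalizing X Y with
  | _ n ih =>
  by_cases hsmall : n < 768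
  · calc meetings X Y ≤ X.card * Y.card := Rel.card_interedges_le_mul _ _ _
      _ ≤ n ^ 2 * n ^ 2 := by gcongr
      _ = n * n ^ 3 := by ring
      _ ≤ 1000000 * n ^ 3 := by gcongr; omega
      _ ≤ 1000000 * n ^ 3 + κ * X.card := Nat.le_add_right _ _
  obtain ⟨d, hd⟩ : ∃ d, d = n / 192 := ⟨_, rfl⟩
  obtain ⟨s, hs⟩ : ∃ s, s = ((d + 1) ^ 2 - 1) / 6 := ⟨_, rfl⟩
  have hd2 : 25 ≤ (d + 1) ^ 2 := Nat.pow_le_pow_left (show 5 ≤ d + 1 by omega) 2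
  have hpiece : ∀ X' ⊆ X, X'.card ≤ s →
      meetings X' Y ≤ (29 * d * n ^ 2 + 1000000 * (2 * d) ^ 3) + κ * X'.card := by
    intro X' hX' hs'
    obtain ⟨Xb, hXb, Yb, hYb, hXD, hYD, hle⟩ := hasCore_of_card_lt (d := d) (p := p) (by omega)
      (hXY.mono hX' le_rfl) (by omega) ((Finset.card_le_card hX').trans hX) hY
    rw [show 4 * d ^ 2 = (2 * d) ^ 2 by ring] at hXD hYD
    have hcore := ih (2 * d) (by omega) (by omega) (hXY.mono (hXb.trans hX') hYb) hXD hYD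
    rw [← Finset.card_sdiff_add_card_eq_card hXb, mul_add]
    omega
  have hpieces : X.card ≤ 12 * 192 ^ 2 * s :=
    calc X.card ≤ n ^ 2 := hX
      _ ≤ (192 * (d + 1)) ^ 2 := by gcongr; omega
      _ = 192 ^ 2 * (d + 1) ^ 2 := by ring
      _ ≤ 192 ^ 2 * (12 * s) := by gcongr; omega
      _ = 12 * 192 ^ 2 * s := by ring
  refine (meetings_le_of_forall_card_le hpiece hpieces).trans (Nat.add_le_add_right ?_ _)
  have hdn : 192 * d ≤ n := by omega
  calc 12 * 192 ^ 2 * (29 * d * n ^ 2 + 1000000 * (2 * d) ^ 3)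
      = 12 * 192 * 29 * (192 * d * n ^ 2) + 500000 * (192 * d) ^ 3 := by ring
    _ ≤ 12 * 192 * 29 * (n * n ^ 2) + 500000 * n ^ 3 := by gcongr
    _ = (12 * 192 * 29 + 500000) * n ^ 3 := by ring
    _ ≤ 1000000 * n ^ 3 := by gcongr; norm_num

end NullLine

end Surface

/-! ### Lines and Cartesian products -/

section Lift

namespace NullLine

variable {F K : Type*} [Field F] [Field K] {T : Finset (NullLine F)} {κ n p : ℕ}

theorem exists_forall_mul_add_ne_zero [Infinite K] (J : Finset (K × K)) :
    ∃ τ : K, ∀ j ∈ J, j ≠ 0 → j.1 * τ + j.2 ≠ 0 := by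
  obtain ⟨τ, hτ⟩ := Infinite.exists_notMem_finset (J.image fun j => -j.2 / j.1)
  refine ⟨τ, fun j hj hj0 h => ?_⟩
  by_cases h1 : j.1 = 0
  · exact hj0 (Prod.ext h1 (by rwa [h1, zero_mul, zero_add] at h))
  · exact hτ (Finset.mem_image.2 ⟨j, hj, (eq_div_of_mul_eq h1 (by linear_combination h)).symm⟩)

theorem transverseFamilies_image {f g : NullLine F → NullLine K}
    (hf : ∀ s ∈ T, ∀ t ∈ T, s ≠ t → pairing (f s) (f t) ≠ 0)
    (hg : ∀ s ∈ T, ∀ t ∈ T, s ≠ t → pairing (g s) (g t) ≠ 0)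
    (hslope : ∀ s ∈ T, ∀ t ∈ T, (f s).m ≠ (g t).m)
    (hfg : ∀ s t, pairing (f s) (g t) = 0 ↔ pairing s t = 0)
    (hκ : ∀ s ∈ T, ∀ t ∈ T, s ≠ t →
      (T.filter fun z => pairing s z = 0 ∧ pairing t z = 0).card ≤ κ) :
    TransverseFamilies κ (T.image f) (T.image g) where
  disjoint_left := by
    rw [Finset.coe_image, Set.InjOn.pairwise_image fun s hs t ht h => ?_]
    · exact fun s hs t ht hst h => hf s hs t ht hst h.pairing_eq_zero
    · by_contra hst
      exact hf s hs t ht hst (by rw [h, pairing]; ring)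
  disjoint_right := by
    rw [Finset.coe_image, Set.InjOn.pairwise_image fun s hs t ht h => ?_]
    · exact fun s hs t ht hst h => hg s hs t ht hst h.pairing_eq_zero
    · by_contra hst
      exact hg s hs t ht hst (by rw [h, pairing]; ring)
  slope_ne := by simpa only [Finset.forall_mem_image] using hslope
  card_transversals_le := by
    simp only [Finset.forall_mem_image]
    intro s hs t ht hne
    refine le_trans ?_ (hκ s hs t ht fun h => hne (congrArg f h))
    rw [Finset.filter_image]
    refine Finset.card_image_le.trans (Finset.card_le_card fun z hz => ?_)
    rw [Finset.mem_filter] at hz ⊢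
    rwa [meets_iff (hslope s hs z hz.1), meets_iff (hslope t ht z hz.1), hfg, hfg] at hz

variable [Algebra F K]

/-- The shift of the line `x` along itself by `b`, over the extension `K`. -/
def shear (b : K) (x : NullLine F) : NullLine K where
  m := algebraMap F K x.m
  a := algebraMap F K x.a + b
  c := algebraMap F K x.c - algebraMap F K x.m * b

/-- The two parts of the pairing of `x` and `y`, which are rescaled independently by `scale`. -/
def pairingParts (x y : NullLine K) : K × K := (x.m * y.a - y.m * x.a, x.c - y.c)

/-- Rescaling of the coordinates `m` and `a`, hence of the first part of the pairing. -/
def scale (τ ρ : K) (x : NullLine K) : NullLine K := ⟨τ * x.m, ρ * x.a, x.c⟩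

theorem shear_injective (b : K) : Function.Injective (shear b : NullLine F → NullLine K) := by
  intro x y h
  obtain ⟨hm, ha, hc⟩ := NullLine.ext_iff.1 h
  have hm := (algebraMap F K).injective hm
  simp only [shear, hm, add_left_inj, sub_left_inj] at ha hc
  exact NullLine.ext hm ((algebraMap F K).injective ha) ((algebraMap F K).injective hc)

theorem pairing_shear (b : K) (x y : NullLine F) :
    pairing (shear b x) (shear b y) = algebraMap F K (pairing x y) := by
  simp only [pairing, shear, map_sub, map_add, map_mul]
  ring

theorem scale_injective {τ ρ : K} (hτ : τ ≠ 0) (hρ : ρ ≠ 0) : Function.Injective (scale τ ρ) :=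
  fun x y h => by
    simpa only [scale, NullLine.mk.injEq, mul_right_inj' hτ, mul_right_inj' hρ,
      ← NullLine.ext_iff] using h

theorem pairing_scale_inv {τ : K} (hτ : τ ≠ 0) (x y : NullLine K) :
    pairing (scale τ 1 x) (scale 1 τ⁻¹ y) = pairing x y := by
  simp only [pairing, scale]
  field_simp

theorem pairing_scale_scale (τ ρ : K) (x y : NullLine K) :
    pairing (scale τ ρ x) (scale τ ρ y) =
      (pairingParts x y).1 * (τ * ρ) + (pairingParts x y).2 := by
  simp only [pairing, pairingParts, scale]
  ring

theorem exists_pairingParts_shear_ne_zero [Infinite K] (hT : ∀ t ∈ T, t.m ≠ 0) :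
    ∃ b : K, ∀ s ∈ T, ∀ t ∈ T, s ≠ t → pairingParts (shear b s) (shear b t) ≠ 0 := by
  obtain ⟨b, hb⟩ := exists_forall_mul_add_ne_zero ((T ×ˢ T).image fun z =>
    (algebraMap F K (z.2.m - z.1.m), algebraMap F K (z.1.c - z.2.c)))
  refine ⟨b, fun s hs t ht hst h => ?_⟩
  simp only [pairingParts, shear, Prod.mk_eq_zero] at h
  obtain ⟨hu, hv⟩ := h
  by_cases h0 : (algebraMap F K (t.m - s.m), algebraMap F K (s.c - t.c)) = 0
  · simp only [Prod.mk_eq_zero, map_eq_zero, sub_eq_zero] at h0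
    have hm : algebraMap F K s.m ≠ 0 := (map_ne_zero _).2 (hT s hs)
    rw [h0.1] at hu
    have ha : algebraMap F K t.a = algebraMap F K s.a :=
      mul_left_cancel₀ hm (by linear_combination hu)
    exact hst (NullLine.ext h0.1.symm ((algebraMap F K).injective ha.symm) h0.2)
  · refine hb _ (Finset.mem_image.2 ⟨(s, t), Finset.mk_mem_product hs ht, rfl⟩) h0 ?_
    simp only [map_sub]
    linear_combination hv

theorem exists_scale [Infinite K] {T : Finset (NullLine K)} (hm : ∀ t ∈ T, t.m ≠ 0)
    (hT : ∀ s ∈ T, ∀ t ∈ T, s ≠ t → pairingParts s t ≠ 0) :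
    ∃ τ : K, τ ≠ 0 ∧ (∀ s ∈ T, ∀ t ∈ T, τ * s.m ≠ t.m) ∧ ∀ s ∈ T, ∀ t ∈ T, s ≠ t →
      pairing (scale τ 1 s) (scale τ 1 t) ≠ 0 ∧ pairing (scale 1 τ⁻¹ s) (scale 1 τ⁻¹ t) ≠ 0 := by
  obtain ⟨τ, hτ⟩ := exists_forall_mul_add_ne_zero (insert (1, 0)
    ((T ×ˢ T).image (fun z => pairingParts z.1 z.2) ∪
      (T ×ˢ T).image (fun z => (pairingParts z.1 z.2).swap) ∪
      (T ×ˢ T).image fun z => (z.1.m, -z.2.m)))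
  simp only [Finset.forall_mem_insert, Finset.forall_mem_union, Finset.forall_mem_image] at hτ
  obtain ⟨hτ0, ⟨hleft, hright⟩, hslope⟩ := hτ
  have hτ0 : τ ≠ 0 := by simpa using hτ0
  refine ⟨τ, hτ0, fun s hs t ht h => ?_, fun s hs t ht hst => ⟨?_, ?_⟩⟩
  · refine hslope (Finset.mk_mem_product hs ht) (fun h0 => hm s hs (congrArg Prod.fst h0)) ?_
    linear_combination h
  · rw [pairing_scale_scale, mul_one]
    exact hleft (Finset.mk_mem_product hs ht) (hT s hs t ht hst)
  · intro h
    rw [pairing_scale_scale, one_mul] at h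
    refine hright (Finset.mk_mem_product hs ht)
      (fun h0 => hT s hs t ht hst (Prod.swap_injective h0)) ?_
    simp only [Prod.fst_swap, Prod.snd_swap]
    field_simp at h
    linear_combination h

/-- Over an infinite extension field the lines of `T` are moved in general position in two ways, so
that vanishing pairings become meetings of two transverse families. -/
theorem card_interedges_pairing_le [CharP F p] (hn : n ≤ p) (hcard : T.card ≤ n ^ 2)
    (hm : ∀ t ∈ T, t.m ≠ 0) (hκ : ∀ s ∈ T, ∀ t ∈ T, s ≠ t →
      (T.filter fun z => pairing s z = 0 ∧ pairing t z = 0).card ≤ κ) :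
    (Rel.interedges (fun s t => pairing s t = 0) T T).card ≤ 1000000 * n ^ 3 + κ * T.card := by
  let K := AlgebraicClosure F
  have : CharP K p := charP_of_injective_algebraMap (algebraMap F K).injective p
  obtain ⟨b, hb⟩ := exists_pairingParts_shear_ne_zero (K := K) hm
  have hshear := shear_injective (F := F) b
  obtain ⟨τ, hτ, hslope, hscale⟩ := exists_scale (T := T.image (shear b))
    (by simpa [shear] using hm)
    (by simpa only [Finset.forall_mem_image, hshear.ne_iff] using hb)
  simp only [Finset.forall_mem_image, hshear.ne_iff] at hslope hscale
  let f : NullLine F → NullLine K := scale τ 1 ∘ shear b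
  let g : NullLine F → NullLine K := scale 1 τ⁻¹ ∘ shear b
  have hf : Function.Injective f := (scale_injective hτ one_ne_zero).comp hshear
  have hg : Function.Injective g := (scale_injective one_ne_zero (inv_ne_zero hτ)).comp hshear
  have hfg : ∀ s t, pairing (f s) (g t) = 0 ↔ pairing s t = 0 := fun s t => by
    simp only [f, g, Function.comp_apply, pairing_scale_inv hτ, pairing_shear, map_eq_zero]
  have hslope : ∀ s ∈ T, ∀ t ∈ T, (f s).m ≠ (g t).m := fun s hs t ht => by
    simpa [f, g, scale] using hslope hs ht
  have hXY := transverseFamilies_image (f := f) (g := g) (fun s hs t ht hst => (hscale hs ht hst).1)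
    (fun s hs t ht hst => (hscale hs ht hst).2) hslope hfg hκ
  have hle := meetings_le hn hXY ((Finset.card_image_of_injective T hf).trans_le hcard)
    ((Finset.card_image_of_injective T hg).trans_le hcard)
  rw [Finset.card_image_of_injective T hf] at hle
  refine (Finset.card_le_card_of_injOn (Prod.map f g) (fun z hz => ?_)
    (hf.prodMap hg).injOn).trans hle
  obtain ⟨hs, ht, hz⟩ := Rel.mem_interedges_iff.1 (Finset.mem_coe.1 hz)
  exact Rel.mem_interedges_iff.2 ⟨Finset.mem_image_of_mem f hs, Finset.mem_image_of_mem g ht,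
    (meets_iff (hslope _ hs _ ht)).2 ((hfg _ _).2 hz)⟩

end NullLine

end Lift

theorem sq_card_filter_le_card_mul_card_interedges {α β : Type*} (T : Finset α) (g : α → β)
    (B : Finset β) :
    (T.filter (g · ∈ B)).card ^ 2 ≤
      B.card * (Rel.interedges (fun s t => g s = g t) T T).card := by
  have hmaps : ∀ t ∈ T.filter (g · ∈ B), g t ∈ B := fun t ht => (Finset.mem_filter.1 ht).2
  calc (T.filter (g · ∈ B)).card ^ 2
      = (∑ b ∈ B, ((T.filter (g · ∈ B)).filter (g · = b)).card) ^ 2 := by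
        rw [← Finset.card_eq_sum_card_fiberwise hmaps]
    _ ≤ B.card * ∑ b ∈ B, ((T.filter (g · ∈ B)).filter (g · = b)).card ^ 2 :=
        sq_sum_le_card_mul_sum_sq
    _ = B.card * ∑ s ∈ T.filter (g · ∈ B), ((T.filter (g · ∈ B)).filter (g · = g s)).card := by
        rw [← Finset.sum_fiberwise_of_maps_to hmaps]
        refine congrArg _ (Finset.sum_congr rfl fun b _ => ?_)
        rw [sq, ← smul_eq_mul, ← Finset.sum_const]
        exact Finset.sum_congr rfl fun s hs => by rw [(Finset.mem_filter.1 hs).2]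
    _ ≤ B.card * ∑ s ∈ T, (T.filter (g s = g ·)).card := by
        refine Nat.mul_le_mul_left _ ((Finset.sum_le_sum fun s _ => Finset.card_le_card ?_).trans
          (Finset.sum_le_sum_of_subset (Finset.filter_subset _ _)))
        intro t ht
        obtain ⟨htB, hts⟩ := Finset.mem_filter.1 ht
        exact Finset.mem_filter.2 ⟨(Finset.mem_filter.1 htB).1, hts.symm⟩
    _ = _ := by rw [card_interedges_eq_sum_left]

section Cartesian

variable {F : Type*} {L : Finset (F × F)} {A B : Finset F} {κ n p : ℕ}

/-- The null lines attached to the pairs of a line `v = m u + c` in `L` and an abscissa in `A`. -/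
def flagLines (L : Finset (F × F)) (A : Finset F) : Finset (NullLine F) :=
  (L ×ˢ A).image fun t => ⟨t.1.1, t.2, t.1.2⟩

theorem mem_flagLines {x : NullLine F} : x ∈ flagLines L A ↔ (x.m, x.c) ∈ L ∧ x.a ∈ A := by
  constructor
  · intro hx
    obtain ⟨t, ht, rfl⟩ := Finset.mem_image.1 hx
    exact Finset.mem_product.1 ht
  · exact fun hx => Finset.mem_image.2 ⟨((x.m, x.c), x.a), Finset.mem_product.2 hx, rfl⟩

variable [Field F]

theorem card_filter_pairing_flagLines_le (hA : A.card ≤ κ)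
    (hκ : ∀ u v, (L.filter fun l => l.1 * u + l.2 = v).card ≤ κ) {s t : NullLine F} (hst : s ≠ t) :
    ((flagLines L A).filter fun z => s.pairing z = 0 ∧ t.pairing z = 0).card ≤ κ := by
  by_cases ha : s.a = t.a
  · by_cases hm : s.m = t.m
    · rw [Finset.card_eq_zero.2 (Finset.filter_eq_empty_iff.2 fun z _ hz => hst ?_)]
      · exact Nat.zero_le κ
      · refine NullLine.ext hm ha ?_
        have h : s.m * z.a - z.m * s.a + s.c - z.c = t.m * z.a - z.m * t.a + t.c - z.c :=
          hz.1.trans hz.2.symm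
        rw [hm, ha] at h
        linear_combination h
    -- a common transversal has a fixed abscissa, and a line through a fixed point
    have hz : ∀ z ∈ (flagLines L A).filter fun z => s.pairing z = 0 ∧ t.pairing z = 0,
        z.a = (t.c - s.c) / (s.m - t.m) := fun z hz => by
      obtain ⟨-, h₁, h₂⟩ := Finset.mem_filter.1 hz
      rw [NullLine.pairing] at h₁ h₂
      rw [eq_div_iff (sub_ne_zero.2 hm)]
      linear_combination h₁ - h₂ + z.m * ha
    refine (Finset.card_le_card_of_injOn (fun z => (z.m, z.c)) (fun z hzT => ?_) ?_).trans
      (hκ s.a (s.m * ((t.c - s.c) / (s.m - t.m)) + s.c))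
    · obtain ⟨hzL, h₁, -⟩ := Finset.mem_filter.1 hzT
      refine Finset.mem_filter.2 ⟨(mem_flagLines.1 hzL).1, ?_⟩
      rw [← hz z hzT]
      rw [NullLine.pairing] at h₁
      linear_combination -h₁
    · intro z hzT w hwT h
      obtain ⟨hm, hc⟩ := Prod.mk.inj h
      exact NullLine.ext hm ((hz z hzT).trans (hz w hwT).symm) hc
  · refine (Finset.card_le_card_of_injOn NullLine.a (fun z hz => ?_) ?_).trans hA
    · exact (mem_flagLines.1 (Finset.mem_filter.1 hz).1).2
    · intro z hz w hw h
      obtain ⟨-, h₁, h₂⟩ := Finset.mem_filter.1 hz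
      obtain ⟨-, h₃, h₄⟩ := Finset.mem_filter.1 hw
      rw [NullLine.pairing] at h₁ h₂ h₃ h₄
      have hm : z.m = w.m := mul_left_cancel₀ (sub_ne_zero.2 ha) <| by
        linear_combination h₂ - h₁ + h₃ - h₄ + (s.m - t.m) * h
      exact NullLine.ext hm h (by linear_combination h₃ - h₁ + s.m * h - s.a * hm)

/-- Incidences of the lines `v = m u + c`, `(m, c) ∈ L`, with the product `A × B`: a coincidence
`m u + c = m' u' + c'` is a vanishing pairing of the null line of `(m, c, u')` with that of
`(m', c', u)`. -/
theorem sq_card_incidences_product_le [CharP F p] (hL : ∀ l ∈ L, l.1 ≠ 0) (hA : A.card ≤ κ)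
    (hκ : ∀ u v, (L.filter fun l => l.1 * u + l.2 = v).card ≤ κ) (hn : n ≤ p)
    (hLA : L.card * A.card ≤ n ^ 2) :
    ((L ×ˢ A).filter fun t => t.1.1 * t.2 + t.1.2 ∈ B).card ^ 2 ≤
      B.card * (1000000 * n ^ 3 + κ * (L.card * A.card)) := by
  refine (sq_card_filter_le_card_mul_card_interedges (L ×ˢ A)
    (fun t => t.1.1 * t.2 + t.1.2) B).trans (Nat.mul_le_mul_left _ ?_)
  have hcard : (flagLines L A).card ≤ L.card * A.card :=
    Finset.card_image_le.trans_eq (Finset.card_product L A)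
  refine (Finset.card_le_card_of_injOn (fun z : ((F × F) × F) × (F × F) × F =>
    ((⟨z.1.1.1, z.2.2, z.1.1.2⟩, ⟨z.2.1.1, z.1.2, z.2.1.2⟩) : NullLine F × NullLine F))
    (fun z hz => ?_) fun z _ w _ h => ?_).trans ((NullLine.card_interedges_pairing_le hn
      (hcard.trans hLA) (fun t ht => hL _ (mem_flagLines.1 ht).1)
      fun s _ t _ hst => card_filter_pairing_flagLines_le hA hκ hst).trans (by gcongr))
  · obtain ⟨hz₁, hz₂, h⟩ := Rel.mem_interedges_iff.1 (Finset.mem_coe.1 hz)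
    obtain ⟨hL₁, hA₁⟩ := Finset.mem_product.1 hz₁
    obtain ⟨hL₂, hA₂⟩ := Finset.mem_product.1 hz₂
    refine Rel.mem_interedges_iff.2 ⟨mem_flagLines.2 ⟨hL₁, hA₂⟩, mem_flagLines.2 ⟨hL₂, hA₁⟩, ?_⟩
    rw [NullLine.pairing]
    linear_combination h
  · simp only [Prod.mk.injEq, NullLine.mk.injEq] at h
    grind

end Cartesian

/-! ### Partial linear spaces -/

section PartialLinear

variable {α β : Type*} {Q : Finset α} {Λ : Finset β} {I : α → β → Prop} {k : ℕ}

/-- The lines in `Λ` form a partial linear space on the points in `Q`, with incidence relation `I`: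
two distinct points lie on at most one line. -/
def IsPartialLinear (Q : Finset α) (Λ : Finset β) (I : α → β → Prop) : Prop :=
  ∀ q ∈ Q, ∀ q' ∈ Q, q ≠ q' → ∀ w ∈ Λ, ∀ w' ∈ Λ, I q w → I q w' → I q' w → I q' w' → w = w'

theorem card_mul_le_card_interedges (hk : ∀ w ∈ Λ, k ≤ (Q.filter (I · w)).card) :
    Λ.card * k ≤ (Rel.interedges I Q Λ).card := by
  rw [card_interedges_eq_sum_right, ← smul_eq_mul]
  exact Finset.card_nsmul_le_sum _ _ _ hk

theorem IsPartialLinear.card_mul_mul_le_sq (hI : IsPartialLinear Q Λ I)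
    (hk : ∀ w ∈ Λ, k ≤ (Q.filter (I · w)).card) : Λ.card * (k * (k - 1)) ≤ Q.card ^ 2 := by
  have hdisj : (Λ : Set β).PairwiseDisjoint fun w => (Q.filter (I · w)).offDiag :=
    fun w hw w' hw' hne => Finset.disjoint_left.2 fun z hz hz' => hne <| by
      simp only [Finset.mem_offDiag, Finset.mem_filter] at hz hz'
      exact hI _ hz.1.1 _ hz.2.1.1 hz.2.2 w hw w' hw' hz.1.2 hz'.1.2 hz.2.1.2 hz'.2.1.2
  have hsub : (Λ.biUnion fun w => (Q.filter (I · w)).offDiag) ⊆ Q ×ˢ Q :=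
    Finset.biUnion_subset.2 fun w _ z hz => by
      simp only [Finset.mem_offDiag, Finset.mem_filter] at hz
      exact Finset.mem_product.2 ⟨hz.1.1, hz.2.1.1⟩
  calc Λ.card * (k * (k - 1)) = Λ.card • (k * (k - 1)) := (smul_eq_mul _ _).symm
    _ ≤ ∑ w ∈ Λ, (Q.filter (I · w)).offDiag.card :=
        Finset.card_nsmul_le_sum _ _ _ fun w hw => by
          rw [Finset.offDiag_card, ← Nat.mul_sub_one]
          exact Nat.mul_le_mul (hk w hw) (Nat.sub_le_sub_right (hk w hw) 1)
    _ ≤ Q.card ^ 2 := by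
        rw [← Finset.card_biUnion hdisj, sq, ← Finset.card_product]
        exact Finset.card_le_card hsub

theorem IsPartialLinear.sum_sq_degree_le (hI : IsPartialLinear Q Λ I) :
    ∑ q ∈ Q, (Λ.filter (I q)).card ^ 2 ≤ (Rel.interedges I Q Λ).card + Λ.card ^ 2 := by
  calc ∑ q ∈ Q, (Λ.filter (I q)).card ^ 2
      = ∑ q ∈ Q, ((Λ ×ˢ Λ).filter fun z => I q z.1 ∧ I q z.2).card :=
        Finset.sum_congr rfl fun q _ => by rw [sq, ← Finset.card_product, Finset.filter_product]
    _ = ∑ z ∈ Λ ×ˢ Λ, (Q.filter fun q => I q z.1 ∧ I q z.2).card :=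
        Finset.sum_card_bipartiteAbove_eq_sum_card_bipartiteBelow
          fun (q : α) (z : β × β) => I q z.1 ∧ I q z.2
    _ ≤ ∑ z ∈ Λ ×ˢ Λ, ((if z.1 = z.2 then (Q.filter (I · z.1)).card else 0) + 1) := by
        refine Finset.sum_le_sum fun z hz => ?_
        split_ifs with h
        · exact (Finset.card_le_card (Finset.monotone_filter_right _ fun _ _ => And.left)).trans
            (Nat.le_succ _)
        · refine (Finset.card_le_one.2 fun q hq q' hq' => ?_).trans (Nat.le_add_left 1 _)
          rw [Finset.mem_filter] at hq hq'
          rw [Finset.mem_product] at hz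
          by_contra hne
          exact h (hI q hq.1 q' hq'.1 hne _ hz.1 _ hz.2 hq.2.1 hq.2.2 hq'.2.1 hq'.2.2)
    _ = (Rel.interedges I Q Λ).card + Λ.card ^ 2 := by
        rw [Finset.sum_add_distrib, Finset.sum_product, Finset.sum_const, Finset.card_product,
          card_interedges_eq_sum_right, smul_eq_mul, mul_one, sq]
        congr 1
        exact Finset.sum_congr rfl fun w hw => by rw [Finset.sum_ite_eq, if_pos hw]

theorem IsPartialLinear.card_mul_le_of_two_mul_card_le (hI : IsPartialLinear Q Λ I)
    (hk : ∀ w ∈ Λ, k ≤ (Q.filter (I · w)).card) (hQk : 2 * Q.card ≤ k ^ 2) :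
    Λ.card * k ≤ 2 * Q.card := by
  set E := (Rel.interedges I Q Λ).card
  have hE : Λ.card * k ≤ E := card_mul_le_card_interedges hk
  have hsq : E ^ 2 ≤ Q.card * (E + Λ.card ^ 2) := by
    rw [show E = ∑ q ∈ Q, (Λ.filter (I q)).card from card_interedges_eq_sum_left I Q Λ]
    refine sq_sum_le_card_mul_sum_sq.trans (Nat.mul_le_mul_left _ ?_)
    rw [← card_interedges_eq_sum_left I Q Λ]
    exact hI.sum_sq_degree_le
  have hhalf : 2 * (Q.card * Λ.card ^ 2) ≤ E ^ 2 := by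
    calc 2 * (Q.card * Λ.card ^ 2) = 2 * Q.card * Λ.card ^ 2 := by ring
      _ ≤ k ^ 2 * Λ.card ^ 2 := Nat.mul_le_mul_right _ hQk
      _ = (Λ.card * k) ^ 2 := by ring
      _ ≤ E ^ 2 := Nat.pow_le_pow_left hE 2
  have hEE : E * E ≤ 2 * Q.card * E := by linarith [sq E, mul_add Q.card E (Λ.card ^ 2)]
  rcases Nat.eq_zero_or_pos E with h | h
  · omega
  · exact hE.trans (Nat.le_of_mul_le_mul_right hEE h)

/-- The point `q` is joined to `x` and to `y` by two distinct lines of `Λ`. -/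
def HasDistinctJoins (Λ : Finset β) (I : α → β → Prop) (q x y : α) : Prop :=
  x ≠ q ∧ y ≠ q ∧ ∃ w ∈ Λ, ∃ w' ∈ Λ, w ≠ w' ∧ I x w ∧ I q w ∧ I y w' ∧ I q w'

theorem IsPartialLinear.le_card_hasDistinctJoins (hI : IsPartialLinear Q Λ I)
    (hk : ∀ w ∈ Λ, k ≤ (Q.filter (I · w)).card) {q : α} (hq : q ∈ Q) :
    (Λ.filter (I q)).card * ((Λ.filter (I q)).card - 1) * (k - 1) ^ 2 ≤
      ((Q ×ˢ Q).filter fun z => HasDistinctJoins Λ I q z.1 z.2).card := by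
  set D := Λ.filter (I q)
  set s : β → Finset α := fun w => (Q.filter (I · w)).erase q
  have huniq : ∀ w ∈ D, ∀ w' ∈ D, ∀ x, x ∈ s w → x ∈ s w' → w = w' := by
    intro w hw w' hw' x hx hx'
    simp only [s, D, Finset.mem_erase, Finset.mem_filter] at hx hx' hw hw'
    exact hI x hx.2.1 q hq hx.1 w hw.1 w' hw'.1 hx.2.2 hx'.2.2 hw.2 hw'.2
  have hdisj : (D.offDiag : Set (β × β)).PairwiseDisjoint fun z => s z.1 ×ˢ s z.2 := by
    refine fun w hw w' hw' hne => Finset.disjoint_left.2 fun z hz hz' => hne ?_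
    rw [Finset.mem_product] at hz hz'
    rw [Finset.mem_coe, Finset.mem_offDiag] at hw hw'
    exact Prod.ext (huniq _ hw.1 _ hw'.1 _ hz.1 hz'.1) (huniq _ hw.2.1 _ hw'.2.1 _ hz.2 hz'.2)
  have hsub : (D.offDiag.biUnion fun z => s z.1 ×ˢ s z.2) ⊆
      (Q ×ˢ Q).filter fun z => HasDistinctJoins Λ I q z.1 z.2 := by
    intro z hz
    simp only [Finset.mem_biUnion, Finset.mem_offDiag, Finset.mem_product, Finset.mem_erase,
      Finset.mem_filter, s, D] at hz
    obtain ⟨⟨w, w'⟩, ⟨⟨hw, hqw⟩, ⟨hw', hqw'⟩, hne⟩, ⟨hx, hxQ, hxw⟩, hy, hyQ, hyw'⟩ := hz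
    exact Finset.mem_filter.2 ⟨Finset.mem_product.2 ⟨hxQ, hyQ⟩, hx, hy, w, hw, w', hw', hne,
      hxw, hqw, hyw', hqw'⟩
  have hs : ∀ w ∈ D, k - 1 ≤ (s w).card := fun w hw =>
    (Nat.sub_le_sub_right (hk w (Finset.mem_filter.1 hw).1) 1).trans
      Finset.pred_card_le_card_erase
  rw [Nat.mul_sub_one, ← Finset.offDiag_card, ← smul_eq_mul]
  refine le_trans ?_ (Finset.card_le_card hsub)
  rw [Finset.card_biUnion hdisj]
  refine Finset.card_nsmul_le_sum _ _ _ fun z hz => ?_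
  rw [Finset.mem_offDiag] at hz
  rw [Finset.card_product, sq]
  exact Nat.mul_le_mul (hs _ hz.1) (hs _ hz.2.1)

theorem IsPartialLinear.pow_three_mul_degree_le (hI : IsPartialLinear Q Λ I)
    (hk : ∀ w ∈ Λ, k ≤ (Q.filter (I · w)).card) (hk₂ : 2 ≤ k) (hrich : 8 * Q.card ≤ Λ.card * k)
    {q : α} (hq : q ∈ Q) (hd : Λ.card * k ≤ 2 * Q.card * (Λ.filter (I q)).card) :
    k ^ 3 * Λ.card * (Λ.filter (I q)).card ≤
      16 * Q.card * ((Q ×ˢ Q).filter fun z => HasDistinctJoins Λ I q z.1 z.2).card := by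
  have hle := hI.le_card_hasDistinctJoins hk hq
  set d := (Λ.filter (I q)).card
  have hd₄ : 4 ≤ d := by
    have : 4 * (2 * Q.card) ≤ d * (2 * Q.card) := by linarith
    exact Nat.le_of_mul_le_mul_right this (Nat.mul_pos two_pos (Finset.card_pos.2 ⟨q, hq⟩))
  calc k ^ 3 * Λ.card * d = k ^ 2 * (Λ.card * k) * d := by ring
    _ ≤ (2 * (k - 1)) ^ 2 * (2 * Q.card * d) * (2 * (d - 1)) := by
        gcongr <;> omega
    _ = 16 * Q.card * (d * (d - 1) * (k - 1) ^ 2) := by ring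
    _ ≤ _ := Nat.mul_le_mul_left _ hle

/-- The indices below half the average contribute at most half of the sum. -/
theorem le_two_mul_sum_filter {ι : Type*} {s : Finset ι} {f : ι → ℕ} {a : ℕ}
    (hs : s.Nonempty) (ha : a ≤ ∑ i ∈ s, f i) :
    a ≤ 2 * ∑ i ∈ s with a ≤ 2 * s.card * f i, f i := by
  have hlow : 2 * s.card * ∑ i ∈ s with ¬ a ≤ 2 * s.card * f i, f i ≤ s.card * a := by
    rw [Finset.mul_sum]
    refine (Finset.sum_le_card_nsmul _ _ a fun i hi =>
      (not_le.1 (Finset.mem_filter.1 hi).2).le).trans ?_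
    exact Nat.mul_le_mul_right _ (Finset.card_filter_le _ _)
  rw [← Finset.sum_filter_add_sum_filter_not s fun i => a ≤ 2 * s.card * f i] at ha
  refine Nat.le_of_mul_le_mul_left (?_ : s.card * _ ≤ s.card * _) hs.card_pos
  linarith [Nat.mul_le_mul_left (2 * s.card) ha]

theorem IsPartialLinear.exists_projection_centers (hI : IsPartialLinear Q Λ I)
    (hk : ∀ w ∈ Λ, k ≤ (Q.filter (I · w)).card) (hk₂ : 2 ≤ k) (hQ : Q.Nonempty)
    (hrich : 8 * Q.card ≤ Λ.card * k) :
    ∃ x ∈ Q, ∃ y ∈ Q, Λ.card ^ 2 * k ^ 4 ≤ 32 * Q.card ^ 3 *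
      (Q.filter fun q => Λ.card * k ≤ 2 * Q.card * (Λ.filter (I q)).card ∧
        HasDistinctJoins Λ I q x y).card := by
  set d : α → ℕ := fun q => (Λ.filter (I q)).card
  set R : α → α × α → Prop :=
    fun q z => Λ.card * k ≤ 2 * Q.card * d q ∧ HasDistinctJoins Λ I q z.1 z.2
  have hcount : k ^ 3 * Λ.card * (Λ.card * k) ≤
      32 * Q.card * ∑ z ∈ Q ×ˢ Q, (Q.filter (R · z)).card := by
    calc k ^ 3 * Λ.card * (Λ.card * k)
        ≤ k ^ 3 * Λ.card * (2 * ∑ q ∈ Q with Λ.card * k ≤ 2 * Q.card * d q, d q) :=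
          Nat.mul_le_mul_left _ (le_two_mul_sum_filter hQ
            ((card_mul_le_card_interedges hk).trans_eq (card_interedges_eq_sum_left I Q Λ)))
      _ = 2 * ∑ q ∈ Q with Λ.card * k ≤ 2 * Q.card * d q, k ^ 3 * Λ.card * d q := by
          rw [← Finset.mul_sum]; ring
      _ ≤ 2 * ∑ q ∈ Q, 16 * Q.card * ((Q ×ˢ Q).filter (R q)).card := by
          refine Nat.mul_le_mul_left _ ((Finset.sum_le_sum fun q hq => ?_).trans
            (Finset.sum_le_sum_of_subset (Finset.filter_subset _ _)))
          obtain ⟨hqQ, hd⟩ := Finset.mem_filter.1 hq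
          refine (hI.pow_three_mul_degree_le hk hk₂ hrich hqQ hd).trans (Nat.mul_le_mul_left _ ?_)
          exact Finset.card_le_card (Finset.monotone_filter_right _ fun z _ hz => ⟨hd, hz⟩)
      _ = 32 * Q.card * ∑ z ∈ Q ×ˢ Q, (Q.filter (R · z)).card := by
          rw [← Finset.mul_sum, show ∑ q ∈ Q, ((Q ×ˢ Q).filter (R q)).card = _ from
            Finset.sum_card_bipartiteAbove_eq_sum_card_bipartiteBelow R]
          simp only [Finset.bipartiteBelow]
          ring
  obtain ⟨z, hz, h⟩ := Finset.exists_le_of_sum_le (s := Q ×ˢ Q)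
    (f := fun _ => Λ.card ^ 2 * k ^ 4) (g := fun z => 32 * Q.card ^ 3 * (Q.filter (R · z)).card)
    (hQ.product hQ) <| by
      rw [Finset.sum_const, Finset.card_product, ← Finset.mul_sum, smul_eq_mul]
      linarith [Nat.mul_le_mul_left (Q.card ^ 2) hcount]
  exact ⟨z.1, (Finset.mem_product.1 hz).1, z.2, (Finset.mem_product.1 hz).2, h⟩

end PartialLinear

/-! ### Projection in a projective plane -/

section ProjectivePlane

variable {F V W : Type*} [Field F] [AddCommGroup V] [Module F V] [AddCommGroup W] [Module F W]

/-- Any two distinct members of the finite set `s` are linearly independent, so that they represent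
distinct points of the projective space. -/
def PairwiseLinearIndependent (F : Type*) {V : Type*} [Field F] [AddCommGroup V] [Module F V]
    (s : Finset V) : Prop :=
  ∀ x ∈ s, ∀ y ∈ s, x ≠ y → LinearIndependent F ![x, y]

namespace PairwiseLinearIndependent

variable {s t : Finset V} {x y : V}

theorem mono (ht : PairwiseLinearIndependent F t) (hst : s ⊆ t) : PairwiseLinearIndependent F s :=
  fun x hx y hy => ht x (hst hx) y (hst hy)

theorem smul_ne_smul (hs : PairwiseLinearIndependent F s) (hx : x ∈ s) (hy : y ∈ s) (hxy : x ≠ y)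
    {a b : F} (ha : a ≠ 0) : a • x ≠ b • y := fun h =>
  ha (LinearIndependent.pair_iff.1 (hs x hx y hy hxy) a (-b) (by
    rw [h, neg_smul, add_neg_cancel])).1

theorem ne_zero (hs : PairwiseLinearIndependent F s) (hx : x ∈ s) (hy : y ∈ s) (hxy : x ≠ y) :
    x ≠ 0 :=
  (hs x hx y hy hxy).ne_zero 0

end PairwiseLinearIndependent

theorem exists_basis_coord_eq {ι : Type*} [Finite ι] [FiniteDimensional F W]
    (d : Module.Basis ι F (Module.Dual F W)) :
    ∃ b : Module.Basis ι F W, ∀ i, b.coord i = d i :=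
  ⟨d.dualBasis.map (Module.evalEquiv F W).symm, fun i => LinearMap.ext fun w => by simp⟩

theorem exists_basis_fin_three_coord_eq (hW : Module.finrank F W = 3) {x y : Module.Dual F W}
    (h : LinearIndependent F ![x, y]) :
    ∃ b : Module.Basis (Fin 3) F W, b.coord 1 = x ∧ b.coord 2 = y := by
  have : FiniteDimensional F W := FiniteDimensional.of_finrank_pos (by omega)
  have hdual : Module.finrank F (Module.Dual F W) = 3 := by rw [Subspace.dual_finrank_eq, hW]
  obtain ⟨e, he⟩ := exists_linearIndependent_cons_of_lt_finrank h (by omega)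
  obtain ⟨b, hb⟩ := exists_basis_coord_eq
    (basisOfLinearIndependentOfCardEqFinrank he (by rw [hdual, Fintype.card_fin]))
  exact ⟨b, by simp [hb], by simp [hb]⟩

variable {Q : Finset (Module.Dual F W)} {Λ : Finset W} {I : Module.Dual F W → W → Prop}

theorem line_unique (hW : Module.finrank F W = 3) (hΛ : PairwiseLinearIndependent F Λ)
    {x y : Module.Dual F W} (hxy : LinearIndependent F ![x, y]) {w w' : W} (hw : w ∈ Λ)
    (hw' : w' ∈ Λ) (hxw : x w = 0) (hyw : y w = 0) (hxw' : x w' = 0) (hyw' : y w' = 0) :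
    w = w' := by
  obtain ⟨b, rfl, rfl⟩ := exists_basis_fin_three_coord_eq hW hxy
  by_contra hne
  have hzero : b.coord 0 w' ≠ 0 := fun h =>
    hΛ.ne_zero hw' hw (Ne.symm hne) (b.ext_elem fun i => by fin_cases i <;> simp_all)
  refine hΛ.smul_ne_smul hw hw' hne hzero (b := b.coord 0 w) (b.ext_elem fun i => ?_)
  fin_cases i <;> simp_all [mul_comm]

theorem isPartialLinear_of_finrank_eq_three (hW : Module.finrank F W = 3)
    (hQ : PairwiseLinearIndependent F Q) (hΛ : PairwiseLinearIndependent F Λ)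
    (hI : ∀ q w, I q w → q w = 0) : IsPartialLinear Q Λ I :=
  fun q hq q' hq' hne _ hw _ hw' h₁ h₂ h₃ h₄ =>
    line_unique hW hΛ (hQ q hq q' hq' hne) hw hw' (hI _ _ h₁) (hI _ _ h₃) (hI _ _ h₂) (hI _ _ h₄)

theorem card_filter_not_linearIndependent_le_one (hQ : PairwiseLinearIndependent F Q)
    {x : Module.Dual F W} (hx : x ≠ 0) :
    (Q.filter fun q => ¬ LinearIndependent F ![x, q]).card ≤ 1 := by
  refine Finset.card_le_one.2 fun q hq q' hq' => ?_
  simp only [Finset.mem_filter, LinearIndependent.pair_iff' hx, not_forall, not_not] at hq hq'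
  obtain ⟨hq, a, rfl⟩ := hq
  obtain ⟨hq', a', rfl⟩ := hq'
  by_contra hne
  have ha' : a' ≠ 0 := fun h => hQ.ne_zero hq' hq (Ne.symm hne) (by rw [h, zero_smul])
  exact hQ.smul_ne_smul hq hq' hne ha' (smul_comm a' a x)

/-- The lines through a fixed point `x`, which need not belong to `Q`, share no other point. -/
theorem card_mul_pred_le_of_concurrent (hW : Module.finrank F W = 3)
    (hQ : PairwiseLinearIndependent F Q) (hΛ : PairwiseLinearIndependent F Λ)
    (hI : ∀ q w, I q w → q w = 0) {k : ℕ} (hk : ∀ w ∈ Λ, k ≤ (Q.filter (I · w)).card)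
    {x : Module.Dual F W} (hx : x ≠ 0) (hΛx : ∀ w ∈ Λ, x w = 0) : Λ.card * (k - 1) ≤ Q.card := by
  set Q' := Q.filter fun q => LinearIndependent F ![x, q]
  have hdisj : (Λ : Set W).PairwiseDisjoint fun w => Q'.filter (I · w) := by
    refine fun w hw w' hw' hne => Finset.disjoint_left.2 fun q hq hq' => hne ?_
    simp only [Q', Finset.mem_filter] at hq hq'
    exact line_unique hW hΛ hq.1.2 hw hw' (hΛx w hw) (hI _ _ hq.2) (hΛx w' hw') (hI _ _ hq'.2)
  have hcard : ∀ w ∈ Λ, k - 1 ≤ (Q'.filter (I · w)).card := fun w hw => by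
    have hsub : Q.filter (I · w) ⊆
        Q'.filter (I · w) ∪ Q.filter fun q => ¬ LinearIndependent F ![x, q] := fun q => by
      simp only [Q', Finset.mem_union, Finset.mem_filter]
      tauto
    have h₁ := (Finset.card_le_card hsub).trans (Finset.card_union_le _ _)
    have h₂ := card_filter_not_linearIndependent_le_one hQ hx
    have h₃ := hk w hw
    omega
  calc Λ.card * (k - 1) = Λ.card • (k - 1) := (smul_eq_mul _ _).symm
    _ ≤ ∑ w ∈ Λ, (Q'.filter (I · w)).card := Finset.card_nsmul_le_sum _ _ _ hcard
    _ = (Λ.biUnion fun w => Q'.filter (I · w)).card := (Finset.card_biUnion hdisj).symm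
    _ ≤ Q.card := Finset.card_le_card <| Finset.biUnion_subset.2 fun w _ =>
        (Finset.filter_subset _ _).trans (Finset.filter_subset _ _)

end ProjectivePlane

section AffineChart

variable {F W : Type*} [Field F] [AddCommGroup W] [Module F W] (b : Module.Basis (Fin 3) F W)

/-- The affine coordinates `(u, v)` of a point of the projective plane off the line through the
coordinate functionals `b.coord 1` and `b.coord 2`. Those two points are the points at infinity of
the `u`- and `v`-axes. -/
def affinePoint (q : Module.Dual F W) : F × F :=
  (q (b 1) / q (b 0), q (b 2) / q (b 0))

/-- The slope and the intercept, in the coordinates of `affinePoint`, of a line `w` which does not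
pass through `b.coord 2`. -/
def affineLine (w : W) : F × F :=
  (-(b.coord 1 w / b.coord 2 w), -(b.coord 0 w / b.coord 2 w))

variable {b} {q q' : Module.Dual F W} {w w' : W}

theorem apply_eq_sum_coord (q : Module.Dual F W) (w : W) :
    q w = q (b 0) * b.coord 0 w + q (b 1) * b.coord 1 w + q (b 2) * b.coord 2 w := by
  conv_lhs => rw [← b.sum_repr w, Fin.sum_univ_three]
  simp only [map_add, map_smul, smul_eq_mul, b.coord_apply]
  ring

theorem apply_eq_zero_iff (hq : q (b 0) ≠ 0) (hw : b.coord 2 w ≠ 0) : q w = 0 ↔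
    (affineLine b w).1 * (affinePoint b q).1 + (affineLine b w).2 = (affinePoint b q).2 := by
  rw [apply_eq_sum_coord (b := b), affineLine, affinePoint]
  field_simp
  constructor <;> intro h <;> linear_combination -h

theorem affinePoint_injOn {Q : Finset (Module.Dual F W)} (hQ : PairwiseLinearIndependent F Q)
    (hQ₀ : ∀ q ∈ Q, q (b 0) ≠ 0) : Set.InjOn (affinePoint b) Q := by
  intro q hq q' hq' h
  by_contra hne
  obtain ⟨h₁, h₂⟩ := Prod.mk.inj h
  have h₀ := hQ₀ q hq
  have h₀' := hQ₀ q' hq'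
  rw [div_eq_div_iff h₀ h₀'] at h₁ h₂
  refine hQ.smul_ne_smul hq hq' hne h₀' (b := q (b 0)) (b.ext fun i => ?_)
  fin_cases i
  · simp [mul_comm]
  · simpa [mul_comm] using h₁
  · simpa [mul_comm] using h₂

theorem affineLine_injOn {Λ : Finset W} (hΛ : PairwiseLinearIndependent F Λ)
    (hΛ₂ : ∀ w ∈ Λ, b.coord 2 w ≠ 0) : Set.InjOn (affineLine b) Λ := by
  intro w hw w' hw' h
  by_contra hne
  simp only [affineLine, Prod.mk.injEq, neg_inj] at h
  have h₂ := hΛ₂ w hw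
  have h₂' := hΛ₂ w' hw'
  rw [div_eq_div_iff h₂ h₂', div_eq_div_iff h₂ h₂'] at h
  refine hΛ.smul_ne_smul hw hw' hne h₂' (b := b.coord 2 w) (b.ext_elem fun i => ?_)
  fin_cases i
  · simpa [mul_comm] using h.2
  · simpa [mul_comm] using h.1
  · simp [mul_comm]

end AffineChart

section CartesianProjection

variable {F W : Type*} [Field F] [AddCommGroup W] [Module F W] {b : Module.Basis (Fin 3) F W}
  {Q : Finset (Module.Dual F W)} {Λ : Finset W} {I : Module.Dual F W → W → Prop} {k : ℕ}

theorem HasDistinctJoins.apply_ne_zero (hQ : PairwiseLinearIndependent F Q)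
    (hΛ : PairwiseLinearIndependent F Λ) (hI : ∀ q w, I q w → q w = 0) (h₁ : b.coord 1 ∈ Q)
    (h₂ : b.coord 2 ∈ Q) {q : Module.Dual F W} (hq : q ∈ Q)
    (hjoin : HasDistinctJoins Λ I q (b.coord 1) (b.coord 2)) : q (b 0) ≠ 0 := by
  obtain ⟨hne₁, hne₂, w, hw, w', hw', hww', h₁w, hqw, h₂w', hqw'⟩ := hjoin
  intro h₀
  have hsum (z : W) : q z = q (b 1) * b.coord 1 z + q (b 2) * b.coord 2 z := by
    rw [apply_eq_sum_coord (b := b), h₀, zero_mul, zero_add]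
  have hq₁ : q (b 1) ≠ 0 := fun h => hQ.smul_ne_smul hq h₂ hne₂.symm one_ne_zero
    (b := q (b 2)) (LinearMap.ext fun z => by
      rw [one_smul, hsum, h, zero_mul, zero_add, LinearMap.smul_apply, smul_eq_mul])
  have hq₂ : q (b 2) ≠ 0 := fun h => hQ.smul_ne_smul hq h₁ hne₁.symm one_ne_zero
    (b := q (b 1)) (LinearMap.ext fun z => by
      rw [one_smul, hsum, h, zero_mul, add_zero, LinearMap.smul_apply, smul_eq_mul])
  have hw₂ : b.coord 2 w = 0 := by
    have hqw₀ := hI _ _ hqw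
    rw [hsum, hI _ _ h₁w, mul_zero, zero_add] at hqw₀
    exact (mul_eq_zero.1 hqw₀).resolve_left hq₂
  have hw₁ : b.coord 1 w' = 0 := by
    have hqw₀ := hI _ _ hqw'
    rw [hsum, hI _ _ h₂w', mul_zero, add_zero] at hqw₀
    exact (mul_eq_zero.1 hqw₀).resolve_left hq₁
  have hcoord : b.coord 1 ≠ b.coord 2 := fun h => by simpa using LinearMap.congr_fun h (b 1)
  exact hww' (line_unique (by simp [Module.finrank_eq_card_basis b]) hΛ (hQ _ h₁ _ h₂ hcoord) hw
    hw' (hI _ _ h₁w) hw₂ hw₁ (hI _ _ h₂w'))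

/-- The lines through the two centres are parallel to the axes and cut out a Cartesian product. -/
theorem HasDistinctJoins.affinePoint_mem_product (hΛ : PairwiseLinearIndependent F Λ)
    (hI : ∀ q w, I q w → q w = 0) {q : Module.Dual F W} (hq : q (b 0) ≠ 0)
    (hjoin : HasDistinctJoins Λ I q (b.coord 1) (b.coord 2)) : affinePoint b q ∈
      ((Λ.filter (I (b.coord 2))).image fun w => -(b.coord 0 w / b.coord 1 w)) ×ˢ
        ((Λ.filter (I (b.coord 1))).image fun w => -(b.coord 0 w / b.coord 2 w)) := by
  obtain ⟨-, -, w, hw, w', hw', hne, h₁w, hqw, h₂w', hqw'⟩ := hjoin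
  have heq := hI _ _ hqw
  have heq' := hI _ _ hqw'
  have hw₁ := hI _ _ h₁w
  have hw₂' := hI _ _ h₂w'
  rw [apply_eq_sum_coord (b := b), hw₁, mul_zero, add_zero] at heq
  rw [apply_eq_sum_coord (b := b), hw₂', mul_zero, add_zero] at heq'
  have hw₂ : b.coord 2 w ≠ 0 := fun h => by
    rw [h, mul_zero, add_zero] at heq
    refine hΛ.ne_zero hw hw' hne (b.ext_elem fun i => ?_)
    fin_cases i
    exacts [by simpa [hq] using heq, by simpa using hw₁, by simpa using h]
  have hw₁' : b.coord 1 w' ≠ 0 := fun h => by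
    rw [h, mul_zero, add_zero] at heq'
    refine hΛ.ne_zero hw' hw hne.symm (b.ext_elem fun i => ?_)
    fin_cases i
    exacts [by simpa [hq] using heq', by simpa using h, by simpa using hw₂']
  refine Finset.mem_product.2 ⟨Finset.mem_image.2 ⟨w', Finset.mem_filter.2 ⟨hw', h₂w'⟩, ?_⟩,
    Finset.mem_image.2 ⟨w, Finset.mem_filter.2 ⟨hw, h₁w⟩, ?_⟩⟩
  · rw [affinePoint]
    field_simp
    linear_combination -heq'
  · rw [affinePoint]
    field_simp
    linear_combination -heq

theorem card_interedges_le_card_incidences_product {A B : Finset F}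
    (hQ : PairwiseLinearIndependent F Q) (hΛ : PairwiseLinearIndependent F Λ)
    (hI : ∀ q w, I q w → q w = 0) (hΛ₂ : ∀ w ∈ Λ, b.coord 2 w ≠ 0) (hQ₀ : ∀ q ∈ Q, q (b 0) ≠ 0)
    (hQAB : ∀ q ∈ Q, affinePoint b q ∈ A ×ˢ B) : (Rel.interedges I Q Λ).card ≤
      ((Λ.image (affineLine b) ×ˢ A).filter fun t => t.1.1 * t.2 + t.1.2 ∈ B).card := by
  have hinc : ∀ z ∈ Rel.interedges I Q Λ, (affineLine b z.2).1 * (affinePoint b z.1).1 +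
      (affineLine b z.2).2 = (affinePoint b z.1).2 := fun z hz => by
    obtain ⟨hq, hw, hqw⟩ := Rel.mem_interedges_iff.1 hz
    exact (apply_eq_zero_iff (hQ₀ _ hq) (hΛ₂ _ hw)).1 (hI _ _ hqw)
  refine Finset.card_le_card_of_injOn (fun z => (affineLine b z.2, (affinePoint b z.1).1))
    (fun z hz => ?_) fun z hz z' hz' h => ?_
  · obtain ⟨hq, hw, -⟩ := Rel.mem_interedges_iff.1 (Finset.mem_coe.1 hz)
    obtain ⟨hA, hB⟩ := Finset.mem_product.1 (hQAB _ hq)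
    refine Finset.mem_coe.2 (Finset.mem_filter.2
      ⟨Finset.mem_product.2 ⟨Finset.mem_image_of_mem _ hw, hA⟩, ?_⟩)
    rwa [hinc z hz]
  · obtain ⟨hline, hu⟩ := Prod.mk.inj h
    have hv := hinc z hz
    rw [hline, hu, hinc z' hz'] at hv
    obtain ⟨hq, hw, -⟩ := Rel.mem_interedges_iff.1 (Finset.mem_coe.1 hz)
    obtain ⟨hq', hw', -⟩ := Rel.mem_interedges_iff.1 (Finset.mem_coe.1 hz')
    exact Prod.ext (affinePoint_injOn hQ hQ₀ hq hq' (Prod.ext hu hv.symm))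
      (affineLine_injOn hΛ hΛ₂ hw hw' hline)

theorem card_filter_image_affineLine_mul_le (hQ : PairwiseLinearIndependent F Q)
    (hΛ : PairwiseLinearIndependent F Λ) (hI : ∀ q w, I q w → q w = 0)
    (hk : ∀ w ∈ Λ, k ≤ (Q.filter (I · w)).card) (hΛ₂ : ∀ w ∈ Λ, b.coord 2 w ≠ 0) (u v : F) :
    ((Λ.image (affineLine b)).filter fun l => l.1 * u + l.2 = v).card * (k - 1) ≤ Q.card := by
  set x : Module.Dual F W := b.coord 0 + u • b.coord 1 + v • b.coord 2
  have hx₀ : x (b 0) = 1 := by simp [x]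
  have hx : affinePoint b x = (u, v) := by simp [x, affinePoint]
  have hsub : ((Λ.image (affineLine b)).filter fun l => l.1 * u + l.2 = v) ⊆
      (Λ.filter fun w => x w = 0).image (affineLine b) := fun l hl => by
    obtain ⟨hl, hluv⟩ := Finset.mem_filter.1 hl
    obtain ⟨w, hw, rfl⟩ := Finset.mem_image.1 hl
    refine Finset.mem_image_of_mem _ (Finset.mem_filter.2 ⟨hw, ?_⟩)
    rwa [apply_eq_zero_iff (by simp [hx₀]) (hΛ₂ w hw), hx]
  refine (Nat.mul_le_mul_right _ ((Finset.card_le_card hsub).trans Finset.card_image_le)).trans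
    (card_mul_pred_le_of_concurrent (by simp [Module.finrank_eq_card_basis b]) hQ
      (hΛ.mono (Finset.filter_subset _ _)) hI (fun w hw => hk w (Finset.mem_filter.1 hw).1) ?_
      fun w hw => (Finset.mem_filter.1 hw).2)
  rintro h
  simp [h] at hx₀

theorem degree_le_degree_filter_add_two (hW : Module.finrank F W = 3)
    (hQ : PairwiseLinearIndependent F Q) (hΛ : PairwiseLinearIndependent F Λ)
    (hI : ∀ q w, I q w → q w = 0) {q x y : Module.Dual F W} (hq : q ∈ Q) (hx : x ∈ Q) (hy : y ∈ Q)
    (hxq : x ≠ q) (hyq : y ≠ q) : (Λ.filter (I q)).card ≤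
      ((Λ.filter fun w => x w ≠ 0 ∧ y w ≠ 0).filter (I q)).card + 2 := by
  have hcommon : ∀ z ∈ Q, z ≠ q → (Λ.filter fun w => I q w ∧ z w = 0).card ≤ 1 := by
    refine fun z hz hne => Finset.card_le_one.2 fun w hw w' hw' => ?_
    rw [Finset.mem_filter] at hw hw'
    exact line_unique hW hΛ (hQ z hz q hq hne) hw.1 hw'.1 hw.2.2 (hI _ _ hw.2.1) hw'.2.2
      (hI _ _ hw'.2.1)
  have hcover : Λ.filter (I q) ⊆ (Λ.filter fun w => x w ≠ 0 ∧ y w ≠ 0).filter (I q) ∪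
      ((Λ.filter fun w => I q w ∧ x w = 0) ∪ Λ.filter fun w => I q w ∧ y w = 0) := fun w hw => by
    simp only [Finset.mem_union, Finset.mem_filter] at hw ⊢
    tauto
  refine (Finset.card_le_card hcover).trans ((Finset.card_union_le _ _).trans ?_)
  exact Nat.add_le_add_left ((Finset.card_union_le _ _).trans
    (Nat.add_le_add (hcommon x hx hxq) (hcommon y hy hyq))) _

end CartesianProjection

section CoreBound

variable {F W : Type*} [Field F] [AddCommGroup W] [Module F W]
  {Q : Finset (Module.Dual F W)} {Λ : Finset W} {I : Module.Dual F W → W → Prop} {k Δ : ℕ}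

theorem card_mul_le_card_interedges_filter (hW : Module.finrank F W = 3)
    (hQ : PairwiseLinearIndependent F Q) (hΛ : PairwiseLinearIndependent F Λ)
    (hI : ∀ q w, I q w → q w = 0) (hrich : 8 * Q.card ≤ Λ.card * k)
    {R : Finset (Module.Dual F W)} (hRQ : R ⊆ Q)
    (hR : ∀ q ∈ R, Λ.card * k ≤ 2 * Q.card * (Λ.filter (I q)).card) {x y : Module.Dual F W}
    (hx : x ∈ Q) (hy : y ∈ Q) (hxR : x ∉ R) (hyR : y ∉ R) : R.card * (Λ.card * k) ≤
      4 * Q.card * (Rel.interedges I R (Λ.filter fun w => x w ≠ 0 ∧ y w ≠ 0)).card := by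
  rw [card_interedges_eq_sum_left, Finset.mul_sum, ← smul_eq_mul]
  refine Finset.card_nsmul_le_sum _ _ _ fun q hq => ?_
  have hn : 0 < Q.card := Finset.card_pos.2 ⟨q, hRQ hq⟩
  have hloss := degree_le_degree_filter_add_two hW hQ hΛ hI (hRQ hq) hx hy
    (ne_of_mem_of_not_mem hq hxR).symm (ne_of_mem_of_not_mem hq hyR).symm
  have hfour : 4 ≤ (Λ.filter (I q)).card := by
    by_contra! h
    have := Nat.mul_le_mul_left (2 * Q.card) (Nat.le_of_lt_succ h)
    have := hR q hq
    omega
  calc Λ.card * k ≤ 2 * Q.card * (Λ.filter (I q)).card := hR q hq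
    _ ≤ 2 * Q.card * (2 * ((Λ.filter fun w => x w ≠ 0 ∧ y w ≠ 0).filter (I q)).card) :=
      Nat.mul_le_mul_left _ (by omega)
    _ = 4 * Q.card * ((Λ.filter fun w => x w ≠ 0 ∧ y w ≠ 0).filter (I q)).card := by ring

theorem IsPartialLinear.ne_of_hasDistinctJoins {α β : Type*} {Q : Finset α} {Λ : Finset β}
    {I : α → β → Prop} (hI : IsPartialLinear Q Λ I) {q x y : α} (hq : q ∈ Q) (hx : x ∈ Q)
    (h : HasDistinctJoins Λ I q x y) : x ≠ y := by
  rintro rfl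
  obtain ⟨hxq, -, w, hw, w', hw', hne, hxw, hqw, hxw', hqw'⟩ := h
  exact hne (hI x hx q hq hxq w hw w' hw' hxw hxw' hqw hqw')

theorem exists_basis_projection_centers (hW : Module.finrank F W = 3)
    (hQ : PairwiseLinearIndependent F Q) (hΛ : PairwiseLinearIndependent F Λ)
    (hI : ∀ q w, I q w → q w = 0) (hk : ∀ w ∈ Λ, k ≤ (Q.filter (I · w)).card) (hk₂ : 2 ≤ k)
    (hQ₀ : Q.Nonempty) (hrich : 8 * Q.card ≤ Λ.card * k) :
    ∃ b : Module.Basis (Fin 3) F W, b.coord 1 ∈ Q ∧ b.coord 2 ∈ Q ∧ Λ.card ^ 2 * k ^ 4 ≤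
      32 * Q.card ^ 3 * (Q.filter fun q => Λ.card * k ≤ 2 * Q.card * (Λ.filter (I q)).card ∧
        HasDistinctJoins Λ I q (b.coord 1) (b.coord 2)).card := by
  have hlin := isPartialLinear_of_finrank_eq_three hW hQ hΛ hI
  obtain ⟨x, hx, y, hy, hcount⟩ := hlin.exists_projection_centers hk hk₂ hQ₀ hrich
  have hΛ₀ : 0 < Λ.card := Nat.pos_of_mul_pos_right (b := k) (by have := hQ₀.card_pos; omega)
  have hpos : 0 < Λ.card ^ 2 * k ^ 4 := by positivity
  obtain ⟨q, hq⟩ := Finset.card_pos.1 (Nat.pos_of_mul_pos_left (hpos.trans_le hcount))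
  obtain ⟨hq, -, hjoin⟩ := Finset.mem_filter.1 hq
  obtain ⟨b, rfl, rfl⟩ := exists_basis_fin_three_coord_eq hW
    (hQ x hx y hy (hlin.ne_of_hasDistinctJoins hq hx hjoin))
  exact ⟨b, hx, hy, hcount⟩

/-- Two projection centres, sent to infinity, put many of the incidences into a Cartesian product
whose sides are the pencils of the centres. -/
theorem exists_cartesian_incidences (hW : Module.finrank F W = 3)
    (hQ : PairwiseLinearIndependent F Q) (hΛ : PairwiseLinearIndependent F Λ)
    (hI : ∀ q w, I q w → q w = 0) (hk : ∀ w ∈ Λ, k ≤ (Q.filter (I · w)).card) (hk₂ : 2 ≤ k)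
    (hQ₀ : Q.Nonempty) (hrich : 8 * Q.card ≤ Λ.card * k)
    (hdeg : ∀ q ∈ Q, (Λ.filter (I q)).card ≤ Δ) :
    ∃ (L : Finset (F × F)) (A B : Finset F), (∀ l ∈ L, l.1 ≠ 0) ∧ L.card ≤ Λ.card ∧
      A.card ≤ Δ ∧ B.card ≤ Δ ∧ A.card * (k - 1) ≤ Q.card ∧
      (∀ u v, (L.filter fun l => l.1 * u + l.2 = v).card * (k - 1) ≤ Q.card) ∧
      Λ.card ^ 3 * k ^ 5 ≤
        128 * Q.card ^ 4 * ((L ×ˢ A).filter fun t => t.1.1 * t.2 + t.1.2 ∈ B).card := by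
  obtain ⟨b, h₁, h₂, hcount⟩ := exists_basis_projection_centers hW hQ hΛ hI hk hk₂ hQ₀ hrich
  set R := Q.filter fun q => Λ.card * k ≤ 2 * Q.card * (Λ.filter (I q)).card ∧
    HasDistinctJoins Λ I q (b.coord 1) (b.coord 2)
  have hRQ : R ⊆ Q := Finset.filter_subset _ _
  have hjoin : ∀ q ∈ R, HasDistinctJoins Λ I q (b.coord 1) (b.coord 2) := fun q hq =>
    (Finset.mem_filter.1 hq).2.2
  set Λ' := Λ.filter fun w => b.coord 1 w ≠ 0 ∧ b.coord 2 w ≠ 0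
  have hΛ' : Λ' ⊆ Λ := Finset.filter_subset _ _
  have hoff : ∀ w ∈ Λ', b.coord 1 w ≠ 0 ∧ b.coord 2 w ≠ 0 := fun w hw =>
    (Finset.mem_filter.1 hw).2
  have hfinite : ∀ q ∈ R, q (b 0) ≠ 0 := fun q hq =>
    (hjoin q hq).apply_ne_zero hQ hΛ hI h₁ h₂ (hRQ hq)
  refine ⟨Λ'.image (affineLine b), (Λ.filter (I (b.coord 2))).image fun w =>
    -(b.coord 0 w / b.coord 1 w), (Λ.filter (I (b.coord 1))).image fun w =>
    -(b.coord 0 w / b.coord 2 w), fun l hl => ?_,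
    Finset.card_image_le.trans (Finset.card_le_card hΛ'), Finset.card_image_le.trans (hdeg _ h₂),
    Finset.card_image_le.trans (hdeg _ h₁),
    (Nat.mul_le_mul_right _ Finset.card_image_le).trans (card_mul_pred_le_of_concurrent hW hQ
      (hΛ.mono (Finset.filter_subset _ _)) hI (fun w hw => hk w (Finset.mem_filter.1 hw).1)
      (fun h => by simpa using LinearMap.congr_fun h (b 2))
      fun w hw => hI _ _ (Finset.mem_filter.1 hw).2),
    card_filter_image_affineLine_mul_le hQ (hΛ.mono hΛ') hI (fun w hw => hk w (hΛ' hw))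
      fun w hw => (hoff w hw).2, ?_⟩
  · obtain ⟨w, hw, rfl⟩ := Finset.mem_image.1 hl
    exact neg_ne_zero.2 (div_ne_zero (hoff w hw).1 (hoff w hw).2)
  have hR := card_mul_le_card_interedges_filter hW hQ hΛ hI hrich hRQ
    (fun q hq => (Finset.mem_filter.1 hq).2.1) h₁ h₂ (fun h => (hjoin _ h).1 rfl)
    fun h => (hjoin _ h).2.1 rfl
  calc Λ.card ^ 3 * k ^ 5 = Λ.card ^ 2 * k ^ 4 * (Λ.card * k) := by ring
    _ ≤ 32 * Q.card ^ 3 * R.card * (Λ.card * k) := Nat.mul_le_mul_right _ hcount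
    _ = 32 * Q.card ^ 3 * (R.card * (Λ.card * k)) := by ring
    _ ≤ 32 * Q.card ^ 3 * (4 * Q.card * (Rel.interedges I R Λ').card) :=
      Nat.mul_le_mul_left _ hR
    _ = 128 * Q.card ^ 4 * (Rel.interedges I R Λ').card := by ring
    _ ≤ _ := Nat.mul_le_mul_left _ (card_interedges_le_card_incidences_product (hQ.mono hRQ)
      (hΛ.mono hΛ') hI (fun w hw => (hoff w hw).2) hfinite
      fun q hq => (hjoin q hq).affinePoint_mem_product hΛ hI (hfinite q hq))

theorem pow_four_mul_le_of_sq_le_cube {M n J n₀ : ℕ} (hM : 0 < M) (hk : 0 < k)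
    (hlow : M ^ 3 * k ^ 5 ≤ 128 * n ^ 4 * J) (hΔ : Δ * n ≤ 16 * M * k)
    (hn₀ : n₀ ^ 2 ≤ 4 * (M * Δ)) (hJ : J ^ 2 ≤ 2000000 * (Δ * n₀ ^ 3)) :
    M ^ 4 * k ^ 15 ≤ 10 ^ 30 * n ^ 11 := by
  have hJ₄ : J ^ 4 * n ^ 5 ≤ 256 * 10 ^ 12 * 16 ^ 5 * (M ^ 8 * k ^ 5) := by
    calc J ^ 4 * n ^ 5 = (J ^ 2) ^ 2 * n ^ 5 := by ring
      _ ≤ (2000000 * (Δ * n₀ ^ 3)) ^ 2 * n ^ 5 := by gcongr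
      _ = 4 * 10 ^ 12 * Δ ^ 2 * (n₀ ^ 2) ^ 3 * n ^ 5 := by ring
      _ ≤ 4 * 10 ^ 12 * Δ ^ 2 * (4 * (M * Δ)) ^ 3 * n ^ 5 := by gcongr
      _ = 256 * 10 ^ 12 * M ^ 3 * (Δ * n) ^ 5 := by ring
      _ ≤ 256 * 10 ^ 12 * M ^ 3 * (16 * M * k) ^ 5 := by gcongr
      _ = 256 * 10 ^ 12 * 16 ^ 5 * (M ^ 8 * k ^ 5) := by ring
  refine Nat.le_of_mul_le_mul_left ?_ (by positivity : 0 < M ^ 8 * k ^ 5)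
  calc M ^ 8 * k ^ 5 * (M ^ 4 * k ^ 15) = (M ^ 3 * k ^ 5) ^ 4 := by ring
    _ ≤ (128 * n ^ 4 * J) ^ 4 := Nat.pow_le_pow_left hlow 4
    _ = 128 ^ 4 * n ^ 11 * (J ^ 4 * n ^ 5) := by ring
    _ ≤ 128 ^ 4 * n ^ 11 * (256 * 10 ^ 12 * 16 ^ 5 * (M ^ 8 * k ^ 5)) :=
      Nat.mul_le_mul_left _ hJ₄
    _ = M ^ 8 * k ^ 5 * (128 ^ 4 * 256 * 10 ^ 12 * 16 ^ 5 * n ^ 11) := by ring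
    _ ≤ M ^ 8 * k ^ 5 * (10 ^ 30 * n ^ 11) := by gcongr; norm_num

theorem pow_three_mul_le_of_sq_le_pencil {M n J κ : ℕ} (hM : 0 < M) (hk : 0 < k) (hn : 0 < n)
    (hlow : M ^ 3 * k ^ 5 ≤ 128 * n ^ 4 * J) (hΔ : Δ * n ≤ 16 * M * k) (hκ : κ * k ≤ 2 * n)
    (hJ : J ^ 2 ≤ 2 * (κ * M * Δ ^ 2)) : M ^ 3 * k ^ 9 ≤ 10 ^ 30 * n ^ 7 := by
  have hJ₂ : n * (J ^ 2 * n * k) ≤ n * (1024 * (M ^ 3 * k ^ 2)) := by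
    calc n * (J ^ 2 * n * k) = J ^ 2 * (n ^ 2 * k) := by ring
      _ ≤ 2 * (κ * M * Δ ^ 2) * (n ^ 2 * k) := Nat.mul_le_mul_right _ hJ
      _ = 2 * M * (κ * k) * (Δ * n) ^ 2 := by ring
      _ ≤ 2 * M * (2 * n) * (16 * M * k) ^ 2 := by gcongr
      _ = n * (1024 * (M ^ 3 * k ^ 2)) := by ring
  refine Nat.le_of_mul_le_mul_left ?_ (by positivity : 0 < M ^ 3 * k ^ 2)
  calc M ^ 3 * k ^ 2 * (M ^ 3 * k ^ 9) = (M ^ 3 * k ^ 5) ^ 2 * k := by ring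
    _ ≤ (128 * n ^ 4 * J) ^ 2 * k := by gcongr
    _ = 128 ^ 2 * n ^ 7 * (J ^ 2 * n * k) := by ring
    _ ≤ 128 ^ 2 * n ^ 7 * (1024 * (M ^ 3 * k ^ 2)) :=
      Nat.mul_le_mul_left _ (Nat.le_of_mul_le_mul_left hJ₂ hn)
    _ = M ^ 3 * k ^ 2 * (128 ^ 2 * 1024 * n ^ 7) := by ring
    _ ≤ M ^ 3 * k ^ 2 * (10 ^ 30 * n ^ 7) := by gcongr; norm_num

theorem sqrt_add_one_sq_le {N : ℕ} (hN : 0 < N) : (N.sqrt + 1) ^ 2 ≤ 4 * N := by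
  have := Nat.sqrt_pos.2 hN
  have := Nat.sqrt_le N
  nlinarith

theorem pow_mul_le_or_of_degree_le {p : ℕ} [CharP F p] (hW : Module.finrank F W = 3)
    (hQ : PairwiseLinearIndependent F Q) (hΛ : PairwiseLinearIndependent F Λ)
    (hI : ∀ q w, I q w → q w = 0) (hk : ∀ w ∈ Λ, k ≤ (Q.filter (I · w)).card) (hk₂ : 2 ≤ k)
    (hQ₀ : Q.Nonempty) (hrich : 8 * Q.card ≤ Λ.card * k)
    (hdeg : ∀ q ∈ Q, (Λ.filter (I q)).card * Q.card ≤ 16 * Λ.card * k)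
    (hp : 64 * Λ.card ^ 2 * k ≤ Q.card * p ^ 2) :
    Λ.card ^ 4 * k ^ 15 ≤ 10 ^ 30 * Q.card ^ 11 ∨
      Λ.card ^ 3 * k ^ 9 ≤ 10 ^ 30 * Q.card ^ 7 := by
  have hn : 0 < Q.card := hQ₀.card_pos
  have hM : 0 < Λ.card := Nat.pos_of_mul_pos_right (b := k) (by omega)
  set n := Q.card
  set M := Λ.card
  set Δ := 16 * M * k / n
  set κ := n / (k - 1)
  set n₀ := (M * Δ).sqrt + 1
  have hΔ : Δ * n ≤ 16 * M * k := Nat.div_mul_le_self _ _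
  have hΔ₀ : 0 < Δ := (Nat.le_div_iff_mul_le hn).2 (by nlinarith)
  have hκ : κ * k ≤ 2 * n := by
    calc κ * k ≤ κ * (2 * (k - 1)) := Nat.mul_le_mul_left _ (by omega)
      _ = 2 * (n / (k - 1) * (k - 1)) := by ring
      _ ≤ 2 * n := Nat.mul_le_mul_left _ (Nat.div_mul_le_self _ _)
  have hn₀ : n₀ ^ 2 ≤ 4 * (M * Δ) := sqrt_add_one_sq_le (by positivity)
  have hn₀p : n₀ ≤ p := by
    refine (Nat.pow_le_pow_iff_left two_ne_zero).1 (Nat.le_of_mul_le_mul_left ?_ hn)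
    calc n * n₀ ^ 2 ≤ n * (4 * (M * Δ)) := Nat.mul_le_mul_left _ hn₀
      _ = 4 * M * (Δ * n) := by ring
      _ ≤ 4 * M * (16 * M * k) := Nat.mul_le_mul_left _ hΔ
      _ = 64 * M ^ 2 * k := by ring
      _ ≤ n * p ^ 2 := hp
  obtain ⟨L, A, B, hL, hLM, hA, hB, hAκ, hLκ, hlow⟩ := exists_cartesian_incidences hW hQ hΛ hI hk
    hk₂ hQ₀ hrich fun q hq => (Nat.le_div_iff_mul_le hn).2 (hdeg q hq)
  have hLA : L.card * A.card ≤ M * Δ := Nat.mul_le_mul hLM hA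
  have hJ := (sq_card_incidences_product_le hL ((Nat.le_div_iff_mul_le (by omega)).2 hAκ)
    (fun u v => (Nat.le_div_iff_mul_le (by omega)).2 (hLκ u v)) hn₀p
    (hLA.trans (Nat.lt_succ_sqrt' _).le)).trans (Nat.mul_le_mul hB
      (Nat.add_le_add_left (Nat.mul_le_mul_left κ hLA) _))
  rcases le_total (κ * (M * Δ)) (1000000 * n₀ ^ 3) with h | h
  · exact .inl (pow_four_mul_le_of_sq_le_cube hM (by omega) hlow hΔ hn₀
      (hJ.trans ((Nat.mul_le_mul_left Δ (Nat.add_le_add_left h _)).trans_eq (by ring))))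
  · exact .inr (pow_three_mul_le_of_sq_le_pencil hM (by omega) hn hlow hΔ hκ
      (hJ.trans ((Nat.mul_le_mul_left Δ (Nat.add_le_add_right h _)).trans_eq (by ring))))

end CoreBound

/-! ### Rich lines -/

section RichBound

/-- The bound `m ≪ n / k + n ^ (11 / 4) / k ^ (15 / 4)`, with constant `C`, for the number `m` of
`k`-rich lines in a configuration of `n` points. -/
def RichBound (C n m k : ℕ) : Prop :=
  m * k ≤ C * n ∨ m ^ 4 * k ^ 15 ≤ C * n ^ 11

variable {C C' p n n' m m' k k' : ℕ}

theorem RichBound.mono (h : RichBound C n m k) (hC : C ≤ C') : RichBound C' n m k :=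
  h.imp (fun h => h.trans (Nat.mul_le_mul_right _ hC)) fun h => h.trans (Nat.mul_le_mul_right _ hC)

theorem RichBound.of_halves (h : RichBound C n' m' k') (hn : 4 * n' ≤ n) (hm : m ≤ 2 * m')
    (hk : k ≤ 2 * k') : RichBound C n m k := by
  refine h.imp (fun h => ?_) fun h => ?_
  · calc m * k ≤ 2 * m' * (2 * k') := Nat.mul_le_mul hm hk
      _ = 4 * (m' * k') := by ring
      _ ≤ 4 * (C * n') := Nat.mul_le_mul_left _ h
      _ = C * (4 * n') := by ring
      _ ≤ C * n := Nat.mul_le_mul_left _ hn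
  · calc m ^ 4 * k ^ 15 ≤ (2 * m') ^ 4 * (2 * k') ^ 15 := by gcongr
      _ = 2 ^ 19 * (m' ^ 4 * k' ^ 15) := by ring
      _ ≤ 2 ^ 22 * (C * n' ^ 11) := Nat.mul_le_mul (by norm_num) h
      _ = C * (4 * n') ^ 11 := by ring
      _ ≤ C * n ^ 11 := by gcongr

theorem exists_le_not_richBound (hk : k ≤ C * n) (h : ¬ RichBound C n m k) :
    ∃ m' ≤ m, ¬ RichBound C n m' k ∧ RichBound (16 * C) n m' k := by
  have hex : ∃ m, ¬ RichBound C n m k := ⟨m, h⟩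
  refine ⟨Nat.find hex, Nat.find_min' hex h, Nat.find_spec hex, ?_⟩
  obtain ⟨l, hl⟩ : ∃ l, Nat.find hex = l + 2 := by
    refine Nat.exists_eq_add_of_le' (Nat.succ_le_of_lt (Nat.lt_of_not_le fun hle => ?_))
    exact Nat.find_spec hex (.inl ((Nat.mul_le_mul_right k hle).trans (by omega)))
  have hpred : RichBound C n (l + 1) k := not_not.1 (Nat.find_min hex (by omega))
  rw [hl]
  refine hpred.imp (fun h => ?_) fun h => ?_
  · calc (l + 2) * k ≤ 16 * (l + 1) * k := by gcongr; omega
      _ = 16 * ((l + 1) * k) := by ring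
      _ ≤ 16 * (C * n) := Nat.mul_le_mul_left _ h
      _ = 16 * C * n := by ring
  · calc (l + 2) ^ 4 * k ^ 15 ≤ (2 * (l + 1)) ^ 4 * k ^ 15 := by gcongr; omega
      _ = 16 * ((l + 1) ^ 4 * k ^ 15) := by ring
      _ ≤ 16 * (C * n ^ 11) := Nat.mul_le_mul_left _ h
      _ = 16 * C * n ^ 11 := by ring

theorem mul_sq_le_of_mul_le (hk₀ : 0 < k) (hn : 2 ^ 14 * C ^ 2 * n ≤ p ^ 2)
    (hm : m * k ≤ 16 * C * n) : 64 * m ^ 2 * k ≤ n * p ^ 2 := by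
  refine Nat.le_of_mul_le_mul_left ?_ hk₀
  calc k * (64 * m ^ 2 * k) = 64 * (m * k) ^ 2 := by ring
    _ ≤ 64 * (16 * C * n) ^ 2 := by gcongr
    _ = 2 ^ 14 * C ^ 2 * n * n := by ring
    _ ≤ p ^ 2 * n := Nat.mul_le_mul_right _ hn
    _ = 1 * (n * p ^ 2) := by ring
    _ ≤ k * (n * p ^ 2) := Nat.mul_le_mul_right _ hk₀

theorem mul_sq_le_of_pow_mul_le (hk₀ : 0 < k) (hn : 2 ^ 16 * C * n ^ 9 ≤ p ^ 4 * k ^ 13)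
    (hm : m ^ 4 * k ^ 15 ≤ 16 * C * n ^ 11) : 64 * m ^ 2 * k ≤ n * p ^ 2 := by
  refine (Nat.pow_le_pow_iff_left two_ne_zero).1
    (Nat.le_of_mul_le_mul_left ?_ (by positivity : 0 < k ^ 13))
  calc k ^ 13 * (64 * m ^ 2 * k) ^ 2 = 4096 * (m ^ 4 * k ^ 15) := by ring
    _ ≤ 4096 * (16 * C * n ^ 11) := Nat.mul_le_mul_left _ hm
    _ = 2 ^ 16 * C * n ^ 9 * n ^ 2 := by ring
    _ ≤ p ^ 4 * k ^ 13 * n ^ 2 := Nat.mul_le_mul_right _ hn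
    _ = k ^ 13 * (n * p ^ 2) ^ 2 := by ring

set_option exponentiation.threshold 400 in
/-- The hypothesis `n ≤ p ^ (15 / 13)` makes the characteristic large enough for the incidence
bound of `pow_mul_le_or_of_degree_le`. -/
theorem RichBound.mul_sq_le (hm : RichBound (16 * C) n m k) (hp : (2 ^ 112 * C ^ 7) ^ 13 ≤ p)
    (hp₀ : 0 < p) (hk₀ : 0 < k) (hC : 0 < C) (hnp : n ^ 13 ≤ p ^ 15) (hnk : n ^ 3 ≤ k ^ 7) :
    64 * m ^ 2 * k ≤ n * p ^ 2 := by
  refine hm.elim (mul_sq_le_of_mul_le hk₀ ?_) (mul_sq_le_of_pow_mul_le hk₀ ?_)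
  · refine (Nat.pow_le_pow_iff_left (n := 13) (by norm_num)).1 ?_
    calc (2 ^ 14 * C ^ 2 * n) ^ 13 = 2 ^ 182 * C ^ 26 * n ^ 13 := by ring
      _ ≤ 2 ^ 1456 * C ^ 91 * p ^ 15 :=
        Nat.mul_le_mul (Nat.mul_le_mul (pow_le_pow_right₀ one_le_two (by norm_num))
          (Nat.pow_le_pow_right hC (by norm_num))) hnp
      _ = (2 ^ 112 * C ^ 7) ^ 13 * p ^ 15 := by rw [mul_pow, ← pow_mul, ← pow_mul]
      _ ≤ p * p ^ 15 := Nat.mul_le_mul_right _ hp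
      _ = p ^ 16 := by ring
      _ ≤ p ^ 26 := Nat.pow_le_pow_right hp₀ (by norm_num)
      _ = (p ^ 2) ^ 13 := by ring
  · refine (Nat.pow_le_pow_iff_left (n := 91) (by norm_num)).1 ?_
    calc (2 ^ 16 * C * n ^ 9) ^ 91
        = (2 ^ 112 * C ^ 7) ^ 13 * (n ^ 13) ^ 24 * (n ^ 3) ^ 169 := by
          simp only [mul_pow, ← pow_mul]
          rw [mul_assoc _ (n ^ _), ← pow_add]
      _ ≤ p * (p ^ 15) ^ 24 * (k ^ 7) ^ 169 := by gcongr
      _ = p ^ 361 * k ^ 1183 := by simp only [← pow_mul]; rw [← pow_succ']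
      _ ≤ p ^ 364 * k ^ 1183 := Nat.mul_le_mul_right _ (Nat.pow_le_pow_right hp₀ (by norm_num))
      _ = (p ^ 4 * k ^ 13) ^ 91 := by rw [mul_pow, ← pow_mul, ← pow_mul]

theorem richBound_of_pow_three_mul_le (hn : 0 < n) (hC : 10 ^ 50 ≤ C) (hk : k ^ 2 ≤ 2 * n)
    (h : m ^ 3 * k ^ 9 ≤ 2 ^ 12 * 10 ^ 30 * n ^ 7) : RichBound C n m k := by
  refine .inr ((Nat.pow_le_pow_iff_left (n := 6) (by norm_num)).1 ?_)
  calc (m ^ 4 * k ^ 15) ^ 6 = (m ^ 3 * k ^ 9) ^ 8 * (k ^ 2) ^ 9 := by ring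
    _ ≤ (2 ^ 12 * 10 ^ 30 * n ^ 7) ^ 8 * (2 * n) ^ 9 := by gcongr
    _ = (2 ^ 12 * 10 ^ 30) ^ 8 * 2 ^ 9 * n ^ 65 := by
      rw [mul_pow _ (n ^ 7), mul_pow 2 n, ← pow_mul]
      ring
    _ ≤ (10 ^ 50) ^ 6 * n ^ 66 := Nat.mul_le_mul (by norm_num)
      (Nat.pow_le_pow_right hn (by norm_num))
    _ ≤ C ^ 6 * n ^ 66 := by gcongr
    _ = (C * n ^ 11) ^ 6 := by ring

/-- Counting pairs of points suffices for small `k`. -/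
theorem IsPartialLinear.richBound_of_pow_le {α β : Type*} {Q : Finset α} {Λ : Finset β}
    {I : α → β → Prop} (hI : IsPartialLinear Q Λ I) (hk : ∀ w ∈ Λ, k ≤ (Q.filter (I · w)).card)
    (hk₂ : 2 ≤ k) (hC : 2 ^ 11 ≤ C) (hkn : k ^ 7 ≤ 2 ^ 7 * Q.card ^ 3) :
    RichBound C Q.card Λ.card k := by
  have hpairs : Λ.card * k ^ 2 ≤ 2 * Q.card ^ 2 := by
    calc Λ.card * k ^ 2 = Λ.card * (k * k) := by ring
      _ ≤ Λ.card * (k * (2 * (k - 1))) := by gcongr; omega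
      _ = 2 * (Λ.card * (k * (k - 1))) := by ring
      _ ≤ 2 * Q.card ^ 2 := Nat.mul_le_mul_left _ (hI.card_mul_mul_le_sq hk)
  refine .inr ?_
  calc Λ.card ^ 4 * k ^ 15 = (Λ.card * k ^ 2) ^ 4 * k ^ 7 := by ring
    _ ≤ (2 * Q.card ^ 2) ^ 4 * (2 ^ 7 * Q.card ^ 3) := by gcongr
    _ = 2 ^ 11 * Q.card ^ 11 := by ring
    _ ≤ C * Q.card ^ 11 := Nat.mul_le_mul_right _ hC

end RichBound

section HeavyPoints

variable {α β : Type*} {Q : Finset α} {Λ : Finset β} {I : α → β → Prop} {k k' : ℕ}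

theorem exists_card_filter_eq (hk : ∀ w ∈ Λ, k ≤ (Q.filter (I · w)).card) :
    ∃ J : α → β → Prop, (∀ q w, J q w → I q w) ∧ ∀ w ∈ Λ, (Q.filter (J · w)).card = k := by
  have hsel (w : β) : ∃ s ⊆ Q.filter (I · w), w ∈ Λ → s.card = k := by
    by_cases hw : w ∈ Λ
    · obtain ⟨s, hs, hsk⟩ := Finset.exists_subset_card_eq (hk w hw)
      exact ⟨s, hs, fun _ => hsk⟩
    · exact ⟨∅, Finset.empty_subset _, fun h => absurd h hw⟩
  choose s hs hsk using hsel
  refine ⟨fun q w => q ∈ s w, fun q w h => (Finset.mem_filter.1 (hs w h)).2, fun w hw => ?_⟩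
  rw [← hsk w hw]
  congr 1
  ext q
  simp only [Finset.mem_filter, and_iff_right_iff_imp]
  exact fun h => (Finset.mem_filter.1 (hs w h)).1

theorem four_mul_card_filter_lt_degree_le (hk : ∀ w ∈ Λ, (Q.filter (I · w)).card = k)
    (hΛk : 0 < Λ.card * k) :
    4 * (Q.filter fun q => 4 * (Λ.card * k) < (Λ.filter (I q)).card * Q.card).card ≤ Q.card := by
  set H := Q.filter fun q => 4 * (Λ.card * k) < (Λ.filter (I q)).card * Q.card
  have hsum : ∑ q ∈ Q, (Λ.filter (I q)).card = Λ.card * k := by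
    rw [← card_interedges_eq_sum_left, card_interedges_eq_sum_right, Finset.sum_congr rfl hk,
      Finset.sum_const, smul_eq_mul]
  refine Nat.le_of_mul_le_mul_right ?_ hΛk
  calc 4 * H.card * (Λ.card * k) = H.card • (4 * (Λ.card * k)) := by rw [smul_eq_mul]; ring
    _ ≤ ∑ q ∈ H, (Λ.filter (I q)).card * Q.card :=
      Finset.card_nsmul_le_sum _ _ _ fun q hq => (Finset.mem_filter.1 hq).2.le
    _ ≤ ∑ q ∈ Q, (Λ.filter (I q)).card * Q.card :=
      Finset.sum_le_sum_of_subset (Finset.filter_subset _ _)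
    _ = Q.card * (Λ.card * k) := by rw [← Finset.sum_mul, hsum, mul_comm]

/-- Half of the lines keep half of their points, either among the few points of degree far above
the average or after the deletion of these points. -/
theorem exists_heavy_or_regular (hk : ∀ w ∈ Λ, k ≤ (Q.filter (I · w)).card)
    (hΛk : 0 < Λ.card * k) (hk' : 2 * k' ≤ k + 1) :
    (∃ H ⊆ Q, ∃ Λ' ⊆ Λ, 4 * H.card ≤ Q.card ∧ Λ.card ≤ 2 * Λ'.card ∧
      ∀ w ∈ Λ', k' ≤ (H.filter (I · w)).card) ∨
    ∃ J : α → β → Prop, (∀ q w, J q w → I q w) ∧ ∃ Λ' ⊆ Λ, Λ.card ≤ 2 * Λ'.card ∧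
      (∀ w ∈ Λ', k' ≤ (Q.filter (J · w)).card) ∧
      ∀ q ∈ Q, (Λ'.filter (J q)).card * Q.card ≤ 4 * (Λ.card * k) := by
  obtain ⟨J, hJI, hJk⟩ := exists_card_filter_eq hk
  set H := Q.filter fun q => 4 * (Λ.card * k) < (Λ.filter (J q)).card * Q.card
  have hsplit := Finset.card_filter_add_card_filter_not (s := Λ)
    fun w => k' ≤ (H.filter (J · w)).card
  rcases le_total Λ.card (2 * (Λ.filter fun w => k' ≤ (H.filter (J · w)).card).card) with h | h
  · exact .inl ⟨H, Finset.filter_subset _ _, _, Finset.filter_subset _ _,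
      four_mul_card_filter_lt_degree_le hJk hΛk, h, fun w hw => (Finset.mem_filter.1 hw).2.trans
        (Finset.card_le_card (Finset.monotone_filter_right _ fun q _ => hJI q w))⟩
  obtain ⟨J', hJ'⟩ : ∃ J' : α → β → Prop, ∀ q w, J' q w ↔ J q w ∧ q ∉ H := ⟨_, fun _ _ => .rfl⟩
  refine .inr ⟨J', fun q w h => hJI q w ((hJ' q w).1 h).1,
    Λ.filter fun w => ¬ k' ≤ (H.filter (J · w)).card, Finset.filter_subset _ _, by omega,
    fun w hw => ?_, fun q hq => ?_⟩
  · obtain ⟨hw, hlow⟩ := Finset.mem_filter.1 hw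
    have hcard := Finset.card_filter_add_card_filter_not (s := Q.filter (J · w)) (· ∈ H)
    simp only [Finset.filter_filter, ← hJ', hJk w hw] at hcard
    have hH : (Q.filter fun q => J q w ∧ q ∈ H) ⊆ H.filter (J · w) := fun q hq => by
      simp only [Finset.mem_filter] at hq ⊢
      exact hq.2.symm
    have := Finset.card_le_card hH
    omega
  · by_cases hqH : q ∈ H
    · rw [Finset.filter_false_of_mem fun w _ h => ((hJ' q w).1 h).2 hqH]
      simp
    · have hdeg : (Λ.filter (J q)).card * Q.card ≤ 4 * (Λ.card * k) :=
        not_lt.1 fun h => hqH (Finset.mem_filter.2 ⟨hq, h⟩)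
      refine (Nat.mul_le_mul_right _ (Finset.card_le_card fun w hw => ?_)).trans hdeg
      simp only [Finset.mem_filter] at hw ⊢
      exact ⟨hw.1.1, ((hJ' q w).1 hw.2).1⟩

end HeavyPoints

section RichLines

variable {F W : Type*} [Field F] [AddCommGroup W] [Module F W] {p C k : ℕ}

theorem richBound_of_degree_le [CharP F p] (hW : Module.finrank F W = 3) (hC : 10 ^ 50 ≤ C)
    {Q : Finset (Module.Dual F W)} {Λ : Finset W} {I : Module.Dual F W → W → Prop} {m k' : ℕ}
    (hQ : PairwiseLinearIndependent F Q) (hΛ : PairwiseLinearIndependent F Λ)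
    (hI : ∀ q w, I q w → q w = 0) (hk' : ∀ w ∈ Λ, k' ≤ (Q.filter (I · w)).card) (hk'₂ : 2 ≤ k')
    (hQ₀ : Q.Nonempty) (hk'k : k' ≤ k) (hkk' : k ≤ 2 * k') (hΛm : Λ.card ≤ m)
    (hmΛ : m ≤ 2 * Λ.card) (hdeg : ∀ q ∈ Q, (Λ.filter (I q)).card * Q.card ≤ 4 * (m * k))
    (hkn : k ^ 2 ≤ 2 * Q.card) (hp : 64 * m ^ 2 * k ≤ Q.card * p ^ 2) :
    RichBound C Q.card m k := by
  by_contra hnot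
  have hmk : m * k ≤ 4 * (Λ.card * k') :=
    (Nat.mul_le_mul hmΛ hkk').trans_eq (by ring)
  have hrich : 8 * Q.card ≤ Λ.card * k' := by
    have : 32 * Q.card ≤ C * Q.card := Nat.mul_le_mul_right _ (le_trans (by norm_num) hC)
    have := not_le.1 fun h => hnot (.inl h)
    omega
  refine hnot ((pow_mul_le_or_of_degree_le hW hQ hΛ hI hk' hk'₂ hQ₀ hrich (fun q hq => ?_)
    (le_trans (by gcongr) hp)).elim (fun h => .inr ?_) fun h => ?_)
  · calc _ ≤ 4 * (m * k) := hdeg q hq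
      _ ≤ 4 * (4 * (Λ.card * k')) := Nat.mul_le_mul_left _ hmk
      _ = 16 * Λ.card * k' := by ring
  · calc m ^ 4 * k ^ 15 ≤ (2 * Λ.card) ^ 4 * (2 * k') ^ 15 := by gcongr
      _ = 2 ^ 19 * (Λ.card ^ 4 * k' ^ 15) := by ring
      _ ≤ 2 ^ 19 * (10 ^ 30 * Q.card ^ 11) := Nat.mul_le_mul_left _ h
      _ = 2 ^ 19 * 10 ^ 30 * Q.card ^ 11 := by ring
      _ ≤ C * Q.card ^ 11 := Nat.mul_le_mul_right _ (le_trans (by norm_num) hC)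
  · refine richBound_of_pow_three_mul_le hQ₀.card_pos hC hkn ?_
    calc m ^ 3 * k ^ 9 ≤ (2 * Λ.card) ^ 3 * (2 * k') ^ 9 := by gcongr
      _ = 2 ^ 12 * (Λ.card ^ 3 * k' ^ 9) := by ring
      _ ≤ 2 ^ 12 * (10 ^ 30 * Q.card ^ 7) := Nat.mul_le_mul_left _ h
      _ = 2 ^ 12 * 10 ^ 30 * Q.card ^ 7 := by ring

/-- The induction step: a violation of the bound forces a violation among the points of high
degree. -/
theorem exists_heavy_of_not_richBound [CharP F p] (hW : Module.finrank F W = 3)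
    (hC : 10 ^ 50 ≤ C) (hp₀ : 0 < p) (hp : (2 ^ 112 * C ^ 7) ^ 13 ≤ p)
    {Q : Finset (Module.Dual F W)} {Λ : Finset W} (hQ : PairwiseLinearIndependent F Q)
    (hΛ : PairwiseLinearIndependent F Λ) (hk : ∀ w ∈ Λ, k ≤ (Q.filter (· w = 0)).card)
    (hk₂ : 2 ≤ k) (hQp : Q.card ^ 13 ≤ p ^ 15) (h : ¬ RichBound C Q.card Λ.card k) :
    ∃ H ⊆ Q, ∃ Λ' ⊆ Λ, ∃ k', 2 ≤ k' ∧ H.card < Q.card ∧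
      (∀ w ∈ Λ', k' ≤ (H.filter (· w = 0)).card) ∧ ¬ RichBound C H.card Λ'.card k' := by
  obtain ⟨w, hw⟩ : Λ.Nonempty := by
    by_contra! h₀
    exact h (.inl (by simp [h₀]))
  have hkn : k ≤ Q.card := (hk w hw).trans (Finset.card_filter_le _ _)
  have hC₁₁ : 2 ^ 11 ≤ C := le_trans (by norm_num) hC
  have hlin := isPartialLinear_of_finrank_eq_three hW hQ hΛ fun q w (h : q w = 0) => h
  have hk₇ : 2 ^ 7 * Q.card ^ 3 < k ^ 7 :=
    not_le.1 fun hle => h (hlin.richBound_of_pow_le hk hk₂ hC₁₁ hle)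
  have hk₃ : 3 ≤ k := by
    by_contra! hlt
    obtain rfl : k = 2 := by omega
    have := Nat.one_le_pow 3 _ (hk₂.trans hkn |> Nat.lt_of_succ_le |>.pos)
    omega
  have hkQ : k ^ 2 < 2 * Q.card := not_le.1 fun hle => h <| .inl <|
    (hlin.card_mul_le_of_two_mul_card_le hk hle).trans (Nat.mul_le_mul_right _ (by omega))
  obtain ⟨m, hmΛ, hm, hm'⟩ := exists_le_not_richBound (hkn.trans (by nlinarith)) h
  obtain ⟨Λ₁, hΛ₁, rfl⟩ := Finset.exists_subset_card_eq hmΛ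
  have hΛ₁k : 0 < Λ₁.card * k := Nat.pos_of_ne_zero fun h₀ => hm (.inl (by simp [h₀]))
  rcases exists_heavy_or_regular (fun w hw => hk w (hΛ₁ hw)) hΛ₁k
    (k' := (k + 1) / 2) (by omega) with
    ⟨H, hH, Λ', hΛ', hH₄, hcard, hrich⟩ | ⟨J, hJ, Λ', hΛ', hcard, hrich, hdeg⟩
  · exact ⟨H, hH, Λ', hΛ'.trans hΛ₁, (k + 1) / 2, by omega, by omega, hrich,
      fun hb => hm (hb.of_halves hH₄ hcard (by omega))⟩
  · refine absurd (richBound_of_degree_le hW hC hQ (hΛ.mono (hΛ'.trans hΛ₁)) hJ hrich (by omega)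
      (Finset.card_pos.1 (by omega)) (by omega) (by omega) (Finset.card_le_card hΛ') hcard hdeg
      hkQ.le (hm'.mul_sq_le hp hp₀ (by omega) (by omega) hQp (by omega))) hm

theorem richBound_of_large_char [CharP F p] (hW : Module.finrank F W = 3) (hC : 10 ^ 50 ≤ C)
    (hp₀ : 0 < p) (hp : (2 ^ 112 * C ^ 7) ^ 13 ≤ p) {Q : Finset (Module.Dual F W)} {Λ : Finset W}
    (hQ : PairwiseLinearIndependent F Q) (hΛ : PairwiseLinearIndependent F Λ)
    (hk : ∀ w ∈ Λ, k ≤ (Q.filter (· w = 0)).card) (hk₂ : 2 ≤ k) (hQp : Q.card ^ 13 ≤ p ^ 15) :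
    RichBound C Q.card Λ.card k := by
  induction hn : Q.card using Nat.strong_induction_on generalizing Q Λ k with
  | _ n ih =>
    subst hn
    by_contra hnot
    obtain ⟨H, hHQ, Λ', hΛ', k', hk'₂, hlt, hk', hnot'⟩ :=
      exists_heavy_of_not_richBound hW hC hp₀ hp hQ hΛ hk hk₂ hQp hnot
    exact hnot' (ih _ hlt (hQ.mono hHQ) (hΛ.mono hΛ') hk' hk'₂
      ((Nat.pow_le_pow_left hlt.le 13).trans hQp) rfl)

theorem exists_richBound : ∃ C : ℕ, ∀ (p : ℕ) [Fact p.Prime] (W : Type*) [AddCommGroup W]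
    [Module (ZMod p) W], Module.finrank (ZMod p) W = 3 →
    ∀ (Q : Finset (Module.Dual (ZMod p) W)) (Λ : Finset W),
      PairwiseLinearIndependent (ZMod p) Q → PairwiseLinearIndependent (ZMod p) Λ →
      ∀ k, 2 ≤ k → (∀ w ∈ Λ, k ≤ (Q.filter (· w = 0)).card) → Q.card ^ 13 ≤ p ^ 15 →
      RichBound C Q.card Λ.card k := by
  obtain ⟨C, hC⟩ : ∃ C : ℕ, 10 ^ 50 ≤ C := ⟨_, le_rfl⟩
  set T := (2 ^ 112 * C ^ 7) ^ 13
  refine ⟨C + T ^ 3, fun p hp W _ _ hW Q Λ hQ hΛ k hk₂ hk hQp => ?_⟩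
  rcases le_total T p with hTp | hpT
  · exact (richBound_of_large_char hW hC hp.out.pos hTp hQ hΛ
      (fun w hw => by convert hk w hw) hk₂ hQp).mono
      (Nat.le_add_right _ _)
  have : FiniteDimensional (ZMod p) W := FiniteDimensional.of_finrank_pos (by omega)
  have : Finite W := Module.finite_of_finite (ZMod p)
  have hcard : Λ.card ≤ T ^ 3 := by
    calc Λ.card = Nat.card Λ := (Nat.card_eq_finsetCard Λ).symm
      _ ≤ Nat.card W := Finite.card_subtype_le _
      _ = p ^ 3 := by rw [Module.natCard_eq_pow_finrank (K := ZMod p), hW, Nat.card_zmod]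
      _ ≤ T ^ 3 := Nat.pow_le_pow_left hpT 3
  refine .inl ?_
  rcases Λ.eq_empty_or_nonempty with rfl | ⟨w, hw⟩
  · simp
  · exact Nat.mul_le_mul (hcard.trans (Nat.le_add_left _ _))
      ((hk w hw).trans (Finset.card_filter_le _ _))

end RichLines

/-! ### Cubics through seven points -/

section PerfectMatching

variable {α : Type*} {T : Finset α} {R : α → α → Prop}

theorem exists_matching_of_card_eq_four (hT : T.card = 4) (hsymm : ∀ a b, R a b → R b a)
    (hR : ∀ a ∈ T, ∀ b ∈ T, ∀ c ∈ T, a ≠ b → a ≠ c → b ≠ c → R a b → ¬ R a c) :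
    ∃ a b c d, T = {a, b, c, d} ∧ ¬ R a b ∧ ¬ R c d := by
  obtain ⟨a, T₁, ha, rfl, hT₁⟩ := Finset.card_eq_succ.1 hT
  obtain ⟨b, c, d, hbc, hbd, hcd, rfl⟩ := Finset.card_eq_three.1 hT₁
  simp only [Finset.mem_insert, Finset.mem_singleton, not_or] at ha
  obtain ⟨hab, hac, had⟩ := ha
  by_cases h : R a b ∨ R c d
  · refine ⟨a, c, b, d, by rw [Finset.insert_comm b c], fun h₁ => ?_, fun h₁ => ?_⟩
    · rcases h with h | h
      · exact hR a (by simp) b (by simp) c (by simp) hab hac hbc h h₁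
      · exact hR c (by simp) d (by simp) a (by simp) hcd (Ne.symm hac) (Ne.symm had) h
          (hsymm _ _ h₁)
    · rcases h with h | h
      · exact hR b (by simp) a (by simp) d (by simp) (Ne.symm hab) hbd had (hsymm _ _ h) h₁
      · exact hR d (by simp) c (by simp) b (by simp) hcd.symm hbd.symm hbc.symm (hsymm _ _ h)
          (hsymm _ _ h₁)
  · exact ⟨a, b, c, d, rfl, not_or.1 h⟩

theorem exists_matching_of_card_eq_six (hT : T.card = 6) (hsymm : ∀ a b, R a b → R b a)
    (hR : ∀ a ∈ T, ∀ b ∈ T, ∀ c ∈ T, a ≠ b → a ≠ c → b ≠ c → R a b → ¬ R a c) :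
    ∃ a b c d e f, T = {a, b, c, d, e, f} ∧ ¬ R a b ∧ ¬ R c d ∧ ¬ R e f := by
  obtain ⟨x, y, z, hx, hy, hz, hxy, hxz, hyz⟩ := Finset.two_lt_card_iff.1 (by omega : 2 < T.card)
  obtain ⟨a, b, ha, hb, hab, h⟩ : ∃ a b, a ∈ T ∧ b ∈ T ∧ a ≠ b ∧ ¬ R a b := by
    by_cases h : R x y
    · exact ⟨x, z, hx, hz, hxz, hR x hx y hy z hz hxy hxz hyz h⟩
    · exact ⟨x, y, hx, hy, hxy, h⟩
  have hsub : (T.erase a).erase b ⊆ T := (Finset.erase_subset _ _).trans (Finset.erase_subset _ _)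
  have hb' : b ∈ T.erase a := Finset.mem_erase.2 ⟨hab.symm, hb⟩
  obtain ⟨c, d, e, f, hT', hcd, hef⟩ := exists_matching_of_card_eq_four (T := (T.erase a).erase b)
    (by rw [Finset.card_erase_of_mem hb', Finset.card_erase_of_mem ha, hT]) hsymm
    fun a ha b hb c hc => hR a (hsub ha) b (hsub hb) c (hsub hc)
  exact ⟨a, b, c, d, e, f, by rw [← hT', Finset.insert_erase hb', Finset.insert_erase ha],
    h, hcd, hef⟩

end PerfectMatching

section SevenPoints

variable {K : Type*} [Field K] {f : MvPolynomial (Fin 2) K} {S : Finset (Fin 2 → K)}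
  {a b : Fin 2 → K}

/-- The equation of the line through `a` and `b`; it is the zero polynomial when `a = b`. -/
def lineForm (a b : Fin 2 → K) : MvPolynomial (Fin 2) K :=
  C (b 1 - a 1) * (X 0 - C (a 0)) - C (b 0 - a 0) * (X 1 - C (a 1))

theorem eval_lineForm (a b x : Fin 2 → K) :
    eval x (lineForm a b) = (b 1 - a 1) * (x 0 - a 0) - (b 0 - a 0) * (x 1 - a 1) := by
  simp [lineForm]

theorem totalDegree_lineForm_le (a b : Fin 2 → K) : (lineForm a b).totalDegree ≤ 1 := by
  have hterm (c d : K) (i : Fin 2) :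
      (C c * (X i - C d) : MvPolynomial (Fin 2) K).totalDegree ≤ 1 := by
    refine (totalDegree_mul _ _).trans ?_
    rw [totalDegree_C, zero_add]
    exact (totalDegree_sub_C_le _ _).trans (totalDegree_X i).le
  exact (totalDegree_sub _ _).trans (max_le (hterm _ _ _) (hterm _ _ _))

theorem lineForm_ne_zero (hab : a ≠ b) : lineForm a b ≠ 0 := by
  intro h
  have h₀ : a 0 - b 0 = 0 := by
    simpa [h] using (eval_lineForm a b ![a 0, a 1 + 1]).symm
  have h₁ : b 1 - a 1 = 0 := by
    simpa [h] using (eval_lineForm a b ![a 0 + 1, a 1]).symm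
  exact hab (funext (Fin.forall_fin_two.2 ⟨sub_eq_zero.1 h₀, (sub_eq_zero.1 h₁).symm⟩))

theorem isRelPrime_of_totalDegree_lt {σ : Type*} {f g : MvPolynomial σ K} (hf : Irreducible f)
    (hg : g ≠ 0) (h : g.totalDegree < f.totalDegree) : IsRelPrime f g := by
  rw [hf.isRelPrime_iff_not_dvd]
  rintro ⟨r, rfl⟩
  rw [totalDegree_mul_of_isDomain hf.ne_zero (right_ne_zero_of_mul hg)] at h
  omega

theorem card_collinear_zeros_le (hf : Irreducible f) (hf₁ : 1 < f.totalDegree) (hab : a ≠ b)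
    {T : Finset (Fin 2 → K)} (hT : ∀ t ∈ T, eval t f = 0)
    (hTab : ∀ t ∈ T, eval t (lineForm a b) = 0) : T.card ≤ f.totalDegree := by
  have hdeg := totalDegree_lineForm_le a b
  calc T.card ≤ f.totalDegree * (lineForm a b).totalDegree :=
        card_common_zeros_le (isRelPrime_of_totalDegree_lt hf (lineForm_ne_zero hab) (by omega))
          hf.ne_zero (lineForm_ne_zero hab) hT hTab
    _ ≤ f.totalDegree := (Nat.mul_le_mul_left _ hdeg).trans_eq (mul_one _)

theorem eval_lineForm_ne_zero (hf : Irreducible f) (hf₃ : f.totalDegree = 3)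
    {s a b c : Fin 2 → K} (hT : ∀ t ∈ ({s, a, b, c} : Finset (Fin 2 → K)), eval t f = 0)
    (hcard : ({s, a, b, c} : Finset (Fin 2 → K)).card = 4) (hsab : eval s (lineForm a b) = 0) :
    eval s (lineForm a c) ≠ 0 := by
  intro hsac
  have hsa : s ≠ a := by
    rintro rfl
    rw [Finset.insert_eq_of_mem (Finset.mem_insert_self _ _)] at hcard
    exact absurd hcard (Finset.card_le_three.trans_lt (by norm_num)).ne
  rw [eval_lineForm] at hsab hsac
  have := card_collinear_zeros_le hf (by omega) hsa hT (by
    simp only [Finset.mem_insert, Finset.mem_singleton, eval_lineForm]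
    rintro x (rfl | rfl | rfl | rfl)
    · ring
    · ring
    · linear_combination hsab
    · linear_combination hsac)
  omega

/-- The cubic is a product of three lines which join the other six points in pairs and miss `s`;
such a matching exists because at most one point is collinear with `s` and a given point. -/
theorem exists_separating_cubic (hf : Irreducible f) (hf₃ : f.totalDegree = 3) (hS : S.card = 7)
    (hSf : ∀ s ∈ S, eval s f = 0) {s : Fin 2 → K} (hs : s ∈ S) :
    ∃ g : MvPolynomial (Fin 2) K, g.totalDegree ≤ 3 ∧ eval s g ≠ 0 ∧
      ∀ t ∈ S, t ≠ s → eval t g = 0 := by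
  obtain ⟨a, b, c, d, e, r, hT, hab, hcd, her⟩ := exists_matching_of_card_eq_six
    (T := S.erase s) (R := fun a b => eval s (lineForm a b) = 0)
    (by rw [Finset.card_erase_of_mem hs, hS])
    (fun a b h => by rw [eval_lineForm] at h ⊢; linear_combination -h)
    (fun a ha b hb c hc hab hac hbc => by
      rw [Finset.mem_erase] at ha hb hc
      exact eval_lineForm_ne_zero hf hf₃ (by simp [hSf s hs, hSf a ha.2, hSf b hb.2, hSf c hc.2])
        (Finset.card_eq_of_equiv_fin (Fintype.equivFinOfCardEq
          (by simp [ha.1.symm, hb.1.symm, hc.1.symm, hab, hac, hbc]))))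
  refine ⟨lineForm a b * lineForm c d * lineForm e r, ?_, ?_, fun t ht hts => ?_⟩
  · have h₁ := totalDegree_mul (lineForm a b * lineForm c d) (lineForm e r)
    have h₂ := totalDegree_mul (lineForm a b) (lineForm c d)
    have := totalDegree_lineForm_le a b
    have := totalDegree_lineForm_le c d
    have := totalDegree_lineForm_le e r
    omega
  · rw [map_mul, map_mul]
    exact mul_ne_zero (mul_ne_zero hab hcd) her
  · have ht' : t ∈ S.erase s := Finset.mem_erase.2 ⟨hts, ht⟩
    rw [hT] at ht'
    simp only [Finset.mem_insert, Finset.mem_singleton] at ht'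
    simp only [map_mul, eval_lineForm]
    rcases ht' with rfl | rfl | rfl | rfl | rfl | rfl <;> ring

/-- Evaluation of the polynomials of degree at most three at the points of `S`. -/
def cubicEval (S : Finset (Fin 2 → K)) : restrictTotalDegree (Fin 2) K 3 →ₗ[K] (S → K) :=
  LinearMap.pi fun s => (aeval s.1 : MvPolynomial (Fin 2) K →ₐ[K] K).toLinearMap ∘ₗ
    (restrictTotalDegree (Fin 2) K 3).subtype

theorem cubicEval_apply (g : restrictTotalDegree (Fin 2) K 3) (s : S) :
    cubicEval S g s = eval s.1 g.1 := by
  simp [cubicEval, aeval_eq_eval]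

/-- The space of the polynomials of degree at most three which vanish on `S`. -/
abbrev cubicsThrough (S : Finset (Fin 2 → K)) : Submodule K (restrictTotalDegree (Fin 2) K 3) :=
  LinearMap.ker (cubicEval S)

theorem mem_cubicsThrough {g : restrictTotalDegree (Fin 2) K 3} :
    g ∈ cubicsThrough S ↔ ∀ s ∈ S, eval s g.1 = 0 := by
  simp [funext_iff, cubicEval_apply]

theorem range_cubicEval_eq_top
    (h : ∀ s ∈ S, ∃ g : MvPolynomial (Fin 2) K, g.totalDegree ≤ 3 ∧ eval s g ≠ 0 ∧
      ∀ t ∈ S, t ≠ s → eval t g = 0) :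
    LinearMap.range (cubicEval S) = ⊤ := by
  choose g hdeg hself hother using fun s : S => h s s.2
  refine LinearMap.range_eq_top.2 fun v =>
    ⟨∑ s, (v s / eval s.1 (g s)) • ⟨g s, (mem_restrictTotalDegree _ _ _).2 (hdeg s)⟩, ?_⟩
  ext t
  rw [map_sum, Finset.sum_apply, Finset.sum_eq_single t]
  · simp [cubicEval_apply, hself t]
  · intro s _ hst
    have := hother s t.1 t.2 fun h => hst (Subtype.ext h.symm)
    simp [cubicEval_apply, this]
  · simp

theorem finrank_cubicsThrough (hf : Irreducible f) (hf₃ : f.totalDegree = 3) (hS : S.card = 7)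
    (hSf : ∀ s ∈ S, eval s f = 0) : Module.finrank K (cubicsThrough S) = 3 := by
  have hdim : Module.finrank K (restrictTotalDegree (Fin 2) K 3) = 10 :=
    finrank_restrictTotalDegree (Fin 2) K 3
  have : FiniteDimensional K (restrictTotalDegree (Fin 2) K 3) :=
    FiniteDimensional.of_finrank_pos (by omega)
  have h := LinearMap.finrank_range_add_finrank_ker (cubicEval S)
  rw [range_cubicEval_eq_top fun s hs => exists_separating_cubic hf hf₃ hS hSf hs, finrank_top,
    hdim, Module.finrank_fintype_fun_eq_card, Fintype.card_coe, hS] at h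
  exact Nat.add_left_cancel h

end SevenPoints

/-! ### The net of cubics through seven points -/

section Representatives

variable {F V : Type*} [Field F] [AddCommGroup V] [Module F V]

theorem exists_pairwiseLinearIndependent_representatives (T : Finset V) :
    ∃ Q : Finset V, PairwiseLinearIndependent F Q ∧ Q.card ≤ T.card ∧
      ∀ v ∈ T, v ≠ 0 → ∃ q ∈ Q, ∃ c : F, c ≠ 0 ∧ v = c • q := by
  obtain ⟨r, hr⟩ : ∃ r : V → V, ∀ v (hv : v ≠ 0), r v = (Projectivization.mk F v hv).rep :=
    ⟨fun v => if hv : v ≠ 0 then (Projectivization.mk F v hv).rep else 0, fun v hv => dif_pos hv⟩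
  refine ⟨(T.filter (· ≠ 0)).image r, ?_,
    Finset.card_image_le.trans (Finset.card_filter_le _ _), fun v hv hv₀ => ?_⟩
  · intro x hx y hy hxy
    obtain ⟨v, hv, rfl⟩ := Finset.mem_image.1 hx
    obtain ⟨w, hw, rfl⟩ := Finset.mem_image.1 hy
    rw [hr v (Finset.mem_filter.1 hv).2, hr w (Finset.mem_filter.1 hw).2] at hxy ⊢
    have h := Projectivization.independent_iff.1
      ((Projectivization.independent_pair_iff_ne _ _).2 fun h => hxy (congrArg _ h))
    convert h using 1
    ext i
    fin_cases i <;> rfl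
  · obtain ⟨a, ha⟩ := Projectivization.exists_smul_eq_mk_rep F v hv₀
    refine ⟨r v, Finset.mem_image_of_mem _ (Finset.mem_filter.2 ⟨hv, hv₀⟩), (a⁻¹ : Fˣ),
      Units.ne_zero _, ?_⟩
    rw [hr v hv₀, ← ha, ← Units.smul_def, inv_smul_smul]

theorem card_le_mul_card_of_card_multiples_le {α : Type*} {Z : Finset α} {e : α → V}
    {Q : Finset V} {n : ℕ} (hQ : ∀ x ∈ Z, e x ≠ 0 → ∃ q ∈ Q, ∃ c : F, e x = c • q)
    (hn : ∀ v, (Z.filter fun x => ∃ c : F, e x = c • v).card ≤ n) (hZ : n < Z.card) :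
    Z.card ≤ Q.card * n := by
  have hQ₀ : Q.Nonempty := by
    by_contra! hQ₀
    have hzero : ∀ x ∈ Z, ∃ c : F, e x = c • (0 : V) := fun x hx => by
      by_contra h
      obtain ⟨q, hq, -⟩ := hQ x hx fun h₀ => h ⟨0, by rw [h₀, zero_smul]⟩
      simp [hQ₀] at hq
    have := hn 0
    rw [Finset.filter_true_of_mem hzero] at this
    omega
  refine (Finset.card_le_card fun x hx => ?_).trans
    (Finset.card_biUnion_le_card_mul Q (fun q => Z.filter fun x => ∃ c : F, e x = c • q) n
      fun q _ => hn q)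
  simp only [Finset.mem_biUnion, Finset.mem_filter]
  by_cases h₀ : e x = 0
  · exact ⟨hQ₀.choose, hQ₀.choose_spec, hx, 0, by rw [h₀, zero_smul]⟩
  · obtain ⟨q, hq, hc⟩ := hQ x hx h₀
    exact ⟨q, hq, hx, hc⟩

end Representatives

section Net

variable {K : Type*} [Field K] {S P : Finset (Fin 2 → K)}

theorem exists_eq_C_mul_of_dvd {σ : Type*} {f g : MvPolynomial σ K} (hfg : f ∣ g) (hg : g ≠ 0)
    (hdeg : g.totalDegree ≤ f.totalDegree) : ∃ c : K, g = C c * f := by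
  obtain ⟨r, rfl⟩ := hfg
  rw [totalDegree_mul_of_isDomain (left_ne_zero_of_mul hg) (right_ne_zero_of_mul hg)] at hdeg
  exact ⟨coeff 0 r, by rw [← totalDegree_eq_zero_iff_eq_C.1 (by omega), mul_comm]⟩

/-- Evaluation at `x`, as a functional on the cubics through `S`. -/
def pointEval (S : Finset (Fin 2 → K)) (x : Fin 2 → K) : Module.Dual K (cubicsThrough S) :=
  (aeval x : MvPolynomial (Fin 2) K →ₐ[K] K).toLinearMap ∘ₗ
    (restrictTotalDegree (Fin 2) K 3).subtype ∘ₗ (cubicsThrough S).subtype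

theorem pointEval_apply (S : Finset (Fin 2 → K)) (x : Fin 2 → K) (w : cubicsThrough S) :
    pointEval S x w = eval x w.1.1 := by
  simp [pointEval, aeval_eq_eval]

theorem exists_mem_ker_isRelPrime (hS : S.card = 7) {w : cubicsThrough S}
    (hw : Irreducible w.1.1) (hw₃ : w.1.1.totalDegree = 3) (φ : Module.Dual K (cubicsThrough S)) :
    ∃ g ∈ LinearMap.ker φ, g.1.1 ≠ 0 ∧ IsRelPrime w.1.1 g.1.1 := by
  have hW := finrank_cubicsThrough hw hw₃ hS (mem_cubicsThrough.1 w.2)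
  have : FiniteDimensional K (cubicsThrough S) := FiniteDimensional.of_finrank_pos (by omega)
  obtain ⟨g, hgφ, hgw⟩ : ∃ g ∈ LinearMap.ker φ, g ∉ Submodule.span K {w} := by
    by_contra! hle
    have hker := Submodule.finrank_mono (show LinearMap.ker φ ≤ Submodule.span K {w} from hle)
    have hspan := finrank_span_le_card (R := K) ({w} : Set (cubicsThrough S))
    have hrange := Submodule.finrank_le (LinearMap.range φ)
    have hsum := LinearMap.finrank_range_add_finrank_ker (K := K) (V := cubicsThrough S) φ
    rw [Set.toFinset_singleton, Finset.card_singleton] at hspan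
    rw [Module.finrank_self] at hrange
    omega
  have hg₀ : g.1.1 ≠ 0 := fun h => hgw (by
    rw [show g = 0 from Subtype.ext (Subtype.ext h)]
    exact Submodule.zero_mem _)
  refine ⟨g, hgφ, hg₀, hw.isRelPrime_iff_not_dvd.2 fun hdvd => hgw ?_⟩
  obtain ⟨c, hc⟩ := exists_eq_C_mul_of_dvd hdvd hg₀
    (((mem_restrictTotalDegree _ _ _).1 g.1.2).trans hw₃.ge)
  exact Submodule.mem_span_singleton.2 ⟨c, Subtype.ext (Subtype.ext (by
    rw [hc, ← smul_eq_C_mul]; rfl))⟩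

/-- Otherwise a cubic through `S` in the kernel of `φ` would meet the cubic `w` in `S` and in three
further points. -/
theorem card_le_two_of_pointEval_eq_smul (hS : S.card = 7) {w : cubicsThrough S}
    (hw : Irreducible w.1.1) (hw₃ : w.1.1.totalDegree = 3) {φ : Module.Dual K (cubicsThrough S)}
    {Z : Finset (Fin 2 → K)} (hSZ : Disjoint S Z) (hZ : ∀ x ∈ Z, eval x w.1.1 = 0)
    (hφ : ∀ x ∈ Z, ∃ c : K, pointEval S x = c • φ) : Z.card ≤ 2 := by
  obtain ⟨g, hgφ, hg₀, hwg⟩ := exists_mem_ker_isRelPrime hS hw hw₃ φ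
  have hcard : (S ∪ Z).card ≤ w.1.1.totalDegree * g.1.1.totalDegree := by
    refine card_common_zeros_le hwg hw.ne_zero hg₀ (fun t ht => ?_) fun t ht => ?_
    · exact (Finset.mem_union.1 ht).elim (mem_cubicsThrough.1 w.2 t) (hZ t)
    · refine (Finset.mem_union.1 ht).elim (mem_cubicsThrough.1 g.2 t) fun ht => ?_
      obtain ⟨c, hc⟩ := hφ t ht
      rw [← pointEval_apply, hc, LinearMap.smul_apply, LinearMap.mem_ker.1 hgφ, smul_zero]
  have hg₃ : g.1.1.totalDegree ≤ 3 := (mem_restrictTotalDegree _ _ _).1 g.1.2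
  rw [Finset.card_union_of_disjoint hSZ, hS, hw₃] at hcard
  omega

theorem le_card_filter_mul_two_add_seven {k : ℕ} (hS : S.card = 7) {w : cubicsThrough S}
    (hw : Irreducible w.1.1) (hw₃ : w.1.1.totalDegree = 3)
    {Q : Finset (Module.Dual K (cubicsThrough S))}
    (hQ : ∀ x ∈ P, pointEval S x ≠ 0 → ∃ q ∈ Q, ∃ c : K, c ≠ 0 ∧ pointEval S x = c • q)
    (hk : 10 ≤ k) (hP : k ≤ (P.filter fun x => eval x w.1.1 = 0).card) :
    k ≤ (Q.filter (· w = 0)).card * 2 + 7 := by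
  set Z := (P.filter fun x => eval x w.1.1 = 0) \ S with hZ
  have hZmem : ∀ x ∈ Z, x ∈ P ∧ eval x w.1.1 = 0 ∧ x ∉ S := fun x hx => by
    simpa only [hZ, Finset.mem_sdiff, Finset.mem_filter, and_assoc] using hx
  have hcard : k ≤ Z.card + 7 := by
    refine hP.trans ?_
    rw [← hS]
    convert Finset.card_le_card_sdiff_add_card
  refine hcard.trans (Nat.add_le_add_right (card_le_mul_card_of_card_multiples_le (F := K)
    (e := pointEval S) (fun x hx h₀ => ?_) (fun φ => ?_) (by omega)) 7)
  · obtain ⟨hxP, hxw, -⟩ := hZmem x hx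
    obtain ⟨q, hq, c, hc, hxq⟩ := hQ x hxP h₀
    refine ⟨q, Finset.mem_filter.2 ⟨hq, ?_⟩, c, hxq⟩
    rw [← pointEval_apply, hxq, LinearMap.smul_apply, smul_eq_mul] at hxw
    exact (mul_eq_zero.1 hxw).resolve_left hc
  · refine card_le_two_of_pointEval_eq_smul hS hw hw₃ (φ := φ)
      (Finset.disjoint_right.2 fun x hx => ?_) (fun x hx => ?_) fun x hx => ?_
    · exact (hZmem x (Finset.mem_filter.1 hx).1).2.2
    · exact (hZmem x (Finset.mem_filter.1 hx).1).2.1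
    · exact (Finset.mem_filter.1 hx).2

end Net

/-! ### Rich cubics -/

section RichCubics

theorem linearIndependent_pair_of_zeros_ne {σ K : Type*} [Field K] {f g : MvPolynomial σ K}
    (hf : f ≠ 0) (hg : g ≠ 0) (hfg : {x | eval x f = 0} ≠ {x | eval x g = 0}) :
    LinearIndependent K ![f, g] := by
  rw [LinearIndependent.pair_iff' hf]
  rintro a rfl
  have ha : a ≠ 0 := left_ne_zero_of_smul hg
  exact hfg (Set.ext fun x => by simp [smul_eval, ha])

variable {p : ℕ} [Fact p.Prime] {S : Finset (Fin 2 → ZMod p)}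

theorem exists_pairwiseLinearIndependent_cubicsThrough {R : Finset (Set (Fin 2 → ZMod p))}
    (hR : ∀ γ ∈ R, IsIrredCubic γ) (hS : ∀ γ ∈ R, ∀ q ∈ S, q ∈ γ) :
    ∃ Λ : Finset (cubicsThrough S), Λ.card = R.card ∧ PairwiseLinearIndependent (ZMod p) Λ ∧
      ∀ w ∈ Λ, Irreducible w.1.1 ∧ w.1.1.totalDegree = 3 ∧ zeroSet w.1.1 ∈ R := by
  have hex (γ : R) : ∃ w : cubicsThrough S,
      Irreducible w.1.1 ∧ w.1.1.totalDegree = 3 ∧ γ.1 = zeroSet w.1.1 := by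
    obtain ⟨f, hf, hf₃, hγ⟩ := hR γ γ.2
    refine ⟨⟨⟨f, (mem_restrictTotalDegree _ _ _).2 hf₃.le⟩, mem_cubicsThrough.2 fun s hs => ?_⟩,
      hf, hf₃, hγ⟩
    have hsγ := hS γ γ.2 s hs
    rwa [hγ] at hsγ
  choose w hw hw₃ hγw using hex
  have hinj : Function.Injective w := fun γ γ' h => Subtype.ext (by rw [hγw, hγw, h])
  refine ⟨Finset.univ.map ⟨w, hinj⟩, by simp, fun x hx y hy hxy => ?_, fun x hx => ?_⟩
  · obtain ⟨γ, -, rfl⟩ := Finset.mem_map.1 hx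
    obtain ⟨γ', -, rfl⟩ := Finset.mem_map.1 hy
    have hpair := linearIndependent_pair_of_zeros_ne (hw γ).ne_zero (hw γ').ne_zero fun h =>
      hxy (congrArg w (Subtype.ext (by rw [hγw, hγw]; exact h)))
    rw [LinearIndependent.pair_iff' fun h => (hw γ).ne_zero (congrArg (·.1.1) h)]
    exact fun a h => (LinearIndependent.pair_iff' (hw γ).ne_zero).1 hpair a (congrArg (·.1.1) h)
  · obtain ⟨γ, -, rfl⟩ := Finset.mem_map.1 hx
    exact ⟨hw γ, hw₃ γ, hγw γ ▸ γ.2⟩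

theorem RichBound.scale {C n n' m k k' a : ℕ} (h : RichBound C n' m k') (hn : n' ≤ n)
    (hk : k ≤ a * k') : RichBound (a ^ 15 * C) n m k := by
  refine h.imp (fun h => ?_) fun h => ?_
  · calc m * k ≤ m * (a * k') := Nat.mul_le_mul_left _ hk
      _ = a * (m * k') := by ring
      _ ≤ a ^ 15 * (C * n) :=
        Nat.mul_le_mul (Nat.le_self_pow (by norm_num) a) (h.trans (Nat.mul_le_mul_left _ hn))
      _ = a ^ 15 * C * n := by ring
  · calc m ^ 4 * k ^ 15 ≤ m ^ 4 * (a * k') ^ 15 := by gcongr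
      _ = a ^ 15 * (m ^ 4 * k' ^ 15) := by ring
      _ ≤ a ^ 15 * (C * n ^ 11) := Nat.mul_le_mul_left _ (h.trans (by gcongr))
      _ = a ^ 15 * C * n ^ 11 := by ring

theorem exists_configuration_cubicsThrough {P : Finset (Fin 2 → ZMod p)}
    {R : Finset (Set (Fin 2 → ZMod p))} {k : ℕ} (hk : 10 ≤ k) (hS : S.card = 7)
    (hR : ∀ γ ∈ R, IsIrredCubic γ) (hSR : ∀ γ ∈ R, ∀ q ∈ S, q ∈ γ)
    (hkR : ∀ γ ∈ R, k ≤ (P.filter (· ∈ γ)).card) :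
    ∃ (Q : Finset (Module.Dual (ZMod p) (cubicsThrough S))) (Λ : Finset (cubicsThrough S)),
      PairwiseLinearIndependent (ZMod p) Q ∧ PairwiseLinearIndependent (ZMod p) Λ ∧
        Q.card ≤ P.card ∧ Λ.card = R.card ∧
        ∀ w ∈ Λ, (k - 6) / 2 ≤ (Q.filter (· w = 0)).card := by
  obtain ⟨Λ, hΛR, hΛ, hΛw⟩ := exists_pairwiseLinearIndependent_cubicsThrough hR hSR
  obtain ⟨Q, hQ, hQP, hrep⟩ :=
    exists_pairwiseLinearIndependent_representatives (F := ZMod p) (P.image (pointEval S))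
  refine ⟨Q, Λ, hQ, hΛ, hQP.trans Finset.card_image_le, hΛR, fun w hw => ?_⟩
  obtain ⟨hirr, hdeg, hwR⟩ := hΛw w hw
  have hkQ : k ≤ (Q.filter (· w = 0)).card * 2 + 7 := by
    convert le_card_filter_mul_two_add_seven hS hirr hdeg
      (fun x hx => hrep _ (Finset.mem_image_of_mem _ hx)) hk ?_
    convert hkR _ hwR
    rfl
  omega

theorem finrank_cubicsThrough_of_isIrredCubic {γ : Set (Fin 2 → ZMod p)} (hS : S.card = 7)
    (hγ : IsIrredCubic γ) (hSγ : ∀ q ∈ S, q ∈ γ) :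
    Module.finrank (ZMod p) (cubicsThrough S) = 3 := by
  obtain ⟨f, hf, hf₃, rfl⟩ := hγ
  exact finrank_cubicsThrough hf hf₃ hS hSγ

theorem exists_richBound_cubics : ∃ C : ℕ, ∀ p : ℕ, p.Prime →
    ∀ (P : Finset (Fin 2 → ZMod p)) (R : Finset (Set (Fin 2 → ZMod p))) (k : ℕ)
      (S : Finset (Fin 2 → ZMod p)), P.card ^ 13 ≤ p ^ 15 → 10 ≤ k → S.card = 7 →
      (∀ γ ∈ R, IsIrredCubic γ) → (∀ γ ∈ R, ∀ q ∈ S, q ∈ γ) →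
      (∀ γ ∈ R, k ≤ (P.filter (· ∈ γ)).card) → RichBound C P.card R.card k := by
  obtain ⟨C, hC⟩ := exists_richBound
  obtain ⟨C', hC'⟩ : ∃ C', 6 ^ 15 * C ≤ C' := ⟨_, le_rfl⟩
  refine ⟨C', fun p hp P R k S hP hk hS hR hSR hkR => ?_⟩
  have : Fact p.Prime := ⟨hp⟩
  rcases R.eq_empty_or_nonempty with rfl | ⟨γ, hγ⟩
  · exact .inl (by simp)
  obtain ⟨Q, Λ, hQ, hΛ, hQP, hΛR, hQΛ⟩ := exists_configuration_cubicsThrough hk hS hR hSR hkR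
  rw [← hΛR]
  have hW := finrank_cubicsThrough_of_isIrredCubic hS (hR γ hγ) (hSR γ hγ)
  have hbound := hC p (cubicsThrough S) hW Q Λ hQ hΛ ((k - 6) / 2) (by omega)
    (fun w hw => by convert hQΛ w hw) ((Nat.pow_le_pow_left hQP 13).trans hP)
  exact (hbound.scale hQP (by omega)).mono hC'

end RichCubics

section RealExponents

theorem pow_le_pow_of_le_rpow_div {n m a b : ℕ} (hb : b ≠ 0)
    (h : (n : ℝ) ≤ (m : ℝ) ^ ((a : ℝ) / b)) : n ^ b ≤ m ^ a := by
  have hpow : (n : ℝ) ^ b ≤ ((m : ℝ) ^ ((a : ℝ) / b)) ^ b := pow_le_pow_left₀ (by positivity) h b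
  rw [← Real.rpow_mul_natCast (by positivity), div_mul_cancel₀ _ (by positivity),
    Real.rpow_natCast] at hpow
  exact_mod_cast hpow

theorem RichBound.cast_le {C n m k : ℕ} (h : RichBound C n m k) (hk : 0 < k) :
    (m : ℝ) ≤ (C + 1) * ((n : ℝ) ^ ((11 : ℝ) / 4) / (k : ℝ) ^ ((15 : ℝ) / 4) + n / k) := by
  have hk' : (0 : ℝ) < k := Nat.cast_pos.2 hk
  have hC : (C : ℝ) ≤ C + 1 := by linarith
  rw [mul_add]
  rcases h with h | h
  · refine le_add_of_nonneg_of_le (by positivity) ?_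
    rw [← mul_div_assoc, le_div_iff₀ hk']
    exact (show (m : ℝ) * k ≤ C * n from mod_cast h).trans (by gcongr)
  · refine le_add_of_le_of_nonneg ?_ (by positivity)
    have hroot (x : ℕ) (a : ℕ) : ((x : ℝ) ^ ((a : ℝ) / 4)) ^ 4 = (x : ℝ) ^ a := by
      rw [← Real.rpow_mul_natCast (by positivity), ← Real.rpow_natCast]
      norm_num
    refine le_of_pow_le_pow_left₀ four_ne_zero (by positivity) ?_
    rw [mul_pow, div_pow, ← Nat.cast_ofNat (n := 11), ← Nat.cast_ofNat (n := 15), hroot, hroot,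
      ← mul_div_assoc, le_div_iff₀ (by positivity)]
    calc (m : ℝ) ^ 4 * (k : ℝ) ^ 15 ≤ C * (n : ℝ) ^ 11 := mod_cast h
      _ ≤ (C + 1) ^ 4 * (n : ℝ) ^ 11 := by
        gcongr
        exact hC.trans (le_self_pow₀ (by linarith [C.cast_nonneg (α := ℝ)]) four_ne_zero)

end RealExponents

theorem rich_curves_through_seven_points_bound :
    ∃ c : ℝ, 0 < c ∧ ∀ p : ℕ, p.Prime →
      ∀ (P : Finset (Fin 2 → ZMod p)) (C : Finset (Set (Fin 2 → ZMod p))),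
        (P.card : ℝ) ≤ (p : ℝ) ^ ((15 : ℝ) / 13) →
        (∀ γ ∈ C, IsIrredCubic γ) →
        ∀ k : ℕ, 11 ≤ k →
          ∀ S ⊆ P, S.card = 7 →
            ((richCurvesThrough P C k S).card : ℝ) ≤
              c * ((P.card : ℝ) ^ ((11 : ℝ) / 4) / (k : ℝ) ^ ((15 : ℝ) / 4)
                + (P.card : ℝ) / (k : ℝ)) := by
  obtain ⟨D, hD⟩ := exists_richBound_cubics
  refine ⟨D + 1, by positivity, fun p hp P C hP hC k hk S _ hS => ?_⟩
  have hPp : P.card ^ 13 ≤ p ^ 15 := pow_le_pow_of_le_rpow_div (by norm_num) (mod_cast hP)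
  have hmem {γ} (hγ : γ ∈ richCurvesThrough P C k S) :
      γ ∈ C ∧ k ≤ (P.filter (· ∈ γ)).card ∧ ∀ q ∈ S, q ∈ γ := by
    simp only [richCurvesThrough, richCurves, Finset.mem_filter] at hγ
    exact ⟨hγ.1.1, hγ.1.2.1, hγ.2⟩
  have hrich := hD p hp P (richCurvesThrough P C k S) k S hPp (by omega) hS
    (fun γ hγ => hC γ (hmem hγ).1) (fun γ hγ => (hmem hγ).2.2) fun γ hγ => (hmem hγ).2.1
  exact hrich.cast_le (by omega)
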